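/- Let μ ≤_cd ν be probability measures on ℝ with finite first moments and let f: ℝ² → [0,∞] be Borel with S_{μ,ν}(f) := sup_{P∈S(μ,ν)} ∫ f dP < ∞. Then there exist a Borel set Γ ⊆ ℝ² and a Borel set M ⊆ ℝ such that a measure P ∈ S(μ,ν) satisfies ∫ f dP = S_{μ,ν}(f) if and only if P is concentrated on Γ and P|_{M×ℝ} is a martingale. -/

import Mathlib

/-!
The theorem is complementary slackness for an optimal dual solution, obtained after the problem has
been split into irreducible pieces.

*Decomposition.* Let `gap` be the difference of the put functions of `ν` and `μ`. A level `t` with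
`gap t ≤ 0` is a barrier: no supermartingale coupling moves mass across it (`Adm.barrier`). Mass
which starts outside the open set `posGap` does not move at all (`Adm.ae_diag`), and mass which
starts in a component `J` of `posGap` stays in the closure of `J`, with a second marginal which is
the same for all couplings (`Adm.map_snd_part`). Each of the countably many components carries an
irreducible problem (`Adm.part_irr`), and a coupling is optimal iff all its parts are
(`Adm.optimal_iff`).

*Dual problem.* On an irreducible piece the dual problem minimises the price of triples `(φ, ψ, h)`
with `φ(x) + ψ(y) + h(x)(y - x) ≥ f(x, y)`, where `h ≥ 0` unless `μ` and `ν` have equal means. The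
functions `φ` and `ψ` need not be integrable, so the price `cost` is defined under a coupling `P` as
the integral of the payoff plus `∫ h · drift`. It does not depend on `P` (`cost_indep`): a concave
function separates the two legs (`exists_moder`), and clipping reduces the claim to integrable data.

*Dual attainment.* Irreducibility bounds the slopes of these concave functions (`osc_all`,
`slope_all`). After an affine normalisation, superhedges of bounded price are therefore controlled
by fixed functions (`exists_inQ`), and a Komlós type argument (`komlos`) extracts a limit
(`compactness`).

*No duality gap.* For decreasing sequences of bounded continuous payoffs, a Hahn–Banach functional
(`exists_functional`) is represented by a supermartingale coupling (`exists_coupling`). For Borel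
`f` the hypograph is a continuous image of Baire space, and Choquet's capacitability argument reduces
the claim to compact subsets of it (`duality`); continuity of the dual value along increasing
sequences is again `compactness`.

*Conclusion.* For an optimal triple, `Γ` is the set where the payoff equals `f` (intersected with
a product of sets carrying the marginals), and `M = {h > 0}` (`irr_principle`).
Gluing these sets over the components, together with the part of the plane over the complement of
`posGap`, proves the theorem (`principle`). If there is no coupling at all, the claim is vacuous.
-/

open MeasureTheory Set
open scoped ENNReal

noncomputable section

/-- A finite Borel measure on ℝ with finite first moment. -/
def FiniteFirstMoment (μ : Measure ℝ) : Prop :=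
  IsFiniteMeasure μ ∧ Integrable (fun x : ℝ => x) μ

/-- Linear growth of a real function. -/
def LinearGrowth (φ : ℝ → ℝ) : Prop :=
  ∃ C : ℝ, ∀ x : ℝ, |φ x| ≤ C * (1 + |x|)

/-- Convex-decreasing (second stochastic) order `μ ≤_cd ν`. -/
def CDOrder (μ ν : Measure ℝ) : Prop :=
  ∀ φ : ℝ → ℝ, ConvexOn ℝ Set.univ φ → Antitone φ → LinearGrowth φ →
    ∫ x, φ x ∂μ ≤ ∫ x, φ x ∂ν

/-- Positive-convex-decreasing order `μ ≤_pcd ν`. -/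
def PCDOrder (μ ν : Measure ℝ) : Prop :=
  ∀ φ : ℝ → ℝ, ConvexOn ℝ Set.univ φ → Antitone φ → (∀ x : ℝ, 0 ≤ φ x) →
    LinearGrowth φ → ∫ x, φ x ∂μ ≤ ∫ x, φ x ∂ν

/-- Convex order `μ ≤_c ν`. -/
def COrder (μ ν : Measure ℝ) : Prop :=
  ∀ φ : ℝ → ℝ, ConvexOn ℝ Set.univ φ → LinearGrowth φ →
    ∫ x, φ x ∂μ ≤ ∫ x, φ x ∂ν

/-- `P` is a coupling of `μ` and `ν`. -/
def IsCoupling (P : Measure (ℝ × ℝ)) (μ ν : Measure ℝ) : Prop :=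
  P.map Prod.fst = μ ∧ P.map Prod.snd = ν

/-- The supermartingale property of a measure on `ℝ × ℝ`. -/
def SupermartingaleProperty (P : Measure (ℝ × ℝ)) : Prop :=
  ∀ A : Set ℝ, MeasurableSet A →
    ∫ p in A ×ˢ (Set.univ : Set ℝ), p.2 ∂P ≤ ∫ p in A ×ˢ (Set.univ : Set ℝ), p.1 ∂P

/-- `P ∈ S(μ,ν)`: supermartingale coupling. -/
def IsSupermartingaleCoupling (P : Measure (ℝ × ℝ)) (μ ν : Measure ℝ) : Prop :=
  IsCoupling P μ ν ∧ SupermartingaleProperty P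

/-- `P|_{M×ℝ}` is a martingale. -/
def MartingaleOn (P : Measure (ℝ × ℝ)) (M : Set ℝ) : Prop :=
  ∀ A : Set ℝ, MeasurableSet A → A ⊆ M →
    ∫ p in A ×ˢ (Set.univ : Set ℝ), p.2 ∂P = ∫ p in A ×ˢ (Set.univ : Set ℝ), p.1 ∂P

/-- `P ∈ M(μ,ν)`: martingale coupling. -/
def IsMartingaleCoupling (P : Measure (ℝ × ℝ)) (μ ν : Measure ℝ) : Prop :=
  IsCoupling P μ ν ∧ MartingaleOn P Set.univ

/-- `θ` is the shadow `S^ν(μ)` of `μ` in `ν`. -/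
def IsShadow (μ ν θ : Measure ℝ) : Prop :=
  FiniteFirstMoment θ ∧ CDOrder μ θ ∧ θ ≤ ν ∧
  ∀ θ' : Measure ℝ, FiniteFirstMoment θ' → CDOrder μ θ' → θ' ≤ ν → CDOrder θ θ'

/-- `P` is the Increasing Supermartingale Transport from `μ` to `ν`. -/
def IsIncreasingSMT (μ ν : Measure ℝ) (P : Measure (ℝ × ℝ)) : Prop :=
  IsSupermartingaleCoupling P μ ν ∧
  ∀ x : ℝ, ∃ θ : Measure ℝ, IsShadow (μ.restrict (Set.Iic x)) ν θ ∧
    ∀ A : Set ℝ, MeasurableSet A → P (Set.Iic x ×ˢ A) = θ A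

/-- `P` is the Decreasing Supermartingale Transport from `μ` to `ν`. -/
def IsDecreasingSMT (μ ν : Measure ℝ) (P : Measure (ℝ × ℝ)) : Prop :=
  IsSupermartingaleCoupling P μ ν ∧
  ∀ x : ℝ, ∃ θ : Measure ℝ, IsShadow (μ.restrict (Set.Ici x)) ν θ ∧
    ∀ A : Set ℝ, MeasurableSet A → P (Set.Ici x ×ˢ A) = θ A

/-- Relaxed supermartingale Spence–Mirrlees property. -/
def RelaxedSupermartingaleSM (f : ℝ × ℝ → ℝ) : Prop :=
  ∀ x₁ x₂ : ℝ, x₁ < x₂ →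
    Antitone (fun y : ℝ => f (x₂, y) - f (x₁, y)) ∧
    ConvexOn ℝ Set.univ (fun y : ℝ => f (x₂, y) - f (x₁, y))

/-- (Strict) supermartingale Spence–Mirrlees property. -/
def SupermartingaleSM (f : ℝ × ℝ → ℝ) : Prop :=
  ∀ x₁ x₂ : ℝ, x₁ < x₂ →
    StrictAnti (fun y : ℝ => f (x₂, y) - f (x₁, y)) ∧
    StrictConvexOn ℝ Set.univ (fun y : ℝ => f (x₂, y) - f (x₁, y))

/-- `f⁺` is `S(μ,ν)`-uniformly integrable. -/
def PosPartUnifInt (μ ν : Measure ℝ) (f : ℝ × ℝ → ℝ) : Prop :=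
  ∀ ε : ℝ, 0 < ε → ∃ N : ℝ, ∀ P : Measure (ℝ × ℝ),
    IsSupermartingaleCoupling P μ ν →
      ∫ p in {p : ℝ × ℝ | N < max (f p) 0}, max (f p) 0 ∂P ≤ ε

/-- First-order left monotonicity of `(Γ, M)`. -/
def FirstOrderLeftMonotone (Γ : Set (ℝ × ℝ)) (M : Set ℝ) : Prop :=
  ∀ x₁ y₁ x₂ y₂ : ℝ, (x₁, y₁) ∈ Γ → (x₂, y₂) ∈ Γ → x₁ < x₂ → x₂ ∉ M → y₁ ≤ y₂

/-- First-order right monotonicity of `(Γ, M)`. -/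
def FirstOrderRightMonotone (Γ : Set (ℝ × ℝ)) (M : Set ℝ) : Prop :=
  ∀ x₁ y₁ x₂ y₂ : ℝ, (x₁, y₁) ∈ Γ → (x₂, y₂) ∈ Γ → x₁ < x₂ → x₁ ∉ M → y₂ ≤ y₁

/-- Second-order left monotonicity of `Γ`. -/
def SecondOrderLeftMonotone (Γ : Set (ℝ × ℝ)) : Prop :=
  ∀ x y₁ y₂ x' y' : ℝ, (x, y₁) ∈ Γ → (x, y₂) ∈ Γ → (x', y') ∈ Γ →
    y₁ < y₂ → x < x' → y' ∉ Set.Ioo y₁ y₂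

/-- Second-order right monotonicity of `Γ`. -/
def SecondOrderRightMonotone (Γ : Set (ℝ × ℝ)) : Prop :=
  ∀ x y₁ y₂ x' y' : ℝ, (x, y₁) ∈ Γ → (x, y₂) ∈ Γ → (x', y') ∈ Γ →
    y₁ < y₂ → x' < x → y' ∉ Set.Ioo y₁ y₂

/-- Nondegeneracy of `(Γ, M)`. -/
def Nondegenerate (Γ : Set (ℝ × ℝ)) (M : Set ℝ) : Prop :=
  (∀ x y : ℝ, (x, y) ∈ Γ → x < y → ∃ y' : ℝ, y' < x ∧ (x, y') ∈ Γ) ∧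
  (∀ x y : ℝ, x ∈ M → (x, y) ∈ Γ → y < x → ∃ y' : ℝ, x < y' ∧ (x, y') ∈ Γ)

/-- The put function `p_μ`. -/
def put (μ : Measure ℝ) (t : ℝ) : ℝ := ∫ s, max (t - s) 0 ∂μ

/-- `x` is a barrier for the supermartingale transports from `μ` to `ν`. -/
def IsBarrier (μ ν : Measure ℝ) (x : ℝ) : Prop :=
  ∀ P : Measure (ℝ × ℝ), IsSupermartingaleCoupling P μ ν →
    P {p : ℝ × ℝ | p.1 ≤ x ∧ x < p.2} = 0 ∧ P {p : ℝ × ℝ | x ≤ p.1 ∧ p.2 < x} = 0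

/-- Barycenter of a finite measure (with `bary 0 = 0`). -/
def bary (θ : Measure ℝ) : ℝ := (∫ t, t ∂θ) / (θ Set.univ).toReal

namespace SMT

section

open Filter Topology ProbabilityTheory

/-! ### A Komlós-type selection principle -/

section

/-- Convergence part of the compactness principle: `exp (-Φ/2)` convergent means `Φ` convergent
in `[0,∞]`. -/
lemma tendsto_ofReal_of_exp {u : ℕ → ℝ} {l : ℝ}
    (h : Tendsto (fun n => Real.exp (-(u n) / 2)) atTop (𝓝 l)) :
    ∃ l' : ℝ≥0∞, Tendsto (fun n => ENNReal.ofReal (u n)) atTop (𝓝 l') := by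
  have hl : 0 ≤ l := ge_of_tendsto' h (fun n => (Real.exp_pos _).le)
  rcases hl.eq_or_lt with h0 | hpos
  · refine ⟨⊤, ?_⟩
    rw [← h0] at h
    have h1 : Tendsto (fun n => -(u n) / 2) atTop atBot := Real.tendsto_exp_comp_nhds_zero.1 h
    have h2 : Tendsto u atTop atTop := by
      have := (tendsto_neg_atBot_atTop.comp h1).const_mul_atTop (by norm_num : (0:ℝ) < 2)
      refine this.congr (fun n => ?_)
      simp only [Function.comp]; ring
    exact ENNReal.tendsto_ofReal_atTop.comp h2
  · refine ⟨ENNReal.ofReal (-2 * Real.log l), ?_⟩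
    refine ENNReal.tendsto_ofReal ?_
    have := ((Real.continuousAt_log hpos.ne').tendsto.comp h).const_mul (-2)
    refine this.congr (fun n => ?_)
    simp only [Function.comp, Real.log_exp]; ring

/-- A Komlós type selection principle. From a decreasing sequence of midpoint convex families of
nonnegative functions one can select one member of each so that the selected functions converge
almost everywhere in `[0,∞]`: near minimisers of the strictly convex functional
`q ↦ ∫ exp (-Φ q)` form a Cauchy sequence. -/
lemma komlos {Ω E : Type*} [MeasurableSpace Ω] (ρ : Measure Ω) [IsFiniteMeasure ρ]
    (Q : ℕ → Set E) (hanti : Antitone Q) (hne : ∀ n, (Q n).Nonempty) (Φ : E → Ω → ℝ)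
    (hm : ∀ n, ∀ q ∈ Q n, Measurable (Φ q)) (h0 : ∀ n, ∀ q ∈ Q n, ∀ ω, 0 ≤ Φ q ω)
    (hmid : ∀ n, ∀ a ∈ Q n, ∀ b ∈ Q n, ∃ c ∈ Q n, ∀ ω, Φ c ω = (Φ a ω + Φ b ω) / 2) :
    ∃ q : ℕ → E, (∀ n, q n ∈ Q n) ∧
      ∀ᵐ ω ∂ρ, ∃ l : ℝ≥0∞, Tendsto (fun n => ENNReal.ofReal (Φ (q n) ω)) atTop (𝓝 l) := by
  set J : E → ℝ := fun q => ∫ ω, Real.exp (-(Φ q ω)) ∂ρ with hJ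
  have hJ0 : ∀ q, 0 ≤ J q := fun q => integral_nonneg (fun ω => (Real.exp_pos _).le)
  have hInt : ∀ n, ∀ q ∈ Q n, Integrable (fun ω => Real.exp (-(Φ q ω))) ρ := by
    intro n q hq
    refine Integrable.of_bound (C := 1) ((hm n q hq).neg.exp.aestronglyMeasurable) ?_
    refine Eventually.of_forall (fun ω => ?_)
    rw [Real.norm_eq_abs, abs_of_pos (Real.exp_pos _)]
    exact Real.exp_le_one_iff.2 (by linarith [h0 n q hq ω])
  have hJ1 : ∀ n, ∀ q ∈ Q n, J q ≤ ρ.real univ := by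
    intro n q hq
    have := integral_mono (hInt n q hq) (integrable_const (1:ℝ)) (fun ω => by
      exact Real.exp_le_one_iff.2 (by linarith [h0 n q hq ω]))
    simpa using this
  have hbdd : ∀ n, BddBelow (J '' Q n) := fun n => ⟨0, by rintro _ ⟨q, -, rfl⟩; exact hJ0 q⟩
  set j : ℕ → ℝ := fun n => sInf (J '' Q n) with hj
  have hjmono : Monotone j := fun n m hnm =>
    csInf_le_csInf (hbdd n) ((hne m).image _) (image_mono (hanti hnm))
  have hjle : ∀ n, j n ≤ ρ.real univ := fun n => by
    obtain ⟨q, hq⟩ := hne n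
    exact (csInf_le (hbdd n) ⟨q, hq, rfl⟩).trans (hJ1 n q hq)
  have hjt : Tendsto j atTop (𝓝 (⨆ n, j n)) :=
    tendsto_atTop_ciSup hjmono ⟨_, by rintro _ ⟨n, rfl⟩; exact hjle n⟩
  set js := ⨆ n, j n with hjs
  have hjle' : ∀ n, j n ≤ js := fun n => hjmono.ge_of_tendsto hjt n
  have hch : ∀ n : ℕ, ∃ q ∈ Q n, J q < j n + 1 / ((n:ℝ) + 1) := by
    intro n
    obtain ⟨_, ⟨q, hq, rfl⟩, hlt⟩ := exists_lt_of_csInf_lt ((hne n).image J)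
      (show sInf (J '' Q n) < j n + 1 / ((n:ℝ) + 1) by
        have : (0:ℝ) < 1 / ((n:ℝ) + 1) := by positivity
        linarith)
    exact ⟨q, hq, hlt⟩
  choose a haQ haJ using hch
  set u : ℕ → Ω → ℝ := fun n ω => Real.exp (-(Φ (a n) ω) / 2) with hu
  have hum : ∀ n, Measurable (u n) := fun n => ((hm n _ (haQ n)).neg.div_const 2).exp
  set δ : ℕ → ℝ := fun n => (js - j n) + 2 * (1 / ((n:ℝ) + 1)) with hδ
  have hδt : Tendsto δ atTop (𝓝 0) := by
    have h1 : Tendsto (fun n => js - j n) atTop (𝓝 0) := by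
      simpa using hjt.const_sub js
    have h2 := (tendsto_one_div_add_atTop_nhds_zero_nat (𝕜 := ℝ)).const_mul 2
    have h3 := h1.add h2
    rw [mul_zero, add_zero] at h3
    exact h3
  have key : ∀ n m, n ≤ m → ∫ ω, (u n ω - u m ω) ^ 2 ∂ρ ≤ δ n := by
    intro n m hnm
    obtain ⟨c, hc, hcΦ⟩ := hmid n (a n) (haQ n) (a m) (hanti hnm (haQ m))
    have hid : ∀ ω, (u n ω - u m ω) ^ 2 =
        Real.exp (-(Φ (a n) ω)) + Real.exp (-(Φ (a m) ω)) - 2 * Real.exp (-(Φ c ω)) := by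
      intro ω
      have e1 : Real.exp (-(Φ (a n) ω)) = u n ω * u n ω := by
        simp only [hu, ← Real.exp_add]; ring_nf
      have e2 : Real.exp (-(Φ (a m) ω)) = u m ω * u m ω := by
        simp only [hu, ← Real.exp_add]; ring_nf
      have e3 : Real.exp (-(Φ c ω)) = u n ω * u m ω := by
        simp only [hu, ← Real.exp_add, hcΦ]; ring_nf
      rw [e1, e2, e3]; ring
    simp_rw [hid]
    have hadd : Integrable (fun ω => Real.exp (-(Φ (a n) ω)) + Real.exp (-(Φ (a m) ω))) ρ :=
      (hInt n _ (haQ n)).add (hInt m _ (haQ m))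
    rw [integral_sub hadd ((hInt n c hc).const_mul 2),
      integral_add (hInt n _ (haQ n)) (hInt m _ (haQ m)), integral_const_mul]
    have h1 := haJ n
    have h2 := haJ m
    have h3 : j n ≤ J c := csInf_le (hbdd n) ⟨c, hc, rfl⟩
    have h4 := hjle' m
    have h5 : 1 / ((m:ℝ) + 1) ≤ 1 / ((n:ℝ) + 1) :=
      one_div_le_one_div_of_le (by positivity) (by exact_mod_cast Nat.succ_le_succ hnm)
    simp only [hJ] at h1 h2 h3
    simp only [hδ]
    linarith
  -- pass to a rapidly Cauchy subsequence
  have hsub : ∃ ns : ℕ → ℕ, StrictMono ns ∧ ∀ k, δ (ns k) < (1 / 4 : ℝ) ^ k := by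
    refine Filter.extraction_forall_of_eventually (P := fun k n => δ n < (1/4:ℝ)^k) (fun k => ?_)
    exact hδt.eventually_lt_const (by positivity)
  obtain ⟨ns, hns, hnsδ⟩ := hsub
  refine ⟨fun k => a (ns k), fun k => hanti (hns.id_le k) (haQ (ns k)), ?_⟩
  have hcau : ∀ N n m : ℕ, N ≤ n → N ≤ m →
      eLpNorm ((fun k => u (ns k)) n - (fun k => u (ns k)) m) 2 ρ
        < 2 * ENNReal.ofReal ((1/2 : ℝ) ^ N) := by
    have main : ∀ N n m : ℕ, N ≤ n → n ≤ m →
      eLpNorm ((fun k => u (ns k)) n - (fun k => u (ns k)) m) 2 ρ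
        ≤ ENNReal.ofReal ((1/2 : ℝ) ^ N) := by
      intro N n m hNn hnm
      have hmem : MemLp (fun ω => u (ns n) ω - u (ns m) ω) 2 ρ := by
        refine MemLp.of_bound ((hum _).sub (hum _)).aestronglyMeasurable 1
          (Eventually.of_forall fun ω => ?_)
        have h1 : ∀ k, 0 ≤ u k ω := fun k => (Real.exp_pos _).le
        have h2 : ∀ k, u k ω ≤ 1 := fun k =>
          Real.exp_le_one_iff.2 (by linarith [h0 k _ (haQ k) ω])
        rw [Real.norm_eq_abs, abs_le]
        constructor <;> linarith [h1 (ns n), h1 (ns m), h2 (ns n), h2 (ns m)]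
      have := hmem.eLpNorm_eq_integral_rpow_norm (by norm_num) (by norm_num)
      change eLpNorm (fun ω => u (ns n) ω - u (ns m) ω) 2 ρ ≤ _
      rw [this]
      refine ENNReal.ofReal_le_ofReal ?_
      have h3 : ∫ ω, ‖u (ns n) ω - u (ns m) ω‖ ^ (2:ℝ≥0∞).toReal ∂ρ ≤ (1/4:ℝ)^N := by
        have : ∀ ω, ‖u (ns n) ω - u (ns m) ω‖ ^ (2:ℝ≥0∞).toReal
            = (u (ns n) ω - u (ns m) ω) ^ 2 := by
          intro ω
          simp [Real.norm_eq_abs, sq_abs]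
        simp_rw [this]
        refine (key _ _ (hns.monotone hnm)).trans ((hnsδ n).le.trans ?_)
        exact pow_le_pow_of_le_one (by norm_num) (by norm_num) hNn
      have h4 : (0:ℝ) ≤ ∫ ω, ‖u (ns n) ω - u (ns m) ω‖ ^ (2:ℝ≥0∞).toReal ∂ρ :=
        integral_nonneg fun ω => by positivity
      calc _ ≤ ((1/4:ℝ)^N) ^ ((2:ℝ≥0∞).toReal)⁻¹ :=
            Real.rpow_le_rpow h4 h3 (by simp)
        _ = (1/2:ℝ)^N := by
            have : (1/4:ℝ)^N = ((1/2:ℝ)^N)^2 := by rw [← pow_mul, mul_comm, pow_mul]; norm_num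
            rw [this]
            have h5 : (0:ℝ) ≤ (1/2:ℝ)^N := by positivity
            rw [show ((2:ℝ≥0∞).toReal)⁻¹ = (1/2:ℝ) by norm_num, ← Real.sqrt_eq_rpow,
              Real.sqrt_sq h5]
    have lt : ∀ N : ℕ, ENNReal.ofReal ((1/2 : ℝ) ^ N) < 2 * ENNReal.ofReal ((1/2 : ℝ) ^ N) := by
      intro N
      have h2 : (2:ℝ≥0∞) = ENNReal.ofReal 2 := by simp
      rw [h2, ← ENNReal.ofReal_mul (by norm_num)]
      have : (0:ℝ) < (1/2)^N := by positivity
      exact (ENNReal.ofReal_lt_ofReal_iff (by positivity)).2 (by linarith)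
    intro N n m hn hmm
    rcases le_total n m with h | h
    · exact (main N n m hn h).trans_lt (lt N)
    · rw [eLpNorm_sub_comm]
      exact (main N m n hmm h).trans_lt (lt N)
  have hsum : ∑' N : ℕ, 2 * ENNReal.ofReal ((1/2 : ℝ) ^ N) ≠ ⊤ := by
    rw [ENNReal.tsum_mul_left]
    refine ENNReal.mul_ne_top (by simp) ?_
    exact (summable_geometric_two).tsum_ofReal_ne_top
  have := MeasureTheory.Lp.ae_tendsto_of_cauchy_eLpNorm (f := fun k => u (ns k))
    (fun k => (hum _).aestronglyMeasurable) (by norm_num : (1:ℝ≥0∞) ≤ 2) hsum hcau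
  filter_upwards [this] with ω hω
  obtain ⟨l, hl⟩ := hω
  exact tendsto_ofReal_of_exp hl

end

/-! ### Couplings, drift and the price of semi-static positions -/

section

/-- The semi-static payoff `φ(x) + ψ(y) + h(x)(y - x)`. -/
def gain (φ ψ h : ℝ → ℝ) (p : ℝ × ℝ) : ℝ := φ p.1 + ψ p.2 + h p.1 * (p.2 - p.1)

/-- The mean loss `x - E[y | x]` under the disintegration of `P` along the first coordinate. -/
def drift (P : Measure (ℝ × ℝ)) [IsFiniteMeasure P] (x : ℝ) : ℝ :=
  ∫ y, (x - y) ∂(P.condKernel x)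

/-- The price of the semi-static position `(φ, ψ, h)` computed under `P`. For integrable data it
equals `∫ φ dμ + ∫ ψ dν`; this expression also makes sense for nonintegrable data as long as the
payoff is nonnegative. -/
def cost (P : Measure (ℝ × ℝ)) [IsFiniteMeasure P] (φ ψ h : ℝ → ℝ) : ℝ≥0∞ :=
  ∫⁻ p, ENNReal.ofReal (gain φ ψ h p) ∂P +
    ∫⁻ x, ENNReal.ofReal (h x) * ENNReal.ofReal (drift P x) ∂P.fst

/-- The conditional version of `cost` given the first coordinate. -/
def costAt (P : Measure (ℝ × ℝ)) [IsFiniteMeasure P] (φ ψ h : ℝ → ℝ) (x : ℝ) : ℝ≥0∞ :=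
  ∫⁻ y, ENNReal.ofReal (gain φ ψ h (x, y)) ∂(P.condKernel x) +
    ENNReal.ofReal (h x) * ENNReal.ofReal (drift P x)

lemma measurable_gain {φ ψ h : ℝ → ℝ} (hφ : Measurable φ) (hψ : Measurable ψ) (hh : Measurable h) :
    Measurable (gain φ ψ h) := by
  unfold gain; fun_prop

section basic
variable {P : Measure (ℝ × ℝ)} {μ ν : Measure ℝ}

lemma isFinite_of_coupling [IsFiniteMeasure μ] (hP : IsSupermartingaleCoupling P μ ν) :
    IsFiniteMeasure P := by
  constructor
  have h := hP.1.1
  have : P univ = μ univ := by rw [← h, Measure.map_apply measurable_fst MeasurableSet.univ]; simp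
  rw [this]; exact measure_lt_top _ _

lemma integrable_fst (hμ : Integrable (fun x : ℝ => x) μ) (hP : IsSupermartingaleCoupling P μ ν) :
    Integrable (fun p : ℝ × ℝ => p.1) P := by
  rw [← hP.1.1] at hμ
  exact hμ.comp_measurable measurable_fst

lemma integrable_snd (hν : Integrable (fun x : ℝ => x) ν) (hP : IsSupermartingaleCoupling P μ ν) :
    Integrable (fun p : ℝ × ℝ => p.2) P := by
  rw [← hP.1.2] at hν
  exact hν.comp_measurable measurable_snd

lemma fst_eq (hP : IsSupermartingaleCoupling P μ ν) : P.fst = μ := hP.1.1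

lemma snd_eq (hP : IsSupermartingaleCoupling P μ ν) : P.snd = ν := hP.1.2

lemma ae_fst (hP : IsSupermartingaleCoupling P μ ν) {p : ℝ → Prop} (h : ∀ᵐ x ∂μ, p x) :
    ∀ᵐ z ∂P, p z.1 := by
  rw [← hP.1.1] at h
  exact ae_of_ae_map measurable_fst.aemeasurable h

lemma ae_snd (hP : IsSupermartingaleCoupling P μ ν) {p : ℝ → Prop} (h : ∀ᵐ x ∂ν, p x) :
    ∀ᵐ z ∂P, p z.2 := by
  rw [← hP.1.2] at h
  exact ae_of_ae_map measurable_snd.aemeasurable h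

lemma lintegral_fst (hP : IsSupermartingaleCoupling P μ ν) {F : ℝ → ℝ≥0∞} (hF : Measurable F) :
    ∫⁻ p, F p.1 ∂P = ∫⁻ x, F x ∂μ := by
  rw [← hP.1.1, lintegral_map hF measurable_fst]

lemma lintegral_snd (hP : IsSupermartingaleCoupling P μ ν) {F : ℝ → ℝ≥0∞} (hF : Measurable F) :
    ∫⁻ p, F p.2 ∂P = ∫⁻ x, F x ∂ν := by
  rw [← hP.1.2, lintegral_map hF measurable_snd]

lemma integral_fst (hP : IsSupermartingaleCoupling P μ ν) {F : ℝ → ℝ} (hF : Measurable F) :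
    ∫ p, F p.1 ∂P = ∫ x, F x ∂μ := by
  rw [← hP.1.1, integral_map measurable_fst.aemeasurable hF.aestronglyMeasurable]

lemma integral_snd (hP : IsSupermartingaleCoupling P μ ν) {F : ℝ → ℝ} (hF : Measurable F) :
    ∫ p, F p.2 ∂P = ∫ x, F x ∂ν := by
  rw [← hP.1.2, integral_map measurable_snd.aemeasurable hF.aestronglyMeasurable]

variable [IsFiniteMeasure P]

lemma measurable_drift : Measurable (drift P) := by
  have : StronglyMeasurable (fun p : ℝ × ℝ => p.1 - p.2) :=
    (measurable_fst.sub measurable_snd).stronglyMeasurable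
  exact (this.integral_kernel_prod_right' (κ := P.condKernel)).measurable

lemma cost_eq {φ ψ h : ℝ → ℝ} (hφ : Measurable φ) (hψ : Measurable ψ) (hh : Measurable h) :
    cost P φ ψ h = ∫⁻ x, costAt P φ ψ h x ∂P.fst := by
  have hg := measurable_gain hφ hψ hh
  have hm : Measurable (fun x => ENNReal.ofReal (h x) * ENNReal.ofReal (drift P x)) :=
    (hh.ennreal_ofReal).mul (measurable_drift.ennreal_ofReal)
  unfold cost costAt
  rw [lintegral_add_right _ hm]
  congr 1
  exact (Measure.lintegral_condKernel (hg.ennreal_ofReal)).symm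

lemma measurable_costAt {φ ψ h : ℝ → ℝ} (hφ : Measurable φ) (hψ : Measurable ψ)
    (hh : Measurable h) : Measurable (costAt P φ ψ h) := by
  have hg := measurable_gain hφ hψ hh
  unfold costAt
  refine Measurable.add ?_ ((hh.ennreal_ofReal).mul (measurable_drift.ennreal_ofReal))
  exact Measurable.lintegral_kernel_prod_right' (f := fun p => ENNReal.ofReal (gain φ ψ h p))
    hg.ennreal_ofReal

lemma ae_ae {p : ℝ × ℝ → Prop} (h : ∀ᵐ z ∂P, p z) :
    ∀ᵐ x ∂P.fst, ∀ᵐ y ∂(P.condKernel x), p (x, y) := by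
  rw [← P.disintegrate P.condKernel] at h
  exact Measure.ae_ae_of_ae_compProd h

lemma ae_integrable_snd (h2 : Integrable (fun p : ℝ × ℝ => p.2) P) :
    ∀ᵐ x ∂P.fst, Integrable (fun y : ℝ => y) (P.condKernel x) :=
  h2.condKernel_ae

lemma integrable_drift (h1 : Integrable (fun p : ℝ × ℝ => p.1) P)
    (h2 : Integrable (fun p : ℝ × ℝ => p.2) P) : Integrable (drift P) P.fst := by
  exact (h1.sub h2).integral_condKernel

lemma setIntegral_drift (h1 : Integrable (fun p : ℝ × ℝ => p.1) P)
    (h2 : Integrable (fun p : ℝ × ℝ => p.2) P) {A : Set ℝ} (hA : MeasurableSet A) :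
    ∫ x in A, drift P x ∂P.fst =
      ∫ p in A ×ˢ (univ : Set ℝ), p.1 ∂P - ∫ p in A ×ˢ (univ : Set ℝ), p.2 ∂P := by
  rw [← integral_sub h1.integrableOn h2.integrableOn]
  exact Measure.setIntegral_condKernel_univ_right hA (h1.sub h2).integrableOn

lemma drift_nonneg (h1 : Integrable (fun p : ℝ × ℝ => p.1) P)
    (h2 : Integrable (fun p : ℝ × ℝ => p.2) P) (hP : SupermartingaleProperty P) :
    ∀ᵐ x ∂P.fst, 0 ≤ drift P x := by
  refine ae_nonneg_of_forall_setIntegral_nonneg (integrable_drift h1 h2) (fun A hA _ => ?_)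
  rw [setIntegral_drift h1 h2 hA]
  linarith [hP A hA]

lemma martingaleOn_iff (h1 : Integrable (fun p : ℝ × ℝ => p.1) P)
    (h2 : Integrable (fun p : ℝ × ℝ => p.2) P) (hP : SupermartingaleProperty P)
    {M : Set ℝ} (hM : MeasurableSet M) :
    MartingaleOn P M ↔ ∀ᵐ x ∂P.fst, x ∈ M → drift P x = 0 := by
  have hd := drift_nonneg h1 h2 hP
  constructor
  · intro h
    have h0 : ∫ x in M, drift P x ∂P.fst = 0 := by
      rw [setIntegral_drift h1 h2 hM, h M hM Subset.rfl, sub_self]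
    rw [setIntegral_eq_zero_iff_of_nonneg_ae (ae_restrict_of_ae hd)
      (integrable_drift h1 h2).integrableOn] at h0
    exact (ae_restrict_iff' hM).1 h0
  · intro h A hA hAM
    have : ∫ x in A, drift P x ∂P.fst = 0 := by
      refine setIntegral_eq_zero_of_ae_eq_zero ?_
      filter_upwards [h] with x hx hxA using hx (hAM hxA)
    rw [setIntegral_drift h1 h2 hA] at this
    linarith

end basic

/-- Slope independence: changing the trading strategy by `θ` does not change the conditional cost,
as long as the payoffs stay nonnegative. -/
lemma slope_indep (Q : Measure ℝ) [IsProbabilityMeasure Q] (hQ : Integrable (fun y : ℝ => y) Q)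
    (x : ℝ) {G₁ G₂ : ℝ → ℝ} {h₁ h₂ : ℝ} (hm : Measurable G₁)
    (hG : ∀ᵐ y ∂Q, G₂ y = G₁ y + (h₂ - h₁) * (y - x))
    (h1 : ∀ᵐ y ∂Q, 0 ≤ G₁ y) (h2 : ∀ᵐ y ∂Q, 0 ≤ G₂ y)
    (hd : (∫ y, (x - y) ∂Q) = 0 ∨ (0 ≤ (∫ y, (x - y) ∂Q) ∧ 0 ≤ h₁ ∧ 0 ≤ h₂)) :
    ∫⁻ y, ENNReal.ofReal (G₁ y) ∂Q + ENNReal.ofReal h₁ * ENNReal.ofReal (∫ y, (x - y) ∂Q) =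
      ∫⁻ y, ENNReal.ofReal (G₂ y) ∂Q + ENNReal.ofReal h₂ * ENNReal.ofReal (∫ y, (x - y) ∂Q) := by
  set d := ∫ y, (x - y) ∂Q with hdd
  have hm2 : AEStronglyMeasurable G₂ Q := by
    have : AEStronglyMeasurable (fun y => G₁ y + (h₂ - h₁) * (y - x)) Q := by fun_prop
    exact this.congr (hG.mono fun y hy => hy.symm)
  have hlin : Integrable (fun y => (h₂ - h₁) * (y - x)) Q :=
    (hQ.sub (integrable_const x)).const_mul _
  have hI : Integrable G₁ Q ↔ Integrable G₂ Q := by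
    constructor
    · intro h
      exact (h.add hlin).congr (hG.mono fun y hy => hy.symm)
    · intro h
      refine (h.sub hlin).congr (hG.mono fun y hy => ?_)
      simp [hy]
  have hfin : ∀ G : ℝ → ℝ, AEStronglyMeasurable G Q → (∀ᵐ y ∂Q, 0 ≤ G y) → ¬ Integrable G Q →
      ∫⁻ y, ENNReal.ofReal (G y) ∂Q = ⊤ := by
    intro G hGm hG0 hn
    by_contra hne
    exact hn ((lintegral_ofReal_ne_top_iff_integrable hGm hG0).1 hne)
  by_cases hi : Integrable G₁ Q
  · have hi2 := hI.1 hi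
    rw [← ofReal_integral_eq_lintegral_ofReal hi h1, ← ofReal_integral_eq_lintegral_ofReal hi2 h2]
    have hInt : ∫ y, G₂ y ∂Q = ∫ y, G₁ y ∂Q - (h₂ - h₁) * d := by
      rw [integral_congr_ae hG, integral_add hi hlin, integral_const_mul]
      have : ∫ y, (y - x) ∂Q = - d := by
        rw [hdd, ← integral_neg]; simp
      rw [this]; ring
    have p1 := integral_nonneg_of_ae h1
    have p2 := integral_nonneg_of_ae h2
    rcases hd with h0 | ⟨hd0, hh1, hh2⟩
    · rw [hInt]; simp [h0]
    · rw [← ENNReal.ofReal_mul hh1, ← ENNReal.ofReal_mul hh2,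
        ← ENNReal.ofReal_add p1 (by positivity), ← ENNReal.ofReal_add p2 (by positivity), hInt]
      congr 1; ring
  · rw [hfin _ hm.aestronglyMeasurable h1 hi, hfin _ hm2 h2 (fun h => hi (hI.2 h))]
    simp

end

/-! ### Irreducible pieces and separating concave functions -/

section

/-- Equality of the means of `μ` and `ν`; then all supermartingale couplings are martingales. -/
def EqMean (μ ν : Measure ℝ) : Prop := ∫ x, x ∂μ = ∫ y, y ∂ν

/-- An irreducible piece of the transport problem, witnessed by the coupling `P₀`: the first
marginal lives on the open interval `I`, the second one on its closure, and `P₀` moves mass across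
every level `s ∈ I` (or loses mean there). Unless the means agree, `I` is unbounded above. -/
structure Irr (μ ν : Measure ℝ) (P₀ : Measure (ℝ × ℝ)) (I : Set ℝ) : Prop where
  fμ : IsFiniteMeasure μ
  fν : IsFiniteMeasure ν
  iμ : Integrable (fun x : ℝ => x) μ
  iν : Integrable (fun x : ℝ => x) ν
  cpl : IsSupermartingaleCoupling P₀ μ ν
  opn : IsOpen I
  oc : I.OrdConnected
  ne : I.Nonempty
  μI : ∀ᵐ x ∂μ, x ∈ I
  νI : ∀ᵐ y ∂ν, y ∈ closure I
  cross : ∀ s ∈ I, P₀ {p | p.1 < s ∧ s < p.2} ≠ 0 ∨ P₀ {p | p.2 < s ∧ s ≤ p.1} ≠ 0 ∨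
    0 < ∫ p in {p : ℝ × ℝ | p.1 < s}, (p.1 - p.2) ∂P₀
  up : EqMean μ ν ∨ ∀ x ∈ I, Ici x ⊆ I

/-- A semi-static position `(φ, ψ, h)` which superhedges `f` on `A × B`, where `A` and `B` carry
the marginals. -/
structure Feas (μ ν : Measure ℝ) (I : Set ℝ) (f : ℝ × ℝ → ℝ≥0∞) (φ ψ h : ℝ → ℝ)
    (A B : Set ℝ) : Prop where
  mφ : Measurable φ
  mψ : Measurable ψ
  mh : Measurable h
  mA : MeasurableSet A
  mB : MeasurableSet B
  AI : A ⊆ I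
  BI : B ⊆ closure I
  μA : ∀ᵐ x ∂μ, x ∈ A
  νB : ∀ᵐ y ∂ν, y ∈ B
  nn : ∀ x ∈ A, ∀ y ∈ B, 0 ≤ gain φ ψ h (x, y)
  dom : ∀ x ∈ A, ∀ y ∈ B, f (x, y) ≤ ENNReal.ofReal (gain φ ψ h (x, y))
  sgn : EqMean μ ν ∨ ∀ x ∈ A, 0 ≤ h x

/-- A concave function `ζ` on `E ⊇ I` with a supergradient `σ` on `I`; `usc` says that `ζ` is an
infimum of affine functions. -/
structure Moder (I E : Set ℝ) (ζ σ : ℝ → ℝ) : Prop where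
  mζ : Measurable ζ
  mσ : Measurable σ
  IE : I ⊆ E
  sg : ∀ x ∈ I, ∀ y ∈ E, ζ y ≤ ζ x + σ x * (y - x)
  usc : ∀ y ∈ E, ∀ ε > 0, ∃ a b : ℝ, a + b * y < ζ y + ε ∧ ∀ z ∈ I, ζ z ≤ a + b * z

lemma drift_eq_zero {P : Measure (ℝ × ℝ)} [IsFiniteMeasure P] {μ ν : Measure ℝ}
    (hμ : Integrable (fun x : ℝ => x) μ) (hν : Integrable (fun x : ℝ => x) ν)
    (hP : IsSupermartingaleCoupling P μ ν) (h : EqMean μ ν) : ∀ᵐ x ∂μ, drift P x = 0 := by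
  have h1 := integrable_fst hμ hP
  have h2 := integrable_snd hν hP
  have hd := drift_nonneg h1 h2 hP.2
  have h0 : ∫ x in univ, drift P x ∂P.fst = 0 := by
    rw [setIntegral_drift h1 h2 MeasurableSet.univ]
    simp only [univ_prod_univ, Measure.restrict_univ]
    have e1 := integral_fst hP (F := fun x => x) measurable_id
    have e2 := integral_snd hP (F := fun x => x) measurable_id
    rw [e1, e2, h, sub_self]
  rw [Measure.restrict_univ] at h0
  rw [integral_eq_zero_iff_of_nonneg_ae hd (integrable_drift h1 h2)] at h0
  rw [fst_eq hP] at h0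
  exact h0

lemma prod_univ_eq (A : Set ℝ) : A ×ˢ (univ : Set ℝ) = {p : ℝ × ℝ | p.1 ∈ A} := by
  ext p; simp

lemma setIntegral_nonneg_of_super {P : Measure (ℝ × ℝ)} (h1 : Integrable (fun p : ℝ × ℝ => p.1) P)
    (h2 : Integrable (fun p : ℝ × ℝ => p.2) P) (hP : SupermartingaleProperty P) {A : Set ℝ}
    (hA : MeasurableSet A) : 0 ≤ ∫ p in {p : ℝ × ℝ | p.1 ∈ A}, (p.1 - p.2) ∂P := by
  rw [integral_sub h1.integrableOn h2.integrableOn, ← prod_univ_eq]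
  linarith [hP A hA]

lemma setIntegral_zero_of_eqMean {P : Measure (ℝ × ℝ)} [IsFiniteMeasure P] {μ ν : Measure ℝ}
    (hμ : Integrable (fun x : ℝ => x) μ) (hν : Integrable (fun x : ℝ => x) ν)
    (hP : IsSupermartingaleCoupling P μ ν) (h : EqMean μ ν) {A : Set ℝ}
    (hA : MeasurableSet A) : ∫ p in {p : ℝ × ℝ | p.1 ∈ A}, (p.1 - p.2) ∂P = 0 := by
  have h1 := integrable_fst hμ hP
  have h2 := integrable_snd hν hP
  rw [integral_sub h1.integrableOn h2.integrableOn, ← prod_univ_eq, ← setIntegral_drift h1 h2 hA,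
    fst_eq hP]
  refine setIntegral_eq_zero_of_ae_eq_zero ?_
  filter_upwards [drift_eq_zero hμ hν hP h] with x hx _ using hx

/-- A strictly positive integrand with nonpositive integral forces a null set. -/
lemma null_of_integral_nonpos {P : Measure (ℝ × ℝ)} {F : ℝ × ℝ → ℝ} {S : Set (ℝ × ℝ)}
    (hS : MeasurableSet S) (hF : Integrable F P) (hpos : ∀ᵐ p ∂P, p ∈ S → 0 < F p)
    (hle : ∫ p in S, F p ∂P ≤ 0) : P S = 0 := by
  have h0 : 0 ≤ᵐ[P.restrict S] F := by
    rw [EventuallyLE, ae_restrict_iff' hS]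
    filter_upwards [hpos] with p hp hpS using (hp hpS).le
  have h1 : ∫ p in S, F p ∂P = 0 := le_antisymm hle (integral_nonneg_of_ae h0)
  rw [setIntegral_eq_zero_iff_of_nonneg_ae h0 hF.integrableOn] at h1
  rw [EventuallyEq, ae_restrict_iff' hS] at h1
  have : ∀ᵐ p ∂P, p ∉ S := by
    filter_upwards [h1, hpos] with p hp hq hpS
    have := hp hpS
    have := hq hpS
    simp_all
  simpa [ae_iff] using this

/-- The second marginal charges the half-line below every level of `I`: otherwise mass
starting below that level would gain mean, and none would cross the level downwards. -/
lemma Irr.below {μ ν : Measure ℝ} {P₀ : Measure (ℝ × ℝ)} {I : Set ℝ} (H : Irr μ ν P₀ I)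
    {s : ℝ} (hs : s ∈ I) : ν (Iio s) ≠ 0 := by
  intro h0
  have hae : ∀ᵐ p ∂P₀, s ≤ p.2 := by
    refine ae_snd H.cpl (p := fun y => s ≤ y) ?_
    rw [ae_iff]; simpa [Iio] using h0
  have h1 := integrable_fst H.iμ H.cpl
  have h2 := integrable_snd H.iν H.cpl
  have hA : MeasurableSet (Iio s) := measurableSet_Iio
  have hm : MeasurableSet {p : ℝ × ℝ | p.1 < s} := measurable_fst measurableSet_Iio
  rcases H.cross s hs with hc | hc | hc
  · have hle : ∫ p in {p : ℝ × ℝ | p.1 < s}, (p.2 - p.1) ∂P₀ ≤ 0 := by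
      have := setIntegral_nonneg_of_super h1 h2 H.cpl.2 hA
      have e : ∫ p in {p : ℝ × ℝ | p.1 < s}, (p.2 - p.1) ∂P₀ =
          - ∫ p in {p : ℝ × ℝ | p.1 ∈ Iio s}, (p.1 - p.2) ∂P₀ := by
        rw [← integral_neg]; simp
      rw [e]; linarith
    have := null_of_integral_nonpos hm (h2.sub h1) (by
      filter_upwards [hae] with p hp hpS
      simp only [Pi.sub_apply]
      have : p.1 < s := hpS
      linarith) hle
    exact hc (measure_mono_null (fun p hp => hp.1) this)
  · refine hc (measure_mono_null (fun p hp => ?_) (ae_iff.1 hae))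
    exact not_le.2 hp.1
  · refine absurd hc (not_lt.2 ?_)
    refine integral_nonpos_of_ae ?_
    rw [EventuallyLE, ae_restrict_iff' hm]
    filter_upwards [hae] with p hp hpS
    have : p.1 < s := hpS
    simp only [Pi.zero_apply]
    linarith

/-- For equal means the second marginal also charges the half-line above every level of `I`. -/
lemma Irr.above {μ ν : Measure ℝ} {P₀ : Measure (ℝ × ℝ)} {I : Set ℝ} (H : Irr μ ν P₀ I)
    (hM : EqMean μ ν) {s : ℝ} (hs : s ∈ I) : ν (Ici s) ≠ 0 := by
  intro h0
  have hf := H.fμ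
  have := isFinite_of_coupling H.cpl
  have hae : ∀ᵐ p ∂P₀, p.2 < s := by
    refine ae_snd H.cpl (p := fun y => y < s) ?_
    rw [ae_iff]; simpa [Ici] using h0
  have h1 := integrable_fst H.iμ H.cpl
  have h2 := integrable_snd H.iν H.cpl
  have hm : MeasurableSet {p : ℝ × ℝ | p.1 ∈ Ici s} := measurable_fst measurableSet_Ici
  rcases H.cross s hs with hc | hc | hc
  · refine hc (measure_mono_null (fun p hp => ?_) (ae_iff.1 hae))
    exact not_lt.2 hp.2.le
  · have hle := (setIntegral_zero_of_eqMean H.iμ H.iν H.cpl hM (measurableSet_Ici (a := s))).le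
    have := null_of_integral_nonpos hm (h1.sub h2) (by
      filter_upwards [hae] with p hp hpS
      simp only [Pi.sub_apply]
      have : s ≤ p.1 := hpS
      linarith) hle
    exact hc (measure_mono_null (fun p hp => hp.2) this)
  · have := setIntegral_zero_of_eqMean H.iμ H.iν H.cpl hM (measurableSet_Iio (a := s))
    exact hc.ne' this

/-- A function on `E` whose superlevel sets are order-connected is Borel after extension by `0`. -/
lemma measurable_indicator_of_ordConnected {E : Set ℝ} (hE : MeasurableSet E) {u : ℝ → ℝ}
    (h : ∀ c : ℝ, ∃ O : Set ℝ, O.OrdConnected ∧ ∀ y ∈ E, c ≤ u y ↔ y ∈ O) :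
    Measurable (E.indicator u) := by
  refine measurable_of_Ici fun c => ?_
  obtain ⟨O, hO, hOE⟩ := h c
  have hOm := hO.measurableSet
  have : E.indicator u ⁻¹' Ici c = (E ∩ O) ∪ (Eᶜ ∩ {_y | c ≤ 0}) := by
    ext y
    by_cases hy : y ∈ E
    · simp [hy, hOE y hy]
    · simp [hy]
  rw [this]
  exact (hE.inter hOm).union (hE.compl.inter (MeasurableSet.const _))

/-- A concave function `ζ` separating the two legs of a feasible position. -/
lemma exists_moder {μ ν : Measure ℝ} {P₀ : Measure (ℝ × ℝ)} {I : Set ℝ} (H : Irr μ ν P₀ I)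
    {f : ℝ × ℝ → ℝ≥0∞} {φ ψ h : ℝ → ℝ} {A B : Set ℝ} (F : Feas μ ν I f φ ψ h A B)
    (hAne : A.Nonempty) :
    ∃ ζ σ : ℝ → ℝ, Moder I (I ∪ B) ζ σ ∧
      (∀ x ∈ A, ∀ y ∈ I ∪ B, ζ y ≤ φ x + h x * (y - x)) ∧
      (∀ y ∈ B, - ψ y ≤ ζ y) ∧ (EqMean μ ν ∨ ∀ x ∈ I, 0 ≤ σ x) := by
  classical
  set E := I ∪ B with hE
  have hEm : MeasurableSet E := H.opn.measurableSet.union F.mB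
  set L : ℝ → ℝ → ℝ := fun x y => φ x + h x * (y - x) with hL
  set z : ℝ → ℝ := fun y => sInf ((fun x => L x y) '' A) with hz
  have hmeetB : ∀ S : Set ℝ, ν S ≠ 0 → ∃ b ∈ B, b ∈ S := by
    intro S hS
    by_contra hcon
    push Not at hcon
    refine hS (measure_mono_null (fun y hy hyB => hcon y hyB hy) (ae_iff.1 F.νB))
  have hLB : ∀ x ∈ A, ∀ b ∈ B, - ψ b ≤ L x b := by
    intro x hx b hb
    have := F.nn x hx b hb
    simp only [gain] at this
    simp only [hL]; linarith
  have hbdd : ∀ y ∈ E, BddBelow ((fun x => L x y) '' A) := by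
    rintro y (hy | hy)
    · obtain ⟨b, hb, hby⟩ := hmeetB _ (H.below hy)
      have hby : b < y := hby
      rcases F.sgn with hM | hpos
      · obtain ⟨b', hb', hby'⟩ := hmeetB _ (H.above hM hy)
        have hby' : y ≤ b' := hby'
        refine ⟨min (- ψ b) (- ψ b'), ?_⟩
        rintro _ ⟨x, hx, rfl⟩
        have e1 := hLB x hx b hb
        have e2 := hLB x hx b' hb'
        simp only [hL] at e1 e2 ⊢
        rcases le_total 0 (h x) with hh | hh
        · refine (min_le_left _ _).trans ?_
          nlinarith
        · refine (min_le_right _ _).trans ?_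
          nlinarith
      · refine ⟨- ψ b, ?_⟩
        rintro _ ⟨x, hx, rfl⟩
        have e1 := hLB x hx b hb
        have := hpos x hx
        simp only [hL] at e1 ⊢
        nlinarith
    · exact ⟨- ψ y, by rintro _ ⟨x, hx, rfl⟩; exact hLB x hx y hy⟩
  have hzle : ∀ x ∈ A, ∀ y ∈ E, z y ≤ L x y := fun x hx y hy =>
    csInf_le (hbdd y hy) ⟨x, hx, rfl⟩
  have hlez : ∀ y, ∀ c, (∀ x ∈ A, c ≤ L x y) → c ≤ z y := by
    intro y c hc
    refine le_csInf (hAne.image _) ?_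
    rintro _ ⟨x, hx, rfl⟩; exact hc x hx
  -- an infimum of affine functions is concave, in the form of decreasing difference quotients
  have hconc : ∀ a ∈ E, ∀ b ∈ E, ∀ y ∈ E, a < y → y < b →
      (z b - z y) / (b - y) ≤ (z y - z a) / (y - a) := by
    intro a ha b hb y hy hay hyb
    rw [div_le_div_iff₀ (by linarith) (by linarith)]
    have : ((b - y) * z a + (y - a) * z b) / (b - a) ≤ z y := by
      refine hlez y _ fun x hx => ?_
      rw [div_le_iff₀ (by linarith)]
      have e1 := hzle x hx a ha
      have e2 := hzle x hx b hb
      simp only [hL] at e1 e2 ⊢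
      nlinarith
    rw [div_le_iff₀ (by linarith)] at this
    nlinarith
  set s : ℝ → ℝ := fun x => sSup ((fun y => (z y - z x) / (y - x)) '' (E ∩ Ioi x)) with hs
  have hIE : I ⊆ E := subset_union_left
  have hright : ∀ x ∈ I, ∃ y ∈ I, x < y := fun x hx => by
    obtain ⟨ε, hε, hb⟩ := Metric.isOpen_iff.1 H.opn x hx
    exact ⟨x + ε / 2, hb (by simp [abs_of_pos hε]; linarith), by linarith⟩
  have hleft : ∀ x ∈ I, ∃ y ∈ I, y < x := fun x hx => by
    obtain ⟨ε, hε, hb⟩ := Metric.isOpen_iff.1 H.opn x hx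
    exact ⟨x - ε / 2, hb (by simp [abs_of_pos hε]; linarith), by linarith⟩
  have hsbdd : ∀ x ∈ I, BddAbove ((fun y => (z y - z x) / (y - x)) '' (E ∩ Ioi x)) := by
    intro x hx
    obtain ⟨a, ha, hax⟩ := hleft x hx
    refine ⟨(z x - z a) / (x - a), ?_⟩
    rintro _ ⟨y, ⟨hy, hxy⟩, rfl⟩
    exact hconc a (hIE ha) y hy x (hIE hx) hax hxy
  have hsne : ∀ x ∈ I, ((fun y => (z y - z x) / (y - x)) '' (E ∩ Ioi x)).Nonempty := by
    intro x hx
    obtain ⟨y, hy, hxy⟩ := hright x hx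
    exact ⟨_, y, ⟨hIE hy, hxy⟩, rfl⟩
  have hsg : ∀ x ∈ I, ∀ y ∈ E, z y ≤ z x + s x * (y - x) := by
    intro x hx y hy
    rcases lt_trichotomy x y with hxy | hxy | hxy
    · have : (z y - z x) / (y - x) ≤ s x := le_csSup (hsbdd x hx) ⟨y, ⟨hy, hxy⟩, rfl⟩
      rw [div_le_iff₀ (by linarith)] at this
      linarith
    · subst hxy; simp
    · have : s x ≤ (z x - z y) / (x - y) := by
        refine csSup_le (hsne x hx) ?_
        rintro _ ⟨w, ⟨hw, hxw⟩, rfl⟩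
        exact hconc y hy w hw x (hIE hx) hxy hxw
      rw [le_div_iff₀ (by linarith)] at this
      linarith
  have hsanti : ∀ x ∈ I, ∀ y ∈ I, x < y → s y ≤ s x := by
    intro x hx y hy hxy
    have e1 := hsg x hx y (hIE hy)
    have e2 := hsg y hy x (hIE hx)
    by_contra hcon
    push Not at hcon
    nlinarith
  have eqz : ∀ y ∈ E, E.indicator z y = z y := fun y hy => indicator_of_mem hy z
  have eqs : ∀ y ∈ I, I.indicator s y = s y := fun y hy => indicator_of_mem hy s
  refine ⟨E.indicator z, I.indicator s, ⟨?_, ?_, hIE, ?_, ?_⟩, ?_, ?_, ?_⟩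
  · refine measurable_indicator_of_ordConnected hEm fun c => ?_
    refine ⟨⋂ x ∈ A, {y | c ≤ L x y}, ?_, fun y hy => ?_⟩
    · refine ordConnected_biInter fun x hx => ⟨fun a ha b hb y hy => ?_⟩
      simp only [hL, mem_setOf_eq] at *
      rcases le_total 0 (h x) with hh | hh
      · nlinarith [hy.1]
      · nlinarith [hy.2]
    · simp only [mem_iInter, mem_setOf_eq]
      exact ⟨fun hc x hx => hc.trans (hzle x hx y hy), hlez y c⟩
  · refine measurable_indicator_of_ordConnected H.opn.measurableSet fun c => ?_
    refine ⟨{x | x ∈ I ∧ c ≤ s x}, ⟨fun a ha b hb y hy => ?_⟩, fun y hy => by simp [hy]⟩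
    have hyI := H.oc.out ha.1 hb.1 hy
    refine ⟨hyI, ?_⟩
    rcases hy.2.eq_or_lt with e | e
    · rw [e]; exact hb.2
    · exact hb.2.trans (hsanti y hyI b hb.1 e)
  · intro x hx y hy
    rw [eqz y hy, eqz x (hIE hx), eqs x hx]
    exact hsg x hx y hy
  · intro y hy ε hε
    rw [eqz y hy]
    obtain ⟨_, ⟨x, hx, rfl⟩, hlt⟩ := exists_lt_of_csInf_lt (hAne.image fun x => L x y)
      (show z y < z y + ε by linarith)
    refine ⟨φ x - h x * x, h x, ?_, fun w hw => ?_⟩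
    · simp only [hL] at hlt; linarith
    · rw [eqz w (hIE hw)]
      have := hzle x hx w (hIE hw)
      simp only [hL] at this; linarith
  · intro x hx y hy
    rw [eqz y hy]; exact hzle x hx y hy
  · intro y hy
    rw [eqz y (Or.inr hy)]
    exact hlez y _ fun x hx => hLB x hx y hy
  · refine F.sgn.imp id fun hpos x hx => ?_
    rw [eqs x hx]
    obtain ⟨y, hy, hxy⟩ := hright x hx
    refine le_trans ?_ (le_csSup (hsbdd x hx) ⟨y, ⟨hIE hy, hxy⟩, rfl⟩)
    refine div_nonneg ?_ (by linarith)
    have : z x ≤ z y := hlez y _ fun w hw => by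
      refine (hzle w hw x (hIE hx)).trans ?_
      simp only [hL]
      nlinarith [hpos w hw]
    linarith

end

/-! ### Prices of integrable positions and clipping -/

section

variable {P : Measure (ℝ × ℝ)} {μ ν : Measure ℝ}

/-- The price does not depend on the slope, as long as the payoffs are nonnegative and either the
means agree (so that there is no drift) or both slopes are nonnegative. -/
lemma cost_slope [IsFiniteMeasure P] (hμ : Integrable (fun x : ℝ => x) μ)
    (hν : Integrable (fun x : ℝ => x) ν)
    (hP : IsSupermartingaleCoupling P μ ν) {φ ψ h₁ h₂ : ℝ → ℝ}
    (hφ : Measurable φ) (hψ : Measurable ψ) (hh₁ : Measurable h₁) (hh₂ : Measurable h₂)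
    (g1 : ∀ᵐ p ∂P, 0 ≤ gain φ ψ h₁ p) (g2 : ∀ᵐ p ∂P, 0 ≤ gain φ ψ h₂ p)
    (hs : EqMean μ ν ∨ ∀ᵐ x ∂μ, 0 ≤ h₁ x ∧ 0 ≤ h₂ x) :
    cost P φ ψ h₁ = cost P φ ψ h₂ := by
  rw [cost_eq hφ hψ hh₁, cost_eq hφ hψ hh₂]
  refine lintegral_congr_ae ?_
  have hi1 := integrable_fst hμ hP
  have hi2 := integrable_snd hν hP
  have hd := drift_nonneg hi1 hi2 hP.2
  have hdd : ∀ᵐ x ∂P.fst, drift P x = 0 ∨ (0 ≤ drift P x ∧ 0 ≤ h₁ x ∧ 0 ≤ h₂ x) := by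
    rcases hs with hs | hs
    · have := drift_eq_zero hμ hν hP hs
      rw [← fst_eq hP] at this
      filter_upwards [this] with x hx using Or.inl hx
    · rw [← fst_eq hP] at hs
      filter_upwards [hd, hs] with x hx hx2 using Or.inr ⟨hx, hx2⟩
  filter_upwards [ae_ae g1, ae_ae g2, ae_integrable_snd hi2, hdd] with x e1 e2 e3 e4
  unfold costAt drift
  refine slope_indep _ e3 x ?_ ?_ e1 e2 e4
  · exact (measurable_gain hφ hψ hh₁).comp measurable_prodMk_left
  · refine Eventually.of_forall fun y => ?_
    simp only [gain]; ring

/-- For integrable data the cost is the usual dual value. -/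
lemma cost_of_integrable [IsFiniteMeasure P] (hμ : Integrable (fun x : ℝ => x) μ)
    (hν : Integrable (fun x : ℝ => x) ν)
    (hP : IsSupermartingaleCoupling P μ ν) {φ ψ h : ℝ → ℝ}
    (hφ : Measurable φ) (hψ : Measurable ψ) (hh : Measurable h)
    (iφ : Integrable φ μ) (iψ : Integrable ψ ν) {K : ℝ} (hK : ∀ x, |h x| ≤ K)
    (g1 : ∀ᵐ p ∂P, 0 ≤ gain φ ψ h p) (hs : EqMean μ ν ∨ ∀ᵐ x ∂μ, 0 ≤ h x) :
    cost P φ ψ h = ENNReal.ofReal (∫ x, φ x ∂μ + ∫ y, ψ y ∂ν) := by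
  have hi1 := integrable_fst hμ hP
  have hi2 := integrable_snd hν hP
  have j1 : Integrable (fun p : ℝ × ℝ => φ p.1) P := by
    rw [← hP.1.1] at iφ; exact iφ.comp_measurable measurable_fst
  have j2 : Integrable (fun p : ℝ × ℝ => ψ p.2) P := by
    rw [← hP.1.2] at iψ; exact iψ.comp_measurable measurable_snd
  have j3 : Integrable (fun p : ℝ × ℝ => h p.1 * (p.2 - p.1)) P :=
    (hi2.sub hi1).bdd_mul (c := K) (hh.comp measurable_fst).aestronglyMeasurable
      (Eventually.of_forall fun p => hK p.1)
  have j12 : Integrable (fun p : ℝ × ℝ => φ p.1 + ψ p.2) P := j1.add j2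
  have jg : Integrable (gain φ ψ h) P := j12.add j3
  have jd : Integrable (fun x => h x * drift P x) P.fst :=
    (integrable_drift hi1 hi2).bdd_mul (c := K) hh.aestronglyMeasurable
      (Eventually.of_forall fun p => hK p)
  have e3 : ∫ p, h p.1 * (p.2 - p.1) ∂P = - ∫ x, h x * drift P x ∂P.fst := by
    rw [← Measure.integral_condKernel j3, ← integral_neg]
    refine integral_congr_ae (Eventually.of_forall fun x => ?_)
    simp only [drift]
    rw [integral_const_mul, ← mul_neg, ← integral_neg]
    simp
  have eg : ∫ p, gain φ ψ h p ∂P =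
      ∫ x, φ x ∂μ + ∫ y, ψ y ∂ν - ∫ x, h x * drift P x ∂P.fst := by
    unfold gain
    rw [integral_add j12 j3, integral_add j1 j2, e3, integral_fst hP hφ, integral_snd hP hψ]
    ring
  have hd := drift_nonneg hi1 hi2 hP.2
  have ed : ∫⁻ x, ENNReal.ofReal (h x) * ENNReal.ofReal (drift P x) ∂P.fst =
      ENNReal.ofReal (∫ x, h x * drift P x ∂P.fst) ∧ 0 ≤ ∫ x, h x * drift P x ∂P.fst := by
    rcases hs with hs | hs
    · have h0 := drift_eq_zero hμ hν hP hs
      rw [← fst_eq hP] at h0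
      have z1 : ∫ x, h x * drift P x ∂P.fst = 0 := by
        refine integral_eq_zero_of_ae ?_
        filter_upwards [h0] with x hx; simp [hx]
      refine ⟨?_, z1.ge⟩
      rw [z1, ENNReal.ofReal_zero]
      rw [lintegral_eq_zero_iff' (by
        exact ((hh.ennreal_ofReal).mul (measurable_drift.ennreal_ofReal)).aemeasurable)]
      filter_upwards [h0] with x hx; simp [hx]
    · rw [← fst_eq hP] at hs
      have nn : 0 ≤ᵐ[P.fst] fun x => h x * drift P x := by
        filter_upwards [hs, hd] with x a b using mul_nonneg a b
      refine ⟨?_, integral_nonneg_of_ae nn⟩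
      rw [ofReal_integral_eq_lintegral_ofReal jd nn]
      refine lintegral_congr_ae ?_
      filter_upwards [hs] with x a
      rw [ENNReal.ofReal_mul a]
  unfold cost
  rw [← ofReal_integral_eq_lintegral_ofReal jg g1, ed.1,
    ← ENNReal.ofReal_add (integral_nonneg_of_ae g1) ed.2, eg]
  congr 1; ring

/-- A retraction of the line onto a part of `I` on which concave functions are Lipschitz. -/
structure Clip (up : Prop) (I : Set ℝ) (c : ℝ → ℝ) : Prop where
  m : Measurable c
  mem : ∀ y, c y ∈ I
  ord : ∀ x y, c x < c y → x ≤ c x ∧ c y ≤ y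
  grow : ∃ K, ∀ y, |c y| ≤ |y| + K
  lo : ∃ a ∈ I, ∀ y, a ≤ c y
  hi : up ∨ ∃ b ∈ I, ∀ y, c y ≤ b
  le : up → ∀ x, x ≤ c x

lemma Moder.anti {I E : Set ℝ} {ζ σ : ℝ → ℝ} (Z : Moder I E ζ σ) {x y : ℝ} (hx : x ∈ I)
    (hy : y ∈ I) (hxy : x ≤ y) : σ y ≤ σ x := by
  rcases hxy.eq_or_lt with e | e
  · rw [e]
  have e1 := Z.sg x hx y (Z.IE hy)
  have e2 := Z.sg y hy x (Z.IE hx)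
  by_contra hcon
  push Not at hcon
  nlinarith

/-- The payoff of the clipped position is nonnegative and below the payoff of the original one. -/
lemma clip_gain {up : Prop} {I E : Set ℝ} {ζ σ c : ℝ → ℝ} (Z : Moder I E ζ σ) (C : Clip up I c)
    {x y : ℝ} (hx : x ∈ I) (hy : y ∈ E) :
    let T : ℝ → ℝ → ℝ := fun u y => ζ u + σ u * (y - u)
    0 ≤ T (c x) y - T (c y) y ∧ T (c x) y - T (c y) y ≤ T x y - ζ y := by
  intro T
  have hcx := C.mem x
  have hcy := C.mem y
  have a1 := Z.sg (c x) hcx (c y) (Z.IE hcy)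
  have a3 := Z.sg (c y) hcy y hy
  have a4 := Z.sg x hx y hy
  have a5 := Z.sg x hx (c x) (Z.IE hcx)
  simp only [T]
  rcases lt_trichotomy (c x) (c y) with h | h | h
  · obtain ⟨b1, b2⟩ := C.ord x y h
    have s1 := Z.anti hcx hcy h.le
    have s2 := Z.anti hx hcx b1
    constructor
    · nlinarith
    · nlinarith
  · rw [h]; constructor <;> linarith
  · obtain ⟨b1, b2⟩ := C.ord y x h
    have s1 := Z.anti hcy hcx h.le
    have s2 := Z.anti hcx hx b2
    constructor
    · nlinarith
    · nlinarith

lemma exists_seq_atBot {I : Set ℝ} (hoc : I.OrdConnected) (hne : I.Nonempty) :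
    ∃ a : ℕ → ℝ, (∀ n, a n ∈ I) ∧ ∀ x ∈ I, ∀ᶠ n in atTop, a n ≤ x := by
  have := hne.to_subtype
  have : OrderTopology I := orderTopology_of_ordConnected
  obtain ⟨u, hu⟩ := exists_seq_tendsto (atBot : Filter I)
  exact ⟨fun n => u n, fun n => (u n).2, fun x hx => (tendsto_atBot.1 hu ⟨x, hx⟩).mono fun n h => h⟩

lemma exists_seq_atTop {I : Set ℝ} (hoc : I.OrdConnected) (hne : I.Nonempty) :
    ∃ a : ℕ → ℝ, (∀ n, a n ∈ I) ∧ ∀ x ∈ I, ∀ᶠ n in atTop, x ≤ a n := by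
  have := hne.to_subtype
  have : OrderTopology I := orderTopology_of_ordConnected
  obtain ⟨u, hu⟩ := exists_seq_tendsto (atTop : Filter I)
  exact ⟨fun n => u n, fun n => (u n).2, fun x hx => (tendsto_atTop.1 hu ⟨x, hx⟩).mono fun n h => h⟩

/-- Points of the closure outside an interval lie on one side of it. -/
lemma side {I : Set ℝ} (hoc : I.OrdConnected) {y : ℝ} (hy : y ∉ I) :
    (∀ x ∈ I, x < y) ∨ (∀ x ∈ I, y < x) := by
  by_contra hcon
  push Not at hcon
  obtain ⟨⟨a, ha, hya⟩, ⟨b, hb, hby⟩⟩ := hcon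
  exact hy (hoc.out hb ha ⟨hby, hya⟩)

/-- Clips exhausting `I`. -/
lemma exists_clips {I : Set ℝ} (hoc : I.OrdConnected) (hne : I.Nonempty) {up : Prop}
    (hup : up → ∀ x ∈ I, Ici x ⊆ I) :
    ∃ c : ℕ → ℝ → ℝ, (∀ n, Clip up I (c n)) ∧ (∀ x ∈ I, ∀ᶠ n in atTop, c n x = x) ∧
      (∀ y ∈ closure I, Tendsto (fun n => c n y) atTop (𝓝 y)) ∧
      (∀ y ∈ closure I, y ∉ I → ∀ t ∈ I, ∀ᶠ n in atTop,
        (t < y ∧ t ≤ c n y ∧ c n y ≤ y) ∨ (y < t ∧ c n y ≤ t ∧ y ≤ c n y)) := by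
  obtain ⟨a, ha, hat⟩ := exists_seq_atBot hoc hne
  obtain ⟨b, hb, hbt⟩ := exists_seq_atTop hoc hne
  classical
  have hcl_lo : ∀ y ∈ closure I, (∀ x ∈ I, y < x) → ∀ r > y, ∃ x ∈ I, x < r := by
    intro y hy hlt r hr
    obtain ⟨x, hx, hxI⟩ := mem_closure_iff.1 hy (Iio r) isOpen_Iio hr
    exact ⟨x, hxI, hx⟩
  have hcl_hi : ∀ y ∈ closure I, (∀ x ∈ I, x < y) → ∀ r < y, ∃ x ∈ I, r < x := by
    intro y hy hlt r hr
    obtain ⟨x, hx, hxI⟩ := mem_closure_iff.1 hy (Ioi r) isOpen_Ioi hr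
    exact ⟨x, hxI, hx⟩
  set c : ℕ → ℝ → ℝ := fun n y => if up then max (a n) y else max (a n) (min (b n) y) with hc
  have hclip : ∀ n, Clip up I (c n) := by
    intro n
    by_cases hu : up
    · have e : c n = fun y => max (a n) y := by ext y; simp [hc, hu]
      rw [e]
      refine ⟨by fun_prop, fun y => hup hu _ (ha n) (mem_Ici.2 (le_max_left _ _)), fun x y hxy => ?_, ?_, ?_,
        Or.inl hu, fun _ x => le_max_right _ _⟩
      · refine ⟨le_max_right _ _, ?_⟩
        rcases le_total (a n) y with h | h
        · simp [h]
        · have hxy' : max (a n) x < max (a n) y := hxy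
          rw [max_eq_left h] at hxy'
          exact absurd hxy' (not_lt.2 (le_max_left _ _))
      · refine ⟨|a n|, fun y => ?_⟩
        rcases max_choice (a n) y with h | h <;> rw [h]
        · linarith [abs_nonneg y]
        · linarith [abs_nonneg (a n)]
      · exact ⟨a n, ha n, fun y => le_max_left _ _⟩
    · have e : c n = fun y => max (a n) (min (b n) y) := by ext y; simp [hc, hu]
      rw [e]
      refine ⟨by fun_prop, fun y => ?_, fun x y hxy => ?_, ?_, ?_, Or.inr ?_, fun h => absurd h hu⟩
      · rcases le_total (a n) (min (b n) y) with h | h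
        · rw [max_eq_right h]
          exact hoc.out (ha n) (hb n) ⟨h, min_le_left _ _⟩
        · rw [max_eq_left h]; exact ha n
      · have h1 : min (b n) x < min (b n) y := by
          by_contra hcon
          push Not at hcon
          exact absurd hxy (not_lt.2 (max_le_max le_rfl hcon))
        have h2 : a n < min (b n) y := by
          by_contra hcon
          push Not at hcon
          simp only [max_eq_left hcon] at hxy
          exact absurd hxy (not_lt.2 (le_max_left _ _))
        constructor
        · refine le_trans ?_ (le_max_right _ _)
          by_contra hcon
          push Not at hcon
          rcases le_total (b n) x with h | h
          · rw [min_eq_left h] at h1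
            exact absurd h1 (not_lt.2 (min_le_left _ _))
          · rw [min_eq_right h] at hcon; exact lt_irrefl _ hcon
        · simp only [max_eq_right h2.le]; exact min_le_right _ _
      · refine ⟨|a n| + |b n|, fun y => ?_⟩
        rcases max_choice (a n) (min (b n) y) with h | h <;> rw [h]
        · linarith [abs_nonneg y, abs_nonneg (b n)]
        · rcases min_choice (b n) y with h | h <;> rw [h]
          · linarith [abs_nonneg (a n), abs_nonneg y]
          · linarith [abs_nonneg (a n), abs_nonneg (b n)]
      · exact ⟨a n, ha n, fun y => le_max_left _ _⟩
      · rcases le_total (a n) (b n) with h | h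
        · exact ⟨b n, hb n, fun y => max_le h (min_le_left _ _)⟩
        · exact ⟨a n, ha n, fun y => max_le le_rfl ((min_le_left _ _).trans h)⟩
  -- points below (above) all of `I` are clipped to the current left (right) end
  have hlo : ∀ y, (∀ x ∈ I, y < x) → ∀ n, c n y = a n := by
    intro y hy n
    by_cases hu : up
    · simp [hc, hu, (hy _ (ha n)).le]
    · simp [hc, hu, (hy _ (ha n)).le]
  have hhi : ∀ y, (∀ x ∈ I, x < y) → ∀ n, b n ≤ c n y ∧ c n y ≤ y := by
    intro y hy n
    by_cases hu : up
    · exact absurd (hup hu _ (ha n) (hy _ (ha n)).le) (fun h => lt_irrefl _ (hy y h))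
    · simp [hc, hu, (hy _ (ha n)).le, (hy _ (hb n)).le]
  have hmem : ∀ x ∈ I, ∀ᶠ n in atTop, c n x = x := by
    intro x hx
    filter_upwards [hat x hx, hbt x hx] with n h1 h2
    by_cases hu : up
    · simp [hc, hu, h1]
    · simp [hc, hu, h1, h2]
  refine ⟨c, hclip, hmem, ?_, ?_⟩
  · intro y hy
    by_cases hyI : y ∈ I
    · exact tendsto_const_nhds.congr' ((hmem y hyI).mono fun n h => h.symm)
    rw [tendsto_order]
    rcases side hoc hyI with hs | hs
    · constructor
      · intro r hr
        obtain ⟨x, hx, hrx⟩ := hcl_hi y hy hs r hr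
        filter_upwards [hbt x hx] with n hn
        exact hrx.trans_le (hn.trans (hhi y hs n).1)
      · intro r hr
        exact Eventually.of_forall fun n => (hhi y hs n).2.trans_lt hr
    · constructor
      · intro r hr
        exact Eventually.of_forall fun n => by rw [hlo y hs n]; exact hr.trans (hs _ (ha n))
      · intro r hr
        obtain ⟨x, hx, hrx⟩ := hcl_lo y hy hs r hr
        filter_upwards [hat x hx] with n hn
        rw [hlo y hs n]; exact hn.trans_lt hrx
  · intro y hy hyI t ht
    rcases side hoc hyI with hs | hs
    · filter_upwards [hbt t ht] with n hn
      exact Or.inl ⟨hs t ht, hn.trans (hhi y hs n).1, (hhi y hs n).2⟩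
    · filter_upwards [hat t ht] with n hn
      rw [hlo y hs n]
      exact Or.inr ⟨hs t ht, hn, (hs _ (ha n)).le⟩

end

/-! ### Independence of the price from the coupling -/

section

lemma tendsto_lintegral_of_le {α : Type*} [MeasurableSpace α] {ρ : Measure α}
    {F : ℕ → α → ℝ≥0∞} {G : α → ℝ≥0∞} (hm : ∀ n, Measurable (F n))
    (hle : ∀ n, ∀ᵐ a ∂ρ, F n a ≤ G a)
    (ht : ∀ᵐ a ∂ρ, Tendsto (fun n => F n a) atTop (𝓝 (G a))) :
    Tendsto (fun n => ∫⁻ a, F n a ∂ρ) atTop (𝓝 (∫⁻ a, G a ∂ρ)) := by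
  refine tendsto_of_le_liminf_of_limsup_le ?_ ?_
  · calc ∫⁻ a, G a ∂ρ = ∫⁻ a, liminf (fun n => F n a) atTop ∂ρ :=
        lintegral_congr_ae (ht.mono fun a h => h.liminf_eq.symm)
      _ ≤ _ := lintegral_liminf_le hm
  · refine (limsup_le_limsup (Eventually.of_forall fun n => lintegral_mono_ae (hle n))).trans ?_
    simp

lemma Irr.univ_ne_zero {μ ν : Measure ℝ} {P₀ : Measure (ℝ × ℝ)} {I : Set ℝ} (H : Irr μ ν P₀ I) :
    μ ≠ 0 := by
  intro h0
  obtain ⟨s, hs⟩ := H.ne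
  have : P₀ = 0 := by
    have e := H.cpl.1.1
    rw [h0] at e
    exact (Measure.map_eq_zero_iff measurable_fst.aemeasurable).1 e
  have hc := H.cross s hs
  rw [this] at hc
  simp at hc

lemma nonempty_of_ae {μ : Measure ℝ} (h : μ ≠ 0) {A : Set ℝ} (hA : ∀ᵐ x ∂μ, x ∈ A) :
    A.Nonempty := by
  by_contra hcon
  rw [not_nonempty_iff_eq_empty] at hcon
  rw [hcon] at hA
  simp only [mem_empty_iff_false, ae_iff, not_false_eq_true, setOf_true] at hA
  exact h (Measure.measure_univ_eq_zero.1 hA)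

/-- The tangent value of a clipped concave function has linear growth. -/
lemma clip_growth {up : Prop} {I E : Set ℝ} {ζ σ c : ℝ → ℝ} (Z : Moder I E ζ σ) (C : Clip up I c)
    (hs : up → ∀ x ∈ I, 0 ≤ σ x) :
    ∃ K L : ℝ, (∀ y, |σ (c y)| ≤ K) ∧ ∀ y, |ζ (c y) + σ (c y) * (y - c y)| ≤ L + L * |y| := by
  obtain ⟨a, ha, hac⟩ := C.lo
  obtain ⟨N, hN⟩ := C.grow
  have hσ : ∃ K : ℝ, ∀ y, |σ (c y)| ≤ K := by
    rcases C.hi with hu | ⟨b, hb, hbc⟩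
    · refine ⟨σ a, fun y => ?_⟩
      rw [abs_of_nonneg (hs hu _ (C.mem y))]
      exact Z.anti ha (C.mem y) (hac y)
    · refine ⟨|σ a| + |σ b|, fun y => ?_⟩
      have e1 := Z.anti ha (C.mem y) (hac y)
      have e2 := Z.anti (C.mem y) hb (hbc y)
      rw [abs_le]
      constructor
      · linarith [neg_abs_le (σ b), abs_nonneg (σ a)]
      · linarith [le_abs_self (σ a), abs_nonneg (σ b)]
  obtain ⟨K, hK⟩ := hσ
  have hK0 : 0 ≤ K := (abs_nonneg _).trans (hK 0)
  set K' := K + |σ a| with hK'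
  have hKK : K ≤ K' := by linarith [abs_nonneg (σ a)]
  have hN0 : 0 ≤ N := by have := hN 0; simp at this; exact (abs_nonneg _).trans this
  refine ⟨K, |ζ a| + K' * (|N| + |a|) + 3 * K' + K' * N, hK, fun y => ?_⟩
  have e1 := Z.sg a ha (c y) (Z.IE (C.mem y))
  have e2 := Z.sg (c y) (C.mem y) a (Z.IE ha)
  have hd : |c y - a| ≤ |y| + N + |a| := (abs_sub _ _).trans (by linarith [hN y])
  have hζ : |ζ (c y) - ζ a| ≤ K' * |c y - a| := by
    have b1 : σ a * (c y - a) ≤ K' * |c y - a| := by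
      refine (le_abs_self _).trans ?_
      rw [abs_mul]
      exact mul_le_mul_of_nonneg_right (by linarith) (abs_nonneg _)
    have b2 : σ (c y) * (a - c y) ≤ K' * |c y - a| := by
      refine (le_abs_self _).trans ?_
      rw [abs_mul, abs_sub_comm a]
      exact mul_le_mul_of_nonneg_right ((hK y).trans hKK) (abs_nonneg _)
    rw [abs_le]; constructor <;> linarith
  have hσ2 : |σ (c y) * (y - c y)| ≤ K' * (2 * |y| + N) := by
    rw [abs_mul]
    have : |y - c y| ≤ 2 * |y| + N := (abs_sub _ _).trans (by linarith [hN y])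
    exact mul_le_mul ((hK y).trans hKK) this (abs_nonneg _) (by linarith)
  have t1 : |ζ (c y) + σ (c y) * (y - c y)| ≤
      |ζ a| + |ζ (c y) - ζ a| + |σ (c y) * (y - c y)| := by
    have : ζ (c y) + σ (c y) * (y - c y) = ζ a + (ζ (c y) - ζ a) + σ (c y) * (y - c y) := by ring
    rw [this]
    exact (abs_add_le _ _).trans (by linarith [abs_add_le (ζ a) (ζ (c y) - ζ a)])
  have t2 : K' * |c y - a| ≤ K' * (|y| + N + |a|) :=
    mul_le_mul_of_nonneg_left hd (by linarith)
  have q1 := abs_nonneg (ζ a)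
  have q2 : 0 ≤ K' := by linarith
  have q3 : 0 ≤ |N| := abs_nonneg N
  have q4 : 0 ≤ |a| := abs_nonneg a
  have q5 : 0 ≤ |y| := abs_nonneg y
  have q6 : N ≤ |N| := le_abs_self N
  have r1 : 0 ≤ (|ζ a| + K' * (|N| + |a|) + K' * N) * |y| := by positivity
  have r2 : K' * N ≤ K' * |N| := mul_le_mul_of_nonneg_left q6 q2
  nlinarith

variable {P P' P₀ : Measure (ℝ × ℝ)} {μ ν : Measure ℝ} {I : Set ℝ}

/-- The price of the concave part, computed as a limit of prices of integrable positions. The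
limit does not depend on the coupling. -/
lemma cost_moder_indep (H : Irr μ ν P₀ I) [IsFiniteMeasure P] [IsFiniteMeasure P'] {E : Set ℝ}
    {ζ σ : ℝ → ℝ} (Z : Moder I E ζ σ) (hE : E ⊆ closure I) (νE : ∀ᵐ y ∂ν, y ∈ E)
    (hs : EqMean μ ν ∨ ∀ x ∈ I, 0 ≤ σ x)
    (hP : IsSupermartingaleCoupling P μ ν) (hP' : IsSupermartingaleCoupling P' μ ν) :
    cost P ζ (fun y => - ζ y) σ = cost P' ζ (fun y => - ζ y) σ := by
  have fμ := H.fμ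
  have fν := H.fν
  obtain ⟨c, hc, hcx, hct, hcb⟩ := exists_clips H.oc H.ne (up := ¬ EqMean μ ν)
    (fun h => H.up.resolve_left h)
  have hs' : ¬ EqMean μ ν → ∀ x ∈ I, 0 ≤ σ x := fun h => hs.resolve_left h
  set Zm : ℕ → ℝ → ℝ := fun m y => ζ (c m y) + σ (c m y) * (y - c m y) with hZm
  set Sm : ℕ → ℝ → ℝ := fun m x => σ (c m x) with hSm
  have mZ : ∀ m, Measurable (Zm m) := fun m =>
    (Z.mζ.comp (hc m).m).add ((Z.mσ.comp (hc m).m).mul (measurable_id.sub (hc m).m))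
  have mS : ∀ m, Measurable (Sm m) := fun m => Z.mσ.comp (hc m).m
  have iZ : ∀ (ρ : Measure ℝ) [IsFiniteMeasure ρ], Integrable (fun x : ℝ => x) ρ → ∀ m,
      Integrable (Zm m) ρ := by
    intro ρ _ hρ m
    obtain ⟨K, L, -, hL⟩ := clip_growth Z (hc m) hs'
    refine Integrable.mono' ((integrable_const L).add (hρ.abs.const_mul L))
      (mZ m).aestronglyMeasurable (Eventually.of_forall fun y => ?_)
    exact hL y
  -- inside `I` the tangent values are eventually constant; at an endpoint of `I` belonging to `E`
  -- upper semicontinuity is needed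
  have hZt : ∀ y ∈ E, Tendsto (fun m => Zm m y) atTop (𝓝 (ζ y)) := by
    intro y hy
    by_cases hyI : y ∈ I
    · refine tendsto_const_nhds.congr' ?_
      filter_upwards [hcx y hyI] with m hm
      simp [hZm, hm]
    rw [tendsto_order]
    constructor
    · intro r hr
      exact Eventually.of_forall fun m => hr.trans_le (Z.sg _ ((hc m).mem y) y hy)
    · intro r hr
      obtain ⟨a, b, hab, hall⟩ := Z.usc y hy ((r - ζ y) / 2) (by linarith)
      obtain ⟨t, ht⟩ := H.ne
      have lim : Tendsto (fun m => a + b * c m y + σ t * (y - c m y)) atTop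
          (𝓝 (a + b * y + σ t * (y - y))) :=
        ((hct y (hE hy)).const_mul b |>.const_add a).add
          (((hct y (hE hy)).const_sub y).const_mul (σ t))
      have hlt : a + b * y + σ t * (y - y) < r := by
        rw [sub_self, mul_zero, add_zero]; linarith
      filter_upwards [lim.eventually_lt_const hlt, hcb y (hE hy) hyI t ht] with m h1 h2
      refine lt_of_le_of_lt ?_ h1
      have hm := hall _ ((hc m).mem y)
      simp only [hZm]
      rcases h2 with ⟨-, h3, h4⟩ | ⟨-, h3, h4⟩
      · have := Z.anti ht ((hc m).mem y) h3
        nlinarith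
      · have := Z.anti ((hc m).mem y) ht h3
        nlinarith
  have key : ∀ (W : Measure (ℝ × ℝ)) [IsFiniteMeasure W], IsSupermartingaleCoupling W μ ν →
      Tendsto (fun m => ENNReal.ofReal (∫ x, Zm m x ∂μ + ∫ y, - Zm m y ∂ν)) atTop
        (𝓝 (cost W ζ (fun y => - ζ y) σ)) := by
    intro W _ hW
    have geq : ∀ m (p : ℝ × ℝ), gain (Zm m) (fun y => - Zm m y) (Sm m) p =
        (ζ (c m p.1) + σ (c m p.1) * (p.2 - c m p.1)) -
          (ζ (c m p.2) + σ (c m p.2) * (p.2 - c m p.2)) := by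
      intro m p; simp only [gain, hZm, hSm]; ring
    have geq2 : ∀ p : ℝ × ℝ, gain ζ (fun y => - ζ y) σ p =
        (ζ p.1 + σ p.1 * (p.2 - p.1)) - ζ p.2 := by
      intro p; simp only [gain]; ring
    have aeP : ∀ᵐ p ∂W, p.1 ∈ I ∧ p.2 ∈ E := (ae_fst hW H.μI).and (ae_snd hW νE)
    have hcost : ∀ m, cost W (Zm m) (fun y => - Zm m y) (Sm m) =
        ENNReal.ofReal (∫ x, Zm m x ∂μ + ∫ y, - Zm m y ∂ν) := by
      intro m
      obtain ⟨K, L, hK, -⟩ := clip_growth Z (hc m) hs'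
      refine cost_of_integrable H.iμ H.iν hW (mZ m) (mZ m).neg (mS m) (iZ μ H.iμ m)
        (iZ ν H.iν m).neg (K := K) (fun x => hK x) ?_ ?_
      · filter_upwards [aeP] with p hp
        rw [geq]
        exact (clip_gain Z (hc m) hp.1 hp.2).1
      · exact hs.imp id fun h => Eventually.of_forall fun x => h _ ((hc m).mem x)
    simp_rw [← hcost]
    unfold cost
    refine Tendsto.add ?_ ?_
    · refine tendsto_lintegral_of_le
        (fun m => (measurable_gain (mZ m) (mZ m).neg (mS m)).ennreal_ofReal) (fun m => ?_) ?_
      · filter_upwards [aeP] with p hp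
        refine ENNReal.ofReal_le_ofReal ?_
        rw [geq, geq2]
        exact (clip_gain Z (hc m) hp.1 hp.2).2
      · filter_upwards [aeP] with p hp
        refine ENNReal.tendsto_ofReal ?_
        simp_rw [geq, geq2]
        refine Tendsto.sub ?_ (hZt p.2 hp.2)
        refine tendsto_const_nhds.congr' ?_
        filter_upwards [hcx p.1 hp.1] with m hm
        rw [hm]
    · have hμI := H.μI
      rw [← fst_eq hW] at hμI
      refine tendsto_lintegral_of_le
        (fun m => ((mS m).ennreal_ofReal).mul (measurable_drift.ennreal_ofReal)) (fun m => ?_) ?_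
      · by_cases hM : EqMean μ ν
        · have h0 := drift_eq_zero H.iμ H.iν hW hM
          rw [← fst_eq hW] at h0
          filter_upwards [h0] with x hx
          simp [hx]
        · filter_upwards [hμI] with x hx
          refine mul_le_mul_left (ENNReal.ofReal_le_ofReal ?_) _
          exact Z.anti hx ((hc m).mem x) ((hc m).le hM x)
      · filter_upwards [hμI] with x hx
        refine tendsto_const_nhds.congr' ?_
        filter_upwards [hcx x hx] with m hm
        simp [hSm, hm]
  exact tendsto_nhds_unique (key P hP) (key P' hP')

/-- Splitting of the price along a separating concave function. -/
lemma cost_split (H : Irr μ ν P₀ I) [IsFiniteMeasure P]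
    {f : ℝ × ℝ → ℝ≥0∞} {φ ψ h : ℝ → ℝ} {A B : Set ℝ} (F : Feas μ ν I f φ ψ h A B)
    {ζ σ : ℝ → ℝ} (Z : Moder I (I ∪ B) ζ σ)
    (h1 : ∀ x ∈ A, ∀ y ∈ I ∪ B, ζ y ≤ φ x + h x * (y - x))
    (h2 : ∀ y ∈ B, - ψ y ≤ ζ y) (hs : EqMean μ ν ∨ ∀ x ∈ I, 0 ≤ σ x)
    (hP : IsSupermartingaleCoupling P μ ν) :
    cost P φ ψ h = ∫⁻ x, ENNReal.ofReal (φ x - ζ x) ∂μ + ∫⁻ y, ENNReal.ofReal (ψ y + ζ y) ∂ν +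
      cost P ζ (fun y => - ζ y) σ := by
  have aeP : ∀ᵐ p ∂P, p.1 ∈ A ∧ p.2 ∈ B := (ae_fst hP F.μA).and (ae_snd hP F.νB)
  have mn : Measurable (fun y => - ζ y) := Z.mζ.neg
  have s1 : cost P φ ψ h = ∫⁻ y, ENNReal.ofReal (ψ y + ζ y) ∂ν + cost P φ (fun y => - ζ y) h := by
    unfold cost
    rw [← add_assoc]
    congr 1
    have m1 : Measurable (fun y => ENNReal.ofReal (ψ y + ζ y)) := (F.mψ.add Z.mζ).ennreal_ofReal
    have m2 : Measurable (fun p : ℝ × ℝ => ENNReal.ofReal (ψ p.2 + ζ p.2)) :=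
      m1.comp measurable_snd
    rw [← lintegral_snd hP m1, ← lintegral_add_left m2]
    refine lintegral_congr_ae ?_
    filter_upwards [aeP] with p hp
    have e1 := h1 p.1 hp.1 p.2 (Or.inr hp.2)
    have e2 := h2 p.2 hp.2
    rw [← ENNReal.ofReal_add (by linarith) (by simp only [gain]; linarith)]
    congr 1
    simp only [gain]; ring
  have g1 : ∀ᵐ p ∂P, 0 ≤ gain φ (fun y => - ζ y) h p := by
    filter_upwards [aeP] with p hp
    have e1 := h1 p.1 hp.1 p.2 (Or.inr hp.2)
    simp only [gain]; linarith
  have hφζ : ∀ x ∈ A, 0 ≤ φ x - ζ x := by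
    intro x hx
    have := h1 x hx x (Or.inl (F.AI hx))
    simp at this; linarith
  have g2 : ∀ᵐ p ∂P, 0 ≤ gain φ (fun y => - ζ y) σ p := by
    filter_upwards [aeP] with p hp
    have e1 := hφζ p.1 hp.1
    have e2 := Z.sg p.1 (F.AI hp.1) p.2 (Or.inr hp.2)
    simp only [gain]; linarith
  have s2 : cost P φ (fun y => - ζ y) h = cost P φ (fun y => - ζ y) σ := by
    refine cost_slope H.iμ H.iν hP F.mφ mn F.mh Z.mσ g1 g2 ?_
    by_cases hM : EqMean μ ν
    · exact Or.inl hM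
    · right
      filter_upwards [F.μA] with x hx
      exact ⟨(F.sgn.resolve_left hM) x hx, (hs.resolve_left hM) x (F.AI hx)⟩
  have s3 : cost P φ (fun y => - ζ y) σ =
      ∫⁻ x, ENNReal.ofReal (φ x - ζ x) ∂μ + cost P ζ (fun y => - ζ y) σ := by
    unfold cost
    rw [← add_assoc]
    congr 1
    have m1 : Measurable (fun x => ENNReal.ofReal (φ x - ζ x)) := (F.mφ.sub Z.mζ).ennreal_ofReal
    have m2 : Measurable (fun p : ℝ × ℝ => ENNReal.ofReal (φ p.1 - ζ p.1)) :=
      m1.comp measurable_fst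
    rw [← lintegral_fst hP m1, ← lintegral_add_left m2]
    refine lintegral_congr_ae ?_
    filter_upwards [aeP] with p hp
    have e1 := hφζ p.1 hp.1
    have e2 := Z.sg p.1 (F.AI hp.1) p.2 (Or.inr hp.2)
    rw [← ENNReal.ofReal_add e1 (by simp only [gain]; linarith)]
    congr 1
    simp only [gain]; ring
  rw [s1, s2, s3]; ring

lemma union_subset_closure {f : ℝ × ℝ → ℝ≥0∞} {φ ψ h : ℝ → ℝ} {A B : Set ℝ}
    (F : Feas μ ν I f φ ψ h A B) : I ∪ B ⊆ closure I := union_subset subset_closure F.BI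

/-- The price of a feasible position is the same under all supermartingale couplings. -/
lemma cost_indep (H : Irr μ ν P₀ I) [IsFiniteMeasure P] [IsFiniteMeasure P']
    {f : ℝ × ℝ → ℝ≥0∞} {φ ψ h : ℝ → ℝ} {A B : Set ℝ} (F : Feas μ ν I f φ ψ h A B)
    (hP : IsSupermartingaleCoupling P μ ν) (hP' : IsSupermartingaleCoupling P' μ ν) :
    cost P φ ψ h = cost P' φ ψ h := by
  obtain ⟨ζ, σ, Z, h1, h2, hs⟩ := exists_moder H F (nonempty_of_ae H.univ_ne_zero F.μA)
  rw [cost_split H F Z h1 h2 hs hP, cost_split H F Z h1 h2 hs hP',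
    cost_moder_indep H Z (union_subset_closure F) (F.νB.mono fun y hy => Or.inr hy) hs hP hP']

end

/-! ### Slope bounds on an irreducible piece -/

section

/-- A Markov type bound: if `G ≥ K W` on `S` and `∫ G ≤ b`, then `K` is bounded by a constant which
depends only on `b`, `W` and `S`, provided `W` is positive on a part of `S` of positive mass. -/
lemma mass_bound {α : Type*} [MeasurableSpace α] {ρ : Measure α} {S : Set α} (hS : MeasurableSet S)
    {W : α → ℝ≥0∞} (hW : Measurable W) (h0 : ρ {a | a ∈ S ∧ 0 < W a} ≠ 0) {b : ℝ≥0∞} (hb : b ≠ ⊤) :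
    ∃ C : ℝ, ∀ (K : ℝ) (G : α → ℝ≥0∞), (∀ᵐ a ∂ρ, a ∈ S → ENNReal.ofReal K * W a ≤ G a) →
      ∫⁻ a, G a ∂ρ ≤ b → K ≤ C := by
  set c := ∫⁻ a in S, W a ∂ρ with hc
  have hc0 : c ≠ 0 := by
    intro h
    rw [hc, lintegral_eq_zero_iff hW] at h
    rw [Filter.EventuallyEq, ae_restrict_iff' hS] at h
    apply h0
    refine measure_mono_null ?_ h
    intro a ha hcon
    exact ha.2.ne' (hcon ha.1)
  refine ⟨(b / c).toReal, fun K G hG hGb => ?_⟩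
  have e1 : ENNReal.ofReal K * c ≤ b := by
    rw [hc, ← lintegral_const_mul _ hW]
    refine le_trans ?_ ((setLIntegral_le_lintegral S G).trans hGb)
    exact lintegral_mono_ae ((ae_restrict_iff' hS).2 hG)
  have e2 : ENNReal.ofReal K ≤ b / c :=
    (ENNReal.le_div_iff_mul_le (Or.inl hc0) (Or.inr hb)).2 e1
  exact (ENNReal.ofReal_le_iff_le_toReal (ENNReal.div_ne_top hb hc0)).1 e2

/-- Concave functions on `I` with a supergradient, admissible in the decomposition of a position of
price at most `b`. -/
def MPair (μ ν : Measure ℝ) (P₀ : Measure (ℝ × ℝ)) [IsFiniteMeasure P₀] (I : Set ℝ) (b : ℝ≥0∞)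
    (ζ σ : ℝ → ℝ) : Prop :=
  ∃ E : Set ℝ, Moder I E ζ σ ∧ (∀ᵐ y ∂ν, y ∈ E) ∧ (EqMean μ ν ∨ ∀ x ∈ I, 0 ≤ σ x) ∧
    cost P₀ ζ (fun y => - ζ y) σ ≤ b

/-- The oscillation of the slope between `s` and `t` is bounded over all admissible pairs. -/
def Osc (μ ν : Measure ℝ) (P₀ : Measure (ℝ × ℝ)) [IsFiniteMeasure P₀] (I : Set ℝ) (b : ℝ≥0∞)
    (s t : ℝ) : Prop :=
  ∃ C : ℝ, ∀ ζ σ, MPair μ ν P₀ I b ζ σ → |σ s - σ t| ≤ C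

variable {μ ν : Measure ℝ} {P₀ : Measure (ℝ × ℝ)} {I : Set ℝ} {b : ℝ≥0∞}

section
variable [IsFiniteMeasure P₀]

lemma MPair.anti {ζ σ : ℝ → ℝ} (Z : MPair μ ν P₀ I b ζ σ) {x y : ℝ} (hx : x ∈ I)
    (hy : y ∈ I) (hxy : x ≤ y) : σ y ≤ σ x := by
  obtain ⟨E, hE, -⟩ := Z
  exact hE.anti hx hy hxy

lemma Osc.symm {s t : ℝ} (h : Osc μ ν P₀ I b s t) : Osc μ ν P₀ I b t s := by
  obtain ⟨C, hC⟩ := h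
  exact ⟨C, fun ζ σ Z => by rw [abs_sub_comm]; exact hC ζ σ Z⟩

lemma Osc.trans {s t u : ℝ} (h : Osc μ ν P₀ I b s t) (h' : Osc μ ν P₀ I b t u) :
    Osc μ ν P₀ I b s u := by
  obtain ⟨C, hC⟩ := h
  obtain ⟨C', hC'⟩ := h'
  exact ⟨C + C', fun ζ σ Z => (abs_sub_le _ (σ t) _).trans (add_le_add (hC ζ σ Z) (hC' ζ σ Z))⟩

lemma Osc.mono {u v s t : ℝ} (h : Osc μ ν P₀ I b u v) (hu : u ∈ I) (hv : v ∈ I) (hs : s ∈ I)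
    (ht : t ∈ I) (h1 : u ≤ s) (h2 : s ≤ v) (h3 : u ≤ t) (h4 : t ≤ v) : Osc μ ν P₀ I b s t := by
  obtain ⟨C, hC⟩ := h
  refine ⟨C, fun ζ σ Z => ?_⟩
  have := hC ζ σ Z
  have a1 := Z.anti hu hs h1
  have a2 := Z.anti hs hv h2
  have a3 := Z.anti hu ht h3
  have a4 := Z.anti ht hv h4
  have := (abs_le.1 this).2
  rw [abs_le]; constructor <;> linarith

/-- Mass jumping from the left of `u` over `[u, v]` has a payoff of at least the slope difference
times the overshoot, so a bound on the price bounds that difference. -/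
lemma osc_right (H : Irr μ ν P₀ I) (hb : b ≠ ⊤) {u v : ℝ} (hu : u ∈ I) (hv : v ∈ I) (huv : u ≤ v)
    (h0 : P₀ {p | p.1 ≤ u ∧ v < p.2} ≠ 0) : Osc μ ν P₀ I b u v := by
  have mS : MeasurableSet {p : ℝ × ℝ | p.1 ≤ u ∧ v < p.2} :=
    (measurableSet_le measurable_fst measurable_const).inter
      (measurableSet_lt measurable_const measurable_snd)
  obtain ⟨C, hC⟩ := mass_bound (ρ := P₀) (S := {p : ℝ × ℝ | p.1 ≤ u ∧ v < p.2}) mS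
    (W := fun p => ENNReal.ofReal (p.2 - v)) (by fun_prop) (b := b) (by
      convert h0 using 3
      ext p; simp +contextual) hb
  refine ⟨C, fun ζ σ Z => ?_⟩
  have han := Z.anti hu hv huv
  obtain ⟨E, hE, νE, hs, hc⟩ := Z
  rw [abs_of_nonneg (by linarith)]
  refine hC _ (fun p => ENNReal.ofReal (gain ζ (fun y => - ζ y) σ p)) ?_ (le_trans le_self_add hc)
  filter_upwards [ae_fst H.cpl H.μI, ae_snd H.cpl νE] with p hp1 hp2 hpS
  rw [← ENNReal.ofReal_mul (by linarith)]
  apply ENNReal.ofReal_le_ofReal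
  obtain ⟨q1, q2⟩ := hpS
  have e1 := hE.sg v hv _ hp2
  have e2 := hE.sg u hu v (hE.IE hv)
  have e3 := hE.sg _ hp1 u (hE.IE hu)
  have e4 := hE.anti hp1 hu q1
  simp only [gain]
  nlinarith

/-- The mirror image of `osc_right`: mass jumping from the right of `v` to the left of `u`. -/
lemma osc_left (H : Irr μ ν P₀ I) (hb : b ≠ ⊤) {u v : ℝ} (hu : u ∈ I) (hv : v ∈ I) (huv : u ≤ v)
    (h0 : P₀ {p | p.2 < u ∧ v ≤ p.1} ≠ 0) : Osc μ ν P₀ I b u v := by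
  have mS : MeasurableSet {p : ℝ × ℝ | p.2 < u ∧ v ≤ p.1} :=
    (measurableSet_lt measurable_snd measurable_const).inter
      (measurableSet_le measurable_const measurable_fst)
  obtain ⟨C, hC⟩ := mass_bound (ρ := P₀) (S := {p : ℝ × ℝ | p.2 < u ∧ v ≤ p.1}) mS
    (W := fun p => ENNReal.ofReal (u - p.2)) (by fun_prop) (b := b) (by
      convert h0 using 3
      ext p; simp +contextual) hb
  refine ⟨C, fun ζ σ Z => ?_⟩
  have han := Z.anti hu hv huv
  obtain ⟨E, hE, νE, hs, hc⟩ := Z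
  rw [abs_of_nonneg (by linarith)]
  refine hC _ (fun p => ENNReal.ofReal (gain ζ (fun y => - ζ y) σ p)) ?_ (le_trans le_self_add hc)
  filter_upwards [ae_fst H.cpl H.μI, ae_snd H.cpl νE] with p hp1 hp2 hpS
  rw [← ENNReal.ofReal_mul (by linarith)]
  apply ENNReal.ofReal_le_ofReal
  obtain ⟨q1, q2⟩ := hpS
  have e1 := hE.sg u hu _ hp2
  have e2 := hE.sg v hv u (hE.IE hu)
  have e3 := hE.sg _ hp1 v (hE.IE hv)
  have e4 := hE.anti hv hp1 q2
  simp only [gain]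
  nlinarith

/-- If some mass starting at or below `u` loses mean, the drift term of the price bounds the slopes
to the right of `u`. -/
lemma slope_bound (H : Irr μ ν P₀ I) (hb : b ≠ ⊤) {u : ℝ} (hu : u ∈ I)
    (h0 : μ {x | x ≤ u ∧ 0 < drift P₀ x} ≠ 0) :
    ∃ C : ℝ, ∀ ζ σ, MPair μ ν P₀ I b ζ σ → ∀ t ∈ I, u ≤ t → 0 ≤ σ t ∧ σ t ≤ C := by
  have hM : ¬ EqMean μ ν := by
    intro hM
    apply h0
    have := drift_eq_zero H.iμ H.iν H.cpl hM
    refine measure_mono_null ?_ this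
    intro x hx hcon
    exact hx.2.ne' hcon
  obtain ⟨C, hC⟩ := mass_bound (ρ := μ) (S := Iic u) measurableSet_Iic
    (W := fun x => ENNReal.ofReal (drift P₀ x)) (measurable_drift.ennreal_ofReal) (b := b) (by
      convert h0 using 3
      ext p; simp) hb
  refine ⟨C, fun ζ σ Z t ht hut => ?_⟩
  have han := Z.anti hu ht hut
  obtain ⟨E, hE, νE, hs, hc⟩ := Z
  have hs := hs.resolve_left hM
  refine ⟨hs t ht, han.trans ?_⟩
  refine hC _ (fun x => ENNReal.ofReal (σ x) * ENNReal.ofReal (drift P₀ x)) ?_ ?_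
  · filter_upwards [H.μI] with x hx hxu
    gcongr
    exact hE.anti hx hu hxu
  · rw [← fst_eq H.cpl]
    exact le_trans le_add_self hc

lemma osc_drift (H : Irr μ ν P₀ I) (hb : b ≠ ⊤) {u t : ℝ} (hu : u ∈ I) (ht : t ∈ I) (hut : u ≤ t)
    (h0 : μ {x | x ≤ u ∧ 0 < drift P₀ x} ≠ 0) : Osc μ ν P₀ I b u t := by
  obtain ⟨C, hC⟩ := slope_bound H hb hu h0
  refine ⟨C, fun ζ σ Z => ?_⟩
  have a1 := hC ζ σ Z u hu le_rfl
  have a2 := hC ζ σ Z t ht hut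
  rw [abs_le]; constructor <;> linarith

lemma drift_pos (H : Irr μ ν P₀ I) {A : Set ℝ} (hA : MeasurableSet A)
    (h : 0 < ∫ p in {p : ℝ × ℝ | p.1 ∈ A}, (p.1 - p.2) ∂P₀) :
    μ {x | x ∈ A ∧ 0 < drift P₀ x} ≠ 0 := by
  have h1 := integrable_fst H.iμ H.cpl
  have h2 := integrable_snd H.iν H.cpl
  rw [← prod_univ_eq, integral_sub h1.integrableOn h2.integrableOn, ← setIntegral_drift h1 h2 hA,
    fst_eq H.cpl] at h
  intro h0
  have : ∫ x in A, drift P₀ x ∂μ ≤ 0 := by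
    apply integral_nonpos_of_ae
    rw [Filter.EventuallyLE, ae_restrict_iff' hA]
    have : ∀ᵐ x ∂μ, ¬ (x ∈ A ∧ 0 < drift P₀ x) := by
      rw [ae_iff]; simpa using h0
    filter_upwards [this] with x hx hxA
    push Not at hx
    exact hx hxA
  linarith

lemma ne_zero_of_iUnion {α : Type*} [MeasurableSpace α] {ρ : Measure α} {S : Set α} (h : ρ S ≠ 0)
    {T : ℕ → Set α} (hT : S ⊆ ⋃ n, T n) : ∃ n, ρ (T n) ≠ 0 := by
  by_contra hcon
  push Not at hcon
  exact h (measure_mono_null hT (measure_iUnion_null hcon))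

lemma exists_delta {I : Set ℝ} (ho : IsOpen I) {s : ℝ} (hs : s ∈ I) :
    ∃ δ : ℕ → ℝ, (∀ n, 0 < δ n ∧ s - δ n ∈ I ∧ s + δ n ∈ I) ∧ ∀ ε > 0, ∃ n, δ n < ε := by
  obtain ⟨r, hr, hI⟩ := Metric.isOpen_iff.1 ho s hs
  refine ⟨fun n => r / (n + 2), fun n => ?_, fun ε hε => ?_⟩
  · have h1 : 0 < r / (n + 2 : ℝ) := by positivity
    have h2 : r / (n + 2 : ℝ) < r := by
      rw [div_lt_iff₀ (by positivity)]
      nlinarith [(Nat.cast_nonneg n : (0:ℝ) ≤ n)]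
    refine ⟨h1, hI ?_, hI ?_⟩ <;> rw [Metric.mem_ball, Real.dist_eq, abs_lt] <;>
      constructor <;> linarith
  · obtain ⟨n, hn⟩ := exists_nat_gt (r / ε)
    refine ⟨n, ?_⟩
    rw [div_lt_iff₀ hε] at hn
    rw [div_lt_iff₀ (by positivity)]
    nlinarith

/-- Each of the three alternatives of `Irr.cross` at `s` bounds the oscillation of the slopes on a
neighbourhood of `s`. -/
lemma osc_local (H : Irr μ ν P₀ I) (hb : b ≠ ⊤) {s : ℝ} (hs : s ∈ I) :
    ∃ u ∈ I, ∃ v ∈ I, u < s ∧ s < v ∧ Osc μ ν P₀ I b u v := by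
  have h1 := integrable_fst H.iμ H.cpl
  have h2 := integrable_snd H.iν H.cpl
  obtain ⟨δ, hδ, hδ0⟩ := exists_delta H.opn hs
  rcases H.cross s hs with hc | hc | hc
  · obtain ⟨n, hn⟩ := ne_zero_of_iUnion hc
      (T := fun n => {p : ℝ × ℝ | p.1 ≤ s - δ n ∧ s + δ n < p.2}) (by
        intro p hp
        obtain ⟨n, hn⟩ := hδ0 (min (s - p.1) (p.2 - s)) (lt_min (by linarith [hp.1]) (by linarith [hp.2]))
        rw [lt_min_iff] at hn
        exact mem_iUnion.2 ⟨n, by constructor <;> linarith⟩)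
    have d := hδ n
    exact ⟨_, d.2.1, _, d.2.2, by linarith, by linarith,
      osc_right H hb d.2.1 d.2.2 (by linarith) hn⟩
  · by_cases hc' : P₀ {p | p.2 < s ∧ s < p.1} = 0
    · have hat : P₀ {p | p.2 < s ∧ p.1 = s} ≠ 0 := by
        intro h0
        apply hc
        refine measure_mono_null ?_ (measure_union_null hc' h0)
        rintro p ⟨q1, q2⟩
        rcases q2.lt_or_eq with q | q
        · exact Or.inl ⟨q1, q⟩
        · exact Or.inr ⟨q1, q.symm⟩
      have hl : ∃ u ∈ I, u < s ∧ Osc μ ν P₀ I b u s := by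
        obtain ⟨n, hn⟩ := ne_zero_of_iUnion hat
          (T := fun n => {p : ℝ × ℝ | p.2 < s - δ n ∧ s ≤ p.1}) (by
            intro p hp
            obtain ⟨n, hn⟩ := hδ0 (s - p.2) (by linarith [hp.1])
            exact mem_iUnion.2 ⟨n, by linarith, hp.2.ge⟩)
        have d := hδ n
        exact ⟨_, d.2.1, by linarith, osc_left H hb d.2.1 hs (by linarith) hn⟩
      have hr : ∃ v ∈ I, s < v ∧ Osc μ ν P₀ I b s v := by
        by_cases hr0 : P₀ {p | p.1 = s ∧ s < p.2} = 0
        · have hpos : 0 < ∫ p in {p : ℝ × ℝ | p.1 ∈ ({s} : Set ℝ)}, (p.1 - p.2) ∂P₀ := by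
            have mS : MeasurableSet {p : ℝ × ℝ | p.1 ∈ ({s} : Set ℝ)} :=
              measurable_fst (measurableSet_singleton s)
            have hi : IntegrableOn (fun p : ℝ × ℝ => p.1 - p.2) {p : ℝ × ℝ | p.1 ∈ ({s} : Set ℝ)} P₀ :=
              (h1.sub h2).integrableOn
            rw [setIntegral_pos_iff_support_of_nonneg_ae _ hi]
            · refine lt_of_lt_of_le (pos_iff_ne_zero.2 hat) (measure_mono ?_)
              rintro p ⟨q1, q2⟩
              refine ⟨?_, q2⟩
              simp only [Function.mem_support, ne_eq]
              linarith
            · rw [Filter.EventuallyLE, ae_restrict_iff' mS]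
              have : ∀ᵐ p ∂P₀, ¬ (p.1 = s ∧ s < p.2) := by
                rw [ae_iff]; simpa using hr0
              filter_upwards [this] with p hp hps
              have hps : p.1 = s := hps
              push Not at hp
              have := hp hps
              simp only [Pi.zero_apply]; linarith
          have hd := drift_pos H (measurableSet_singleton s) hpos
          have d := hδ 0
          refine ⟨_, d.2.2, by linarith, osc_drift H hb hs d.2.2 (by linarith) ?_⟩
          intro h0
          apply hd
          refine measure_mono_null ?_ h0
          rintro x ⟨q1, q2⟩
          have q1 : x = s := q1
          exact ⟨q1.le, q2⟩
        · obtain ⟨n, hn⟩ := ne_zero_of_iUnion hr0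
            (T := fun n => {p : ℝ × ℝ | p.1 ≤ s ∧ s + δ n < p.2}) (by
              intro p hp
              obtain ⟨n, hn⟩ := hδ0 (p.2 - s) (by linarith [hp.2])
              exact mem_iUnion.2 ⟨n, hp.1.le, by linarith⟩)
          have d := hδ n
          exact ⟨_, d.2.2, by linarith, osc_right H hb hs d.2.2 (by linarith) hn⟩
      obtain ⟨u, hu, hus, o1⟩ := hl
      obtain ⟨v, hv, hvs, o2⟩ := hr
      exact ⟨u, hu, v, hv, hus, hvs, o1.trans o2⟩
    · obtain ⟨n, hn⟩ := ne_zero_of_iUnion hc'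
        (T := fun n => {p : ℝ × ℝ | p.2 < s - δ n ∧ s + δ n ≤ p.1}) (by
          intro p hp
          obtain ⟨n, hn⟩ := hδ0 (min (s - p.2) (p.1 - s))
            (lt_min (by linarith [hp.1]) (by linarith [hp.2]))
          rw [lt_min_iff] at hn
          exact mem_iUnion.2 ⟨n, by constructor <;> linarith⟩)
      have d := hδ n
      exact ⟨_, d.2.1, _, d.2.2, by linarith, by linarith,
        osc_left H hb d.2.1 d.2.2 (by linarith) hn⟩
  · have hd := drift_pos H (measurableSet_Iio (a := s)) hc
    obtain ⟨n, hn⟩ := ne_zero_of_iUnion hd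
      (T := fun n => {x : ℝ | x ≤ s - δ n ∧ 0 < drift P₀ x}) (by
        rintro x ⟨q1, q2⟩
        have q1 : x < s := q1
        obtain ⟨n, hn⟩ := hδ0 (s - x) (by linarith)
        exact mem_iUnion.2 ⟨n, by linarith, q2⟩)
    have d := hδ n
    exact ⟨_, d.2.1, _, d.2.2, by linarith, by linarith,
      osc_drift H hb d.2.1 d.2.2 (by linarith) hn⟩

/-- Slopes at any two points of `I` differ by a bounded amount. -/
lemma osc_all (H : Irr μ ν P₀ I) (hb : b ≠ ⊤) {s t : ℝ} (hs : s ∈ I) (ht : t ∈ I) :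
    Osc μ ν P₀ I b s t := by
  refine IsPreconnected.induction₂ H.oc.isPreconnected (Osc μ ν P₀ I b) ?_ ?_ ?_ hs ht
  · intro x hx
    obtain ⟨u, hu, v, hv, hux, hxv, o⟩ := osc_local H hb hx
    filter_upwards [mem_nhdsWithin_of_mem_nhds (Ioo_mem_nhds hux hxv), self_mem_nhdsWithin] with y hy hyI
    exact o.mono hu hv hx hyI hux.le hxv.le hy.1.le hy.2.le
  · intro x y z _ _ _ h h'; exact h.trans h'
  · intro x y _ _ h; exact h.symm

/-- Without equality of means the slopes themselves are bounded. -/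
lemma slope_all (H : Irr μ ν P₀ I) (hb : b ≠ ⊤) (hM : ¬ EqMean μ ν) {s : ℝ} (hs : s ∈ I) :
    ∃ C : ℝ, ∀ ζ σ, MPair μ ν P₀ I b ζ σ → |σ s| ≤ C := by
  have h1 := integrable_fst H.iμ H.cpl
  have h2 := integrable_snd H.iν H.cpl
  have hpos : 0 < ∫ p in {p : ℝ × ℝ | p.1 ∈ (univ : Set ℝ)}, (p.1 - p.2) ∂P₀ := by
    refine lt_of_le_of_ne (setIntegral_nonneg_of_super h1 h2 H.cpl.2 MeasurableSet.univ) ?_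
    intro h0
    simp only [mem_univ, setOf_true, Measure.restrict_univ] at h0
    rw [integral_sub h1 h2] at h0
    apply hM
    have e1 := integral_fst H.cpl (F := fun x => x) measurable_id
    have e2 := integral_snd H.cpl (F := fun x => x) measurable_id
    rw [e1, e2] at h0
    exact sub_eq_zero.1 h0.symm
  have hd := drift_pos H MeasurableSet.univ hpos
  obtain ⟨a, ha, hat⟩ := exists_seq_atTop H.oc H.ne
  have hd' : μ {x | x ∈ I ∧ 0 < drift P₀ x} ≠ 0 := by
    intro h0
    apply hd
    refine measure_mono_null ?_ (measure_union_null h0 (ae_iff.1 H.μI))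
    rintro x ⟨-, q⟩
    by_cases hx : x ∈ I
    · exact Or.inl ⟨hx, q⟩
    · exact Or.inr hx
  obtain ⟨n, hn⟩ := ne_zero_of_iUnion hd' (T := fun n => {x : ℝ | x ≤ a n ∧ 0 < drift P₀ x}) (by
    rintro x ⟨q1, q2⟩
    obtain ⟨n, hn⟩ := (hat x q1).exists
    exact mem_iUnion.2 ⟨n, hn, q2⟩)
  obtain ⟨C, hC⟩ := slope_bound H hb (ha n) hn
  obtain ⟨C', hC'⟩ := osc_all H hb hs (ha n)
  refine ⟨C + C', fun ζ σ Z => ?_⟩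
  have a1 := hC ζ σ Z _ (ha n) le_rfl
  have a2 := hC' ζ σ Z
  rw [abs_le] at a2 ⊢
  constructor <;> linarith [a2.1, a2.2]
end

end

/-! ### Normalised superhedges -/

section

variable {μ ν : Measure ℝ} {P₀ : Measure (ℝ × ℝ)} {I : Set ℝ}

/-- An affine function may be moved from one leg to the other without changing the price; a
nonconstant one only if the means agree. -/
lemma cost_shift [IsFiniteMeasure P₀] (H : Irr μ ν P₀ I) {φ ψ h : ℝ → ℝ} {c d t : ℝ}
    (hd : EqMean μ ν ∨ d = 0) :
    cost P₀ (fun x => φ x - (c + d * (x - t))) (fun y => ψ y + (c + d * (y - t)))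
      (fun x => h x - d) = cost P₀ φ ψ h := by
  unfold cost
  congr 1
  · refine lintegral_congr fun p => ?_
    congr 1
    simp only [gain]; ring
  · rcases hd with hM | hd
    · rw [fst_eq H.cpl]
      refine lintegral_congr_ae ?_
      filter_upwards [drift_eq_zero H.iμ H.iν H.cpl hM] with x hx
      simp [hx]
    · simp [hd]

lemma Feas.shift {f : ℝ × ℝ → ℝ≥0∞} {φ ψ h : ℝ → ℝ} {A B : Set ℝ} (F : Feas μ ν I f φ ψ h A B)
    {c d t : ℝ} (hd : EqMean μ ν ∨ d = 0) :
    Feas μ ν I f (fun x => φ x - (c + d * (x - t))) (fun y => ψ y + (c + d * (y - t)))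
      (fun x => h x - d) A B := by
  have e : gain (fun x => φ x - (c + d * (x - t))) (fun y => ψ y + (c + d * (y - t)))
      (fun x => h x - d) = gain φ ψ h := by
    funext p; simp only [gain]; ring
  have := F.mφ
  have := F.mψ
  have := F.mh
  refine ⟨by fun_prop, by fun_prop, by fun_prop, F.mA, F.mB, F.AI, F.BI, F.μA, F.νB, ?_, ?_, ?_⟩
  · rw [e]; exact F.nn
  · rw [e]; exact F.dom
  · rcases hd with hM | hd
    · exact Or.inl hM
    · simpa [hd] using F.sgn

lemma Feas.restrict {f : ℝ × ℝ → ℝ≥0∞} {φ ψ h : ℝ → ℝ} {A B A' B' : Set ℝ}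
    (F : Feas μ ν I f φ ψ h A B) (hA : A' ⊆ A) (hB : B' ⊆ B) (mA : MeasurableSet A')
    (mB : MeasurableSet B') (μA : ∀ᵐ x ∂μ, x ∈ A') (νB : ∀ᵐ y ∂ν, y ∈ B') :
    Feas μ ν I f φ ψ h A' B' :=
  ⟨F.mφ, F.mψ, F.mh, mA, mB, hA.trans F.AI, hB.trans F.BI, μA, νB,
    fun x hx y hy => F.nn x (hA hx) y (hB hy), fun x hx y hy => F.dom x (hA hx) y (hB hy),
    F.sgn.imp id fun h x hx => h x (hA hx)⟩

/-- Superhedges of `f` of price at most `β`, controlled by the fixed functions `C₁` and `C₂`. All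
conditions are convex. -/
structure InQ (μ ν : Measure ℝ) (P₀ : Measure (ℝ × ℝ)) [IsFiniteMeasure P₀] (I : Set ℝ)
    (A B : Set ℝ) (C₁ C₂ : ℝ → ℝ) (b : ℝ≥0∞) (f : ℝ × ℝ → ℝ≥0∞) (β : ℝ≥0∞)
    (q : (ℝ → ℝ) × (ℝ → ℝ) × (ℝ → ℝ)) : Prop where
  feas : Feas μ ν I f q.1 q.2.1 q.2.2 A B
  lo : ∀ x ∈ A, ∀ y ∈ I, - C₁ y ≤ q.1 x + q.2.2 x * (y - x)
  lo' : ∀ y ∈ B, - C₂ y ≤ q.2.1 y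
  hi : ∫⁻ x, ENNReal.ofReal (q.1 x - C₂ x) ∂μ ≤ b
  price : cost P₀ q.1 q.2.1 q.2.2 ≤ β

lemma InQ.mono [IsFiniteMeasure P₀] {A B : Set ℝ} {C₁ C₂ : ℝ → ℝ} {b : ℝ≥0∞}
    {f f' : ℝ × ℝ → ℝ≥0∞} {β β' : ℝ≥0∞} {q : (ℝ → ℝ) × (ℝ → ℝ) × (ℝ → ℝ)}
    (Q : InQ μ ν P₀ I A B C₁ C₂ b f β q) (hf : f' ≤ f) (hβ : β ≤ β') :
    InQ μ ν P₀ I A B C₁ C₂ b f' β' q := by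
  have F := Q.feas
  exact ⟨⟨F.mφ, F.mψ, F.mh, F.mA, F.mB, F.AI, F.BI, F.μA, F.νB, F.nn,
    fun x hx y hy => (hf _).trans (F.dom x hx y hy), F.sgn⟩, Q.lo, Q.lo', Q.hi, Q.price.trans hβ⟩

lemma ofReal_mid (a b : ℝ) : ENNReal.ofReal ((a + b) / 2) ≤
    (1 / 2 : ℝ≥0∞) * ENNReal.ofReal a + (1 / 2 : ℝ≥0∞) * ENNReal.ofReal b := by
  have e : (1 / 2 : ℝ≥0∞) = ENNReal.ofReal (1 / 2) := by
    rw [ENNReal.ofReal_div_of_pos two_pos]; simp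
  rw [e, ← ENNReal.ofReal_mul (by norm_num), ← ENNReal.ofReal_mul (by norm_num)]
  refine le_trans (le_of_eq ?_) ENNReal.ofReal_add_le
  congr 1; ring

lemma mid_le {a b c : ℝ≥0∞} (ha : a ≤ c) (hb : b ≤ c) :
    (1 / 2 : ℝ≥0∞) * a + (1 / 2 : ℝ≥0∞) * b ≤ c := by
  calc (1 / 2 : ℝ≥0∞) * a + (1 / 2 : ℝ≥0∞) * b ≤ (1 / 2 : ℝ≥0∞) * c + (1 / 2 : ℝ≥0∞) * c := by
        gcongr
    _ = c := by rw [← add_mul, ENNReal.add_halves, one_mul]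

lemma InQ.mid [IsFiniteMeasure P₀] {A B : Set ℝ} {C₁ C₂ : ℝ → ℝ} {b : ℝ≥0∞}
    {f : ℝ × ℝ → ℝ≥0∞} {β : ℝ≥0∞} {q r : (ℝ → ℝ) × (ℝ → ℝ) × (ℝ → ℝ)} (mC : Measurable C₂)
    (Q : InQ μ ν P₀ I A B C₁ C₂ b f β q) (Q' : InQ μ ν P₀ I A B C₁ C₂ b f β r) :
    InQ μ ν P₀ I A B C₁ C₂ b f β (fun x => (q.1 x + r.1 x) / 2, fun x => (q.2.1 x + r.2.1 x) / 2,
      fun x => (q.2.2 x + r.2.2 x) / 2) := by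
  have F := Q.feas
  have F' := Q'.feas
  have m1 := F.mφ
  have m2 := F.mψ
  have m3 := F.mh
  have m1' := F'.mφ
  have m2' := F'.mψ
  have m3' := F'.mh
  have eg : ∀ p, gain (fun x => (q.1 x + r.1 x) / 2) (fun x => (q.2.1 x + r.2.1 x) / 2)
      (fun x => (q.2.2 x + r.2.2 x) / 2) p =
      (gain q.1 q.2.1 q.2.2 p + gain r.1 r.2.1 r.2.2 p) / 2 := by
    intro p; simp only [gain]; ring
  have hg := measurable_gain m1 m2 m3
  have hg' := measurable_gain m1' m2' m3'
  refine ⟨⟨by dsimp only; fun_prop, by dsimp only; fun_prop, by dsimp only; fun_prop, F.mA, F.mB, F.AI, F.BI, F.μA, F.νB, ?_, ?_, ?_⟩, ?_, ?_, ?_, ?_⟩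
  · intro x hx y hy
    rw [eg]
    linarith [F.nn x hx y hy, F'.nn x hx y hy]
  · intro x hx y hy
    rw [eg]
    have a1 := F.dom x hx y hy
    have a2 := F'.dom x hx y hy
    rcases le_total (gain q.1 q.2.1 q.2.2 (x, y)) (gain r.1 r.2.1 r.2.2 (x, y)) with h | h
    · exact a1.trans (ENNReal.ofReal_le_ofReal (by linarith))
    · exact a2.trans (ENNReal.ofReal_le_ofReal (by linarith))
  · rcases F.sgn with hM | h1
    · exact Or.inl hM
    rcases F'.sgn with hM | h2
    · exact Or.inl hM
    refine Or.inr fun x hx => ?_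
    dsimp only
    linarith [h1 x hx, h2 x hx]
  · intro x hx y hy
    dsimp only
    linarith [Q.lo x hx y hy, Q'.lo x hx y hy]
  · intro y hy
    dsimp only
    linarith [Q.lo' y hy, Q'.lo' y hy]
  · refine le_trans ?_ (mid_le Q.hi Q'.hi)
    have n1 : Measurable fun x => ENNReal.ofReal (q.1 x - C₂ x) := by fun_prop
    have n2 : Measurable fun x => ENNReal.ofReal (r.1 x - C₂ x) := by fun_prop
    rw [← lintegral_const_mul _ n1, ← lintegral_const_mul _ n2, ← lintegral_add_left (n1.const_mul _)]
    refine lintegral_mono fun x => le_trans (le_of_eq ?_) (ofReal_mid _ _)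
    congr 1; ring
  · refine le_trans ?_ (mid_le Q.price Q'.price)
    unfold cost
    have n1 : Measurable fun p => ENNReal.ofReal (gain q.1 q.2.1 q.2.2 p) := by fun_prop
    have n2 : Measurable fun p => ENNReal.ofReal (gain r.1 r.2.1 r.2.2 p) := by fun_prop
    have md := measurable_drift (P := P₀)
    have n3 : Measurable fun x => ENNReal.ofReal (q.2.2 x) * ENNReal.ofReal (drift P₀ x) := by
      fun_prop
    have n4 : Measurable fun x => ENNReal.ofReal (r.2.2 x) * ENNReal.ofReal (drift P₀ x) := by
      fun_prop
    rw [mul_add, mul_add, add_add_add_comm]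
    refine add_le_add ?_ ?_
    · rw [← lintegral_const_mul _ n1, ← lintegral_const_mul _ n2,
        ← lintegral_add_left (n1.const_mul _)]
      refine lintegral_mono fun x => ?_
      rw [eg]
      exact ofReal_mid _ _
    · rw [← lintegral_const_mul _ n3, ← lintegral_const_mul _ n4,
        ← lintegral_add_left (n3.const_mul _)]
      refine lintegral_mono fun x => ?_
      rw [← mul_assoc, ← mul_assoc, ← add_mul]
      gcongr
      exact ofReal_mid _ _

/-- After an affine normalisation, superhedges of bounded price are controlled by fixed functions. -/
lemma exists_inQ [IsFiniteMeasure P₀] (H : Irr μ ν P₀ I) {f : ℕ → ℝ × ℝ → ℝ≥0∞} {b : ℝ≥0∞}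
    {β : ℕ → ℝ≥0∞} (hb : b ≠ ⊤) (hβ : ∀ n, β n ≤ b)
    (hF : ∀ n, ∃ φ ψ h A B, Feas μ ν I (f n) φ ψ h A B ∧ cost P₀ φ ψ h ≤ β n) :
    ∃ A B C₁ C₂, Measurable C₁ ∧ Measurable C₂ ∧ MeasurableSet A ∧ MeasurableSet B ∧
      (∀ᵐ x ∂μ, x ∈ A) ∧ (∀ᵐ y ∂ν, y ∈ B) ∧ A ⊆ I ∧
      ∀ n, ∃ q, InQ μ ν P₀ I A B C₁ C₂ b (f n) (β n) q := by
  choose φ ψ h A' B' F' hc using hF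
  set A := ⋂ n, A' n
  set B := ⋂ n, B' n
  have mA : MeasurableSet A := MeasurableSet.iInter fun n => (F' n).mA
  have mB : MeasurableSet B := MeasurableSet.iInter fun n => (F' n).mB
  have μA : ∀ᵐ x ∂μ, x ∈ A := by
    filter_upwards [ae_all_iff.2 fun n => (F' n).μA] with x hx using mem_iInter.2 hx
  have νB : ∀ᵐ x ∂ν, x ∈ B := by
    filter_upwards [ae_all_iff.2 fun n => (F' n).νB] with x hx using mem_iInter.2 hx
  have F : ∀ n, Feas μ ν I (f n) (φ n) (ψ n) (h n) A B := fun n =>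
    (F' n).restrict (iInter_subset _ n) (iInter_subset _ n) mA mB μA νB
  have hZ := fun n => exists_moder H (F n) (nonempty_of_ae H.univ_ne_zero μA)
  choose ζ σ Z h1 h2 hs using hZ
  have hsp := fun n => cost_split H (F n) (Z n) (h1 n) (h2 n) (hs n) H.cpl
  have hMP : ∀ n, MPair μ ν P₀ I b (ζ n) (σ n) := fun n =>
    ⟨I ∪ B, Z n, νB.mono fun y hy => Or.inr hy, hs n, by
      refine le_trans ?_ ((hc n).trans (hβ n))
      rw [hsp n]; exact le_add_self⟩
  obtain ⟨t, ht⟩ := H.ne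
  obtain ⟨d, hd, hdC⟩ : ∃ d : ℕ → ℝ, (∀ n, EqMean μ ν ∨ d n = 0) ∧
      ∀ s ∈ I, ∃ C : ℝ, ∀ n, |σ n s - d n| ≤ C := by
    by_cases hM : EqMean μ ν
    · refine ⟨fun n => σ n t, fun n => Or.inl hM, fun s hs => ?_⟩
      obtain ⟨C, hC⟩ := osc_all H hb hs ht
      exact ⟨C, fun n => hC _ _ (hMP n)⟩
    · refine ⟨fun n => 0, fun n => Or.inr rfl, fun s hs => ?_⟩
      obtain ⟨C, hC⟩ := slope_all H hb hM hs
      exact ⟨C, fun n => by simpa using hC _ _ (hMP n)⟩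
  set ζ' : ℕ → ℝ → ℝ := fun n y => ζ n y - (ζ n t + d n * (y - t)) with hζ'
  have mζ' : ∀ n, Measurable (ζ' n) := fun n => by
    have := (Z n).mζ
    fun_prop
  obtain ⟨Ct, hCt⟩ := hdC t ht
  have up : ∀ y ∈ I ∪ B, ∀ n, ζ' n y ≤ Ct * |y - t| := by
    intro y hy n
    have e := (Z n).sg t ht y hy
    have e2 := hCt n
    have e3 : (σ n t - d n) * (y - t) ≤ Ct * |y - t| := by
      refine (le_abs_self _).trans ?_
      rw [abs_mul]
      gcongr
    simp only [hζ']
    nlinarith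
  have bd : ∀ y ∈ I, ∃ K, ∀ n, |ζ' n y| ≤ K := by
    intro y hy
    obtain ⟨Cy, hCy⟩ := hdC y hy
    refine ⟨max (Ct * |y - t|) (Cy * |y - t|), fun n => abs_le.2 ⟨?_, ?_⟩⟩
    · have e := (Z n).sg y hy t (Or.inl ht)
      have e2 := hCy n
      have e3 : (σ n y - d n) * (t - y) ≤ Cy * |y - t| := by
        refine (le_abs_self _).trans ?_
        rw [abs_mul, abs_sub_comm t y]
        gcongr
      have e4 := le_max_right (Ct * |y - t|) (Cy * |y - t|)
      simp only [hζ']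
      nlinarith
    · exact (up y (Or.inl hy) n).trans (le_max_left _ _)
  set C₁ : ℝ → ℝ := fun y => ⨆ n, |ζ' n y| with hC₁
  set C₂ : ℝ → ℝ := fun y => ⨆ n, ζ' n y with hC₂
  have l1 : ∀ y ∈ I, ∀ n, |ζ' n y| ≤ C₁ y := fun y hy n => by
    obtain ⟨K, hK⟩ := bd y hy
    exact le_ciSup (f := fun n => |ζ' n y|) ⟨K, by rintro _ ⟨n, rfl⟩; exact hK n⟩ n
  have l2 : ∀ y ∈ I ∪ B, ∀ n, ζ' n y ≤ C₂ y := fun y hy n =>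
    le_ciSup (f := fun n => ζ' n y) ⟨_, by rintro _ ⟨n, rfl⟩; exact up y hy n⟩ n
  refine ⟨A, B, C₁, C₂, Measurable.iSup fun n => (mζ' n).abs, Measurable.iSup mζ', mA, mB, μA, νB,
    (F 0).AI, fun n => ⟨(fun x => φ n x - (ζ n t + d n * (x - t)),
      fun y => ψ n y + (ζ n t + d n * (y - t)), fun x => h n x - d n),
      (F n).shift (hd n), ?_, ?_, ?_, ?_⟩⟩
  · intro x hx y hy
    have e1 := h1 n x hx y (Or.inl hy)
    have e2 := (abs_le.1 (l1 y hy n)).1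
    simp only [hζ'] at e2
    dsimp only
    nlinarith
  · intro y hy
    have e1 := h2 n y hy
    have e2 := l2 y (Or.inr hy) n
    simp only [hζ'] at e2
    dsimp only
    linarith
  · refine le_trans ?_ ((hc n).trans (hβ n))
    rw [hsp n, add_assoc]
    refine le_trans (lintegral_mono_ae ?_) le_self_add
    filter_upwards [H.μI] with x hx
    apply ENNReal.ofReal_le_ofReal
    have e2 := l2 x (Or.inl hx) n
    simp only [hζ'] at e2
    linarith
  · exact (cost_shift H (hd n)).trans_le (hc n)

end

/-! ### Compactness of superhedges -/

section

variable {μ ν : Measure ℝ} {P₀ : Measure (ℝ × ℝ)} {I : Set ℝ}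

/-- Lower semicontinuity of the conditional price. The limiting slope `S` is arbitrary because the
conditional price does not depend on the slope as long as the payoff stays nonnegative. -/
lemma fatou_at (Q : Measure ℝ) [IsProbabilityMeasure Q] (hQ : Integrable (fun y : ℝ => y) Q) (x : ℝ)
    {a : ℕ → ℝ} {a' : ℝ} (ha : Tendsto a atTop (𝓝 a')) {ψ : ℕ → ℝ → ℝ} {ψ' : ℝ → ℝ}
    (mψ : ∀ n, Measurable (ψ n)) (mψ' : Measurable ψ')
    (hψ : ∀ᵐ y ∂Q, Tendsto (fun n => ψ n y) atTop (𝓝 (ψ' y))) {s : ℕ → ℝ} {K S : ℝ}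
    (hK : ∀ n, |s n| ≤ K) (g : ∀ n, ∀ᵐ y ∂Q, 0 ≤ a n + ψ n y + s n * (y - x))
    (g' : ∀ᵐ y ∂Q, 0 ≤ a' + ψ' y + S * (y - x))
    (hd : (∫ y, (x - y) ∂Q) = 0 ∨ (0 ≤ (∫ y, (x - y) ∂Q) ∧ (∀ n, 0 ≤ s n) ∧ 0 ≤ S)) :
    ∫⁻ y, ENNReal.ofReal (a' + ψ' y + S * (y - x)) ∂Q +
        ENNReal.ofReal S * ENNReal.ofReal (∫ y, (x - y) ∂Q) ≤
      liminf (fun n => ∫⁻ y, ENNReal.ofReal (a n + ψ n y + s n * (y - x)) ∂Q +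
        ENNReal.ofReal (s n) * ENNReal.ofReal (∫ y, (x - y) ∂Q)) atTop := by
  set d := ∫ y, (x - y) ∂Q with hdd
  refine le_of_forall_gt fun c hc => ?_
  obtain ⟨c', hc1, hc2⟩ := exists_between hc
  obtain ⟨k, hk, hkc⟩ := extraction_of_frequently_atTop
    (frequently_lt_of_liminf_lt (by isBoundedDefault) hc1)
  obtain ⟨s', -, j, hj, hjs⟩ := tendsto_subseq_of_bounded (Metric.isBounded_Icc (-K) K)
    (x := fun n => s (k n)) (fun n => abs_le.1 (hK _))
  have hkj : Tendsto (fun n => k (j n)) atTop atTop := (hk.comp hj).tendsto_atTop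
  have hs' : Tendsto (fun n => s (k (j n))) atTop (𝓝 s') := hjs
  have hlim : ∀ᵐ y ∂Q, Tendsto (fun n => a (k (j n)) + ψ (k (j n)) y + s (k (j n)) * (y - x)) atTop
      (𝓝 (a' + ψ' y + s' * (y - x))) := by
    filter_upwards [hψ] with y hy
    exact ((ha.comp hkj).add (hy.comp hkj)).add (hs'.mul_const _)
  have g1 : ∀ᵐ y ∂Q, 0 ≤ a' + ψ' y + s' * (y - x) := by
    filter_upwards [hlim, ae_all_iff.2 g] with y hy hg
    exact ge_of_tendsto' hy fun n => hg _
  have e := slope_indep Q hQ x (G₁ := fun y => a' + ψ' y + S * (y - x))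
    (G₂ := fun y => a' + ψ' y + s' * (y - x)) (h₁ := S) (h₂ := s') (by fun_prop)
    (Eventually.of_forall fun y => by ring) g' g1
    (hd.imp id fun h => ⟨h.1, h.2.2, ge_of_tendsto' hs' fun n => h.2.1 _⟩)
  rw [← hdd] at e
  rw [e]
  refine lt_of_le_of_lt ?_ hc2
  have m1 : ∀ n, Measurable fun y => ENNReal.ofReal (a n + ψ n y + s n * (y - x)) := fun n => by
    have := mψ n
    fun_prop
  have e1 : ∀ (F : ℝ → ℝ≥0∞) (c : ℝ≥0∞), ∫⁻ y, F y ∂Q + c = ∫⁻ y, (F y + c) ∂Q := by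
    intro F c
    rw [lintegral_add_right _ measurable_const]; simp
  rw [e1]
  calc ∫⁻ y, (ENNReal.ofReal (a' + ψ' y + s' * (y - x)) + ENNReal.ofReal s' * ENNReal.ofReal d) ∂Q
      = ∫⁻ y, liminf (fun n => ENNReal.ofReal (a (k (j n)) + ψ (k (j n)) y + s (k (j n)) * (y - x)) +
          ENNReal.ofReal (s (k (j n))) * ENNReal.ofReal d) atTop ∂Q := by
        refine lintegral_congr_ae ?_
        filter_upwards [hlim] with y hy
        refine (Tendsto.liminf_eq ?_).symm
        refine (ENNReal.tendsto_ofReal hy).add ?_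
        exact ENNReal.Tendsto.mul_const (ENNReal.tendsto_ofReal hs') (Or.inr ENNReal.ofReal_ne_top)
    _ ≤ liminf (fun n => ∫⁻ y, (ENNReal.ofReal (a (k (j n)) + ψ (k (j n)) y + s (k (j n)) * (y - x)) +
          ENNReal.ofReal (s (k (j n))) * ENNReal.ofReal d) ∂Q) atTop :=
        lintegral_liminf_le fun n => (m1 _).add_const _
    _ ≤ c' := by
        refine liminf_le_of_le (by isBoundedDefault) fun B hB => ?_
        obtain ⟨n, hn⟩ := hB.exists
        refine hn.trans ?_
        rw [← e1]
        exact (hkc (j n)).le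

lemma fatou_costAt (P : Measure (ℝ × ℝ)) [IsFiniteMeasure P] {φ ψ h : ℕ → ℝ → ℝ} {φ' ψ' h' : ℝ → ℝ}
    {x K : ℝ} {B : Set ℝ} (hQ : Integrable (fun y : ℝ => y) (P.condKernel x))
    (hB : ∀ᵐ y ∂P.condKernel x, y ∈ B) (hφ : Tendsto (fun n => φ n x) atTop (𝓝 (φ' x)))
    (mψ : ∀ n, Measurable (ψ n)) (mψ' : Measurable ψ')
    (hψ : ∀ y ∈ B, Tendsto (fun n => ψ n y) atTop (𝓝 (ψ' y))) (hK : ∀ n, |h n x| ≤ K)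
    (g : ∀ n, ∀ y ∈ B, 0 ≤ gain (φ n) (ψ n) (h n) (x, y))
    (g' : ∀ y ∈ B, 0 ≤ gain φ' ψ' h' (x, y))
    (hd : drift P x = 0 ∨ (0 ≤ drift P x ∧ (∀ n, 0 ≤ h n x) ∧ 0 ≤ h' x)) :
    costAt P φ' ψ' h' x ≤ liminf (fun n => costAt P (φ n) (ψ n) (h n) x) atTop := by
  have e := fatou_at (P.condKernel x) hQ x (a := fun n => φ n x) (a' := φ' x) hφ (ψ := ψ) (ψ' := ψ')
    mψ mψ' (hB.mono hψ) (s := fun n => h n x) (S := h' x) hK (fun n => hB.mono (g n)) (hB.mono g') hd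
  exact e

lemma tendsto_of_tendsto_ofReal {u : ℕ → ℝ} {C : ℝ} (h0 : ∀ n, 0 ≤ u n + C) {l : ℝ≥0∞}
    (hl : Tendsto (fun n => ENNReal.ofReal (u n + C)) atTop (𝓝 l)) (hlt : l ≠ ⊤) :
    ∃ c, Tendsto u atTop (𝓝 c) := by
  have := (ENNReal.tendsto_toReal hlt).comp hl
  refine ⟨l.toReal - C, ?_⟩
  have e := this.sub_const C
  refine e.congr fun n => ?_
  simp [ENNReal.toReal_ofReal (h0 n)]

lemma ne_top_of_frequently {v : ℕ → ℝ≥0∞} {l : ℝ≥0∞} (hl : Tendsto v atTop (𝓝 l)) {c : ℝ≥0∞}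
    (hc : c ≠ ⊤) (h : ∃ᶠ n in atTop, v n ≤ c) : l ≠ ⊤ :=
  ne_top_of_le_ne_top hc (le_of_tendsto_of_frequently hl h)

set_option maxHeartbeats 1000000 in
/-- Compactness: almost optimal superhedges of an increasing sequence of payoffs yield a superhedge
of the supremum. -/
theorem compactness [IsFiniteMeasure P₀] (H : Irr μ ν P₀ I) {f : ℕ → ℝ × ℝ → ℝ≥0∞}
    (hf : Monotone f) {β : ℝ≥0∞} (hβ : β ≠ ⊤)
    (hF : ∀ n : ℕ, ∃ φ ψ h A B, Feas μ ν I (f n) φ ψ h A B ∧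
      cost P₀ φ ψ h ≤ β + ((n : ℝ≥0∞) + 1)⁻¹) :
    ∃ φ ψ h A B, Feas μ ν I (fun p => ⨆ n, f n p) φ ψ h A B ∧ cost P₀ φ ψ h ≤ β := by
  have fμ := H.fμ
  have fν := H.fν
  have hfst := fst_eq H.cpl
  have hβ1 : ∀ n : ℕ, β + ((n : ℝ≥0∞) + 1)⁻¹ ≤ β + 1 := fun n => by
    gcongr
    rw [ENNReal.inv_le_one]; exact le_add_self
  have hb : β + 1 ≠ ⊤ := by finiteness
  obtain ⟨A, B, C₁, C₂, mC₁, mC₂, mA, mB, μA, νB, AI, hQ⟩ := exists_inQ H hb hβ1 hF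
  obtain ⟨q, hq, hconv⟩ := komlos (Measure.map Sum.inl μ + Measure.map Sum.inr ν)
    (fun n : ℕ => {q | InQ μ ν P₀ I A B C₁ C₂ (β + 1) (f n) (β + ((n : ℝ≥0∞) + 1)⁻¹) q})
    (by
      intro m n hmn q hq
      refine InQ.mono hq (hf hmn) ?_
      gcongr)
    hQ
    (fun q => Sum.elim (A.indicator fun x => q.1 x + C₁ x) (B.indicator fun y => q.2.1 y + C₂ y))
    (by
      intro n q hq
      have F := InQ.feas hq
      exact Measurable.sumElim ((F.mφ.add mC₁).indicator mA) ((F.mψ.add mC₂).indicator mB))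
    (by
      rintro n q hq (x | y)
      · change 0 ≤ A.indicator (fun x => q.1 x + C₁ x) x
        refine indicator_nonneg (fun x hx => ?_) x
        have := InQ.lo hq x hx x (AI hx)
        simp only [sub_self, mul_zero, add_zero] at this
        linarith
      · change 0 ≤ B.indicator (fun y => q.2.1 y + C₂ y) y
        refine indicator_nonneg (fun y hy => ?_) y
        linarith [InQ.lo' hq y hy])
    (by
      intro n a ha b hb
      refine ⟨_, InQ.mid mC₂ ha hb, ?_⟩
      rintro (x | y)
      · by_cases hx : x ∈ A <;> simp [hx]; ring
      · by_cases hy : y ∈ B <;> simp [hy]; ring)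
  rw [ae_add_measure_iff] at hconv
  have cμ := ae_of_ae_map measurable_inl.aemeasurable hconv.1
  have cν := ae_of_ae_map measurable_inr.aemeasurable hconv.2
  simp only [Sum.elim_inl, Sum.elim_inr] at cμ cν
  have hq : ∀ n : ℕ, InQ μ ν P₀ I A B C₁ C₂ (β + 1) (f n) (β + ((n : ℝ≥0∞) + 1)⁻¹) (q n) := hq
  have F := fun n => (hq n).feas
  have mφ := fun n => (F n).mφ
  have mψ := fun n => (F n).mψ
  have mh := fun n => (F n).mh
  -- the points at which the two legs have finite limits
  set A' := A ∩ {x | ∃ c, Tendsto (fun n => (q n).1 x) atTop (𝓝 c)} with hA'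
  set B' := B ∩ {y | ∃ c, Tendsto (fun n => (q n).2.1 y) atTop (𝓝 c)} with hB'
  have mA' : MeasurableSet A' := mA.inter (measurableSet_exists_tendsto mφ)
  have mB' : MeasurableSet B' := mB.inter (measurableSet_exists_tendsto mψ)
  have μA' : ∀ᵐ x ∂μ, x ∈ A' := by
    have hfin : ∀ᵐ x ∂μ, liminf (fun n => ENNReal.ofReal ((q n).1 x - C₂ x)) atTop < ⊤ := by
      have mm : ∀ n, Measurable fun x => ENNReal.ofReal ((q n).1 x - C₂ x) := fun n => by
        have := mφ n
        fun_prop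
      refine ae_lt_top (Measurable.liminf mm) ?_
      refine ne_top_of_le_ne_top hb ((lintegral_liminf_le mm).trans ?_)
      refine liminf_le_of_le (by isBoundedDefault) fun B hB => ?_
      obtain ⟨n, hn⟩ := hB.exists
      exact hn.trans (hq n).hi
    filter_upwards [μA, cμ, hfin] with x hx hc hfx
    refine ⟨hx, ?_⟩
    obtain ⟨l, hl⟩ := hc
    simp only [indicator_of_mem hx] at hl
    refine tendsto_of_tendsto_ofReal (fun n => ?_) hl ?_
    · have := (hq n).lo x hx x (AI hx)
      simp only [sub_self, mul_zero, add_zero] at this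
      linarith
    obtain ⟨c, hc1, hc2⟩ := exists_between hfx
    refine ne_top_of_frequently hl (c := c + ENNReal.ofReal (C₁ x + C₂ x)) (by finiteness) ?_
    refine (frequently_lt_of_liminf_lt (by isBoundedDefault) hc1).mono fun n hn => ?_
    calc ENNReal.ofReal ((q n).1 x + C₁ x)
        = ENNReal.ofReal (((q n).1 x - C₂ x) + (C₁ x + C₂ x)) := by congr 1; ring
      _ ≤ _ := ENNReal.ofReal_add_le.trans (by gcongr)
  -- by openness of `I`, the lower bound on `φ x + h x * (y - x)` applies at points `y` on both
  -- sides of `x`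
  have hbd : ∀ x ∈ A', ∃ K, ∀ n, |(q n).2.2 x| ≤ K := by
    rintro x ⟨hx, c, hc⟩
    obtain ⟨Kφ, hKφ⟩ := hc.bddAbove_range
    have hKφ : ∀ n, (q n).1 x ≤ Kφ := fun n => hKφ ⟨n, rfl⟩
    obtain ⟨δ, hδ, -⟩ := exists_delta H.opn (AI hx)
    obtain ⟨d1, d2, d3⟩ := hδ 0
    refine ⟨max ((Kφ + C₁ (x - δ 0)) / δ 0) ((Kφ + C₁ (x + δ 0)) / δ 0), fun n => ?_⟩
    have e1 := (hq n).lo x hx _ d2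
    have e2 := (hq n).lo x hx _ d3
    have e3 := hKφ n
    rw [abs_le']
    refine ⟨le_trans ?_ (le_max_left _ _), le_trans ?_ (le_max_right _ _)⟩
    · rw [le_div_iff₀ d1]; nlinarith
    · rw [le_div_iff₀ d1]; nlinarith
  -- the limits of `ψₙ` are finite because the payoffs have finite `liminf`, by Fatou
  have νB' : ∀ᵐ y ∂ν, y ∈ B' := by
    have hfin : ∀ᵐ p ∂P₀, liminf (fun n => ENNReal.ofReal (gain (q n).1 (q n).2.1 (q n).2.2 p)) atTop
        < ⊤ := by
      have mm : ∀ n, Measurable fun p => ENNReal.ofReal (gain (q n).1 (q n).2.1 (q n).2.2 p) :=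
        fun n => (measurable_gain (mφ n) (mψ n) (mh n)).ennreal_ofReal
      refine ae_lt_top (Measurable.liminf mm) ?_
      refine ne_top_of_le_ne_top hb ((lintegral_liminf_le mm).trans ?_)
      refine liminf_le_of_le (by isBoundedDefault) fun B hB => ?_
      obtain ⟨n, hn⟩ := hB.exists
      exact hn.trans ((le_self_add.trans (hq n).price).trans (hβ1 n))
    have key : ∀ᵐ p ∂P₀, p.2 ∈ B' := by
      filter_upwards [ae_fst H.cpl μA', ae_snd H.cpl νB, ae_snd H.cpl cν, hfin]
        with p hx hy hc hfp
      refine ⟨hy, ?_⟩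
      obtain ⟨l, hl⟩ := hc
      simp only [indicator_of_mem hy] at hl
      refine tendsto_of_tendsto_ofReal (fun n => by linarith [(hq n).lo' _ hy]) hl ?_
      obtain ⟨c, hc1, hc2⟩ := exists_between hfp
      obtain ⟨K, hK⟩ := hbd _ hx
      set z := C₂ p.2 + C₁ p.1 + K * |p.2 - p.1|
      refine ne_top_of_frequently hl (c := c + ENNReal.ofReal z) (by finiteness) ?_
      refine (frequently_lt_of_liminf_lt (by isBoundedDefault) hc1).mono fun n hn => ?_
      have e1 := (hq n).lo _ hx.1 _ (AI hx.1)
      simp only [sub_self, mul_zero, add_zero] at e1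
      have e2 : - ((q n).2.2 p.1 * (p.2 - p.1)) ≤ K * |p.2 - p.1| := by
        refine (neg_le_abs _).trans ?_
        rw [abs_mul]
        have := hK n
        gcongr
      calc ENNReal.ofReal ((q n).2.1 p.2 + C₂ p.2)
          ≤ ENNReal.ofReal (gain (q n).1 (q n).2.1 (q n).2.2 p + z) := by
            apply ENNReal.ofReal_le_ofReal
            simp only [gain, z]
            linarith
        _ ≤ _ := ENNReal.ofReal_add_le.trans (by gcongr)
    rw [← H.cpl.1.2]
    exact (ae_map_iff measurable_snd.aemeasurable mB').2 key
  -- `limsup` is used only to have Borel functions defined everywhere; the sequences converge on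
  -- `A` and `B` up to null sets, and the slopes stay bounded there
  set φ : ℝ → ℝ := fun x => limsup (fun n => (q n).1 x) atTop with hφ
  set ψ : ℝ → ℝ := fun x => limsup (fun n => (q n).2.1 x) atTop with hψ
  set h : ℝ → ℝ := fun x => limsup (fun n => (q n).2.2 x) atTop with hh
  have mφ' : Measurable φ := Measurable.limsup mφ
  have mψ' : Measurable ψ := Measurable.limsup mψ
  have mh' : Measurable h := Measurable.limsup mh
  have tφ : ∀ x ∈ A', Tendsto (fun n => (q n).1 x) atTop (𝓝 (φ x)) := by
    rintro x ⟨-, c, hc⟩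
    have : φ x = c := hc.limsup_eq
    rwa [this]
  have tψ : ∀ y ∈ B', Tendsto (fun n => (q n).2.1 y) atTop (𝓝 (ψ y)) := by
    rintro y ⟨-, c, hc⟩
    have : ψ y = c := hc.limsup_eq
    rwa [this]
  have th : ∀ x ∈ A', ∃ k : ℕ → ℕ, Tendsto k atTop atTop ∧
      Tendsto (fun n => (q (k n)).2.2 x) atTop (𝓝 (h x)) := by
    intro x hx
    obtain ⟨K, hK⟩ := hbd x hx
    have b1 : IsBoundedUnder (· ≤ ·) atTop (fun n => (q n).2.2 x) :=
      isBoundedUnder_of ⟨K, fun n => (abs_le.1 (hK n)).2⟩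
    have b2 : IsBoundedUnder (· ≥ ·) atTop (fun n => (q n).2.2 x) :=
      isBoundedUnder_of ⟨-K, fun n => (abs_le.1 (hK n)).1⟩
    obtain ⟨k, h1, h2⟩ := exists_seq_tendsto_limsup (hc := b2.isCoboundedUnder_le) (hb := b1)
    exact ⟨k, h2, h1⟩
  have tg : ∀ x ∈ A', ∃ k : ℕ → ℕ, Tendsto k atTop atTop ∧ ∀ y ∈ B',
      Tendsto (fun n => gain (q (k n)).1 (q (k n)).2.1 (q (k n)).2.2 (x, y)) atTop
        (𝓝 (gain φ ψ h (x, y))) := by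
    intro x hx
    obtain ⟨k, hk, hk'⟩ := th x hx
    exact ⟨k, hk, fun y hy => (((tφ x hx).comp hk).add ((tψ y hy).comp hk)).add (hk'.mul_const _)⟩
  have nn : ∀ x ∈ A', ∀ y ∈ B', 0 ≤ gain φ ψ h (x, y) := by
    intro x hx y hy
    obtain ⟨k, hk, hk'⟩ := tg x hx
    exact ge_of_tendsto' (hk' y hy) fun n => (F _).nn x hx.1 y hy.1
  have sgn : EqMean μ ν ∨ ∀ x ∈ A', 0 ≤ h x := by
    by_cases hM : EqMean μ ν
    · exact Or.inl hM
    · refine Or.inr fun x hx => ?_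
      obtain ⟨k, hk, hk'⟩ := th x hx
      exact ge_of_tendsto' hk' fun n => (F _).sgn.resolve_left hM x hx.1
  refine ⟨φ, ψ, h, A', B', ⟨mφ', mψ', mh', mA', mB', inter_subset_left.trans AI,
    inter_subset_left.trans (F 0).BI, μA', νB', nn, ?_, sgn⟩, ?_⟩
  · intro x hx y hy
    refine iSup_le fun m => ?_
    obtain ⟨k, hk, hk'⟩ := tg x hx
    refine ge_of_tendsto (ENNReal.tendsto_ofReal (hk' y hy)) ?_
    filter_upwards [hk.eventually_ge_atTop m] with n hn
    exact (hf hn _).trans ((F _).dom x hx.1 y hy.1)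
  · have hi1 := integrable_fst H.iμ H.cpl
    have hi2 := integrable_snd H.iν H.cpl
    have step : ∀ᵐ x ∂μ, costAt P₀ φ ψ h x ≤
        liminf (fun n => costAt P₀ (q n).1 (q n).2.1 (q n).2.2 x) atTop := by
      have a1 := ae_ae (ae_snd H.cpl νB')
      have a2 := ae_integrable_snd hi2
      have a3 := drift_nonneg hi1 hi2 H.cpl.2
      rw [hfst] at a1 a2 a3
      have a4 : ∀ᵐ x ∂μ, EqMean μ ν → drift P₀ x = 0 := by
        by_cases hM : EqMean μ ν
        · filter_upwards [drift_eq_zero H.iμ H.iν H.cpl hM] with x hx _ using hx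
        · exact Eventually.of_forall fun x h => absurd h hM
      filter_upwards [μA', a1, a2, a3, a4] with x hx h1 h2 h3 h4
      obtain ⟨K, hK⟩ := hbd x hx
      refine fatou_costAt P₀ (φ := fun n => (q n).1) (ψ := fun n => (q n).2.1)
        (h := fun n => (q n).2.2) (B := B') (K := K) h2 h1 (tφ x hx) mψ mψ' tψ hK
        (fun n y hy => (F n).nn x hx.1 y hy.1) (fun y hy => nn x hx y hy) ?_
      by_cases hM : EqMean μ ν
      · exact Or.inl (h4 hM)
      · exact Or.inr ⟨h3, fun n => (F n).sgn.resolve_left hM x hx.1, sgn.resolve_left hM x hx⟩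
    rw [cost_eq mφ' mψ' mh', hfst]
    refine (lintegral_mono_ae step).trans ?_
    refine (lintegral_liminf_le fun n => measurable_costAt (mφ n) (mψ n) (mh n)).trans ?_
    have ht : Tendsto (fun n : ℕ => β + ((n : ℝ≥0∞) + 1)⁻¹) atTop (𝓝 (β + 0)) := by
      refine tendsto_const_nhds.add ?_
      have := (tendsto_add_atTop_iff_nat 1).2 ENNReal.tendsto_inv_nat_nhds_zero
      simpa using this
    rw [add_zero] at ht
    rw [← ht.liminf_eq]
    refine liminf_le_liminf (Eventually.of_forall fun n => ?_)
    have := (hq n).price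
    rwa [cost_eq (mφ n) (mψ n) (mh n), hfst] at this

end

/-! ### Representation of functionals by measures -/

section

open scoped CompactlySupported BoundedContinuousFunction

/-- A continuous cutoff: `1` on `[-N, N]`, `0` outside `[-N-1, N+1]`. -/
def cutoff (N : ℕ) (x : ℝ) : ℝ := max 0 (min 1 ((N : ℝ) + 1 - |x|))

lemma cutoff_nonneg (N : ℕ) (x : ℝ) : 0 ≤ cutoff N x := le_max_left _ _

lemma cutoff_le_one (N : ℕ) (x : ℝ) : cutoff N x ≤ 1 := max_le zero_le_one (min_le_left _ _)

lemma continuous_cutoff (N : ℕ) : Continuous (cutoff N) := by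
  unfold cutoff; fun_prop

lemma tendsto_cutoff (x : ℝ) : Tendsto (fun N => cutoff N x) atTop (𝓝 1) := by
  refine tendsto_const_nhds.congr' ?_
  filter_upwards [eventually_ge_atTop ⌈|x|⌉₊] with N hN
  have : |x| ≤ N := Nat.ceil_le.mp hN
  unfold cutoff
  rw [min_eq_left (by linarith)]; simp

/-- The cutoff as a bounded continuous function. -/
def cutoffB (N : ℕ) : ℝ →ᵇ ℝ :=
  BoundedContinuousFunction.ofNormedAddCommGroup (cutoff N) (continuous_cutoff N) 1 (fun x => by
    rw [Real.norm_eq_abs, abs_of_nonneg (cutoff_nonneg N x)]; exact cutoff_le_one N x)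

/-- A bounded continuous function of the first coordinate, seen on the plane. -/
def onFst (φ : ℝ →ᵇ ℝ) : (ℝ × ℝ) →ᵇ ℝ := φ.compContinuous ⟨Prod.fst, continuous_fst⟩

/-- A bounded continuous function of the second coordinate, seen on the plane. -/
def onSnd (φ : ℝ →ᵇ ℝ) : (ℝ × ℝ) →ᵇ ℝ := φ.compContinuous ⟨Prod.snd, continuous_snd⟩

@[simp] lemma onFst_apply (φ : ℝ →ᵇ ℝ) (p : ℝ × ℝ) : onFst φ p = φ p.1 := rfl
@[simp] lemma onSnd_apply (φ : ℝ →ᵇ ℝ) (p : ℝ × ℝ) : onSnd φ p = φ p.2 := rfl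
@[simp] lemma cutoffB_apply (N : ℕ) (x : ℝ) : cutoffB N x = cutoff N x := rfl

/-- A bounded continuous function multiplied by the product cutoff. -/
def truncC (v : (ℝ × ℝ) →ᵇ ℝ) (N : ℕ) : C_c(ℝ × ℝ, ℝ) where
  toFun p := v p * (cutoff N p.1 * cutoff N p.2)
  continuous_toFun := by
    have := continuous_cutoff N
    have := v.continuous
    fun_prop
  hasCompactSupport' := by
    refine HasCompactSupport.intro (K := Icc (-((N : ℝ) + 1)) (N + 1) ×ˢ
      Icc (-((N : ℝ) + 1)) (N + 1)) (isCompact_Icc.prod isCompact_Icc) ?_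
    intro p hp
    have key : ∀ x : ℝ, x ∉ Icc (-((N : ℝ) + 1)) (N + 1) → cutoff N x = 0 := by
      intro x hx
      unfold cutoff
      refine max_eq_left ((min_le_right _ _).trans ?_)
      by_contra hc
      push Not at hc
      have h := abs_le.mp (show |x| ≤ (N : ℝ) + 1 by linarith)
      exact hx ⟨h.1, h.2⟩
    by_cases h1 : p.1 ∈ Icc (-((N : ℝ) + 1)) (N + 1)
    · have h2 : p.2 ∉ Icc (-((N : ℝ) + 1)) (N + 1) := fun h2 => hp ⟨h1, h2⟩
      rw [key _ h2]; ring
    · rw [key _ h1]; ring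

lemma truncC_apply (v : (ℝ × ℝ) →ᵇ ℝ) (N : ℕ) (p : ℝ × ℝ) :
    truncC v N p = v p * (cutoff N p.1 * cutoff N p.2) := rfl

lemma tendsto_integral_cutoff (μ : Measure ℝ) [IsFiniteMeasure μ] :
    Tendsto (fun N => ∫ x, cutoffB N x ∂μ) atTop (𝓝 (∫ _, (1 : ℝ) ∂μ)) := by
  refine tendsto_integral_of_dominated_convergence (fun _ => (1 : ℝ)) ?_ (integrable_const _) ?_ ?_
  · intro N; exact (continuous_cutoff N).aestronglyMeasurable
  · intro N; refine ae_of_all _ fun x => ?_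
    rw [cutoffB_apply, Real.norm_eq_abs, abs_of_nonneg (cutoff_nonneg N x)]
    exact cutoff_le_one N x
  · exact ae_of_all _ fun x => tendsto_cutoff x

/-- A positive functional on bounded continuous functions of the plane with prescribed marginals
is integration against a finite measure: the marginals prevent mass from escaping to infinity. -/
theorem exists_measure_of_functional (L : ((ℝ × ℝ) →ᵇ ℝ) →ₗ[ℝ] ℝ)
    (hpos : ∀ v : (ℝ × ℝ) →ᵇ ℝ, (∀ p, 0 ≤ v p) → 0 ≤ L v)
    {μ ν : Measure ℝ} [IsFiniteMeasure μ] [IsFiniteMeasure ν]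
    (h1 : ∀ φ : ℝ →ᵇ ℝ, L (onFst φ) = ∫ x, φ x ∂μ)
    (h2 : ∀ φ : ℝ →ᵇ ℝ, L (onSnd φ) = ∫ x, φ x ∂ν) :
    ∃ P : Measure (ℝ × ℝ), IsFiniteMeasure P ∧ ∀ v : (ℝ × ℝ) →ᵇ ℝ, L v = ∫ p, v p ∂P := by
  have hmono : ∀ v w : (ℝ × ℝ) →ᵇ ℝ, (∀ p, v p ≤ w p) → L v ≤ L w := by
    intro v w h
    have := hpos (w - v) (fun p => by simpa using h p)
    rw [map_sub] at this; linarith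
  let ι : C_c(ℝ × ℝ, ℝ) →ₗ[ℝ] ((ℝ × ℝ) →ᵇ ℝ) :=
    { toFun := fun g => (g : (ℝ × ℝ) →ᵇ ℝ)
      map_add' := fun a b => by ext p; rfl
      map_smul' := fun a b => by ext p; rfl }
  have hι : ∀ g p, ι g p = g p := fun g p => rfl
  let Λ : C_c(ℝ × ℝ, ℝ) →ₚ[ℝ] ℝ := PositiveLinearMap.mk₀ (L ∘ₗ ι) (fun g hg => hpos _ fun p => by
    rw [hι]; exact hg p)
  have hΛ : ∀ g, Λ g = L (ι g) := fun g => rfl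
  set P := RealRMK.rieszMeasure Λ with hPdef
  have hInt : ∀ g : C_c(ℝ × ℝ, ℝ), ∫ p, g p ∂P = L (ι g) := fun g =>
    RealRMK.integral_rieszMeasure Λ g
  have hc01 : ∀ (N : ℕ) (p : ℝ × ℝ), 0 ≤ cutoff N p.1 * cutoff N p.2 ∧
      cutoff N p.1 * cutoff N p.2 ≤ 1 := fun N p =>
    ⟨mul_nonneg (cutoff_nonneg _ _) (cutoff_nonneg _ _),
      mul_le_one₀ (cutoff_le_one _ _) (cutoff_nonneg _ _) (cutoff_le_one _ _)⟩
  have hlim : ∀ p : ℝ × ℝ, Tendsto (fun N => cutoff N p.1 * cutoff N p.2) atTop (𝓝 1) := fun p => by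
    simpa using (tendsto_cutoff p.1).mul (tendsto_cutoff p.2)
  have hfin : IsFiniteMeasure P := by
    refine ⟨lt_of_le_of_lt ?_ (ENNReal.ofReal_lt_top (r := L 1))⟩
    calc P univ = ∫⁻ p, liminf (fun N => ENNReal.ofReal (truncC 1 N p)) atTop ∂P := by
          rw [← lintegral_one]
          refine lintegral_congr fun p => ?_
          have : Tendsto (fun N => ENNReal.ofReal (truncC 1 N p)) atTop (𝓝 1) := by
            have := ENNReal.tendsto_ofReal (hlim p)
            simpa [truncC_apply] using this
          exact this.liminf_eq.symm
      _ ≤ liminf (fun N => ∫⁻ p, ENNReal.ofReal (truncC 1 N p) ∂P) atTop :=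
          lintegral_liminf_le fun N => (truncC 1 N).continuous.measurable.ennreal_ofReal
      _ ≤ ENNReal.ofReal (L 1) := by
          refine liminf_le_of_le (by isBoundedDefault) ?_
          intro b hb
          obtain ⟨N, hN⟩ := hb.exists
          refine hN.trans ?_
          rw [← ofReal_integral_eq_lintegral_ofReal
            (CompactlySupportedContinuousMap.integrable (truncC 1 N))
            (ae_of_all _ fun p => by rw [truncC_apply]; simpa using (hc01 N p).1), hInt]
          refine ENNReal.ofReal_le_ofReal (hmono _ _ fun p => ?_)
          rw [hι, truncC_apply]; simpa using (hc01 N p).2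
  refine ⟨P, hfin, fun v => ?_⟩
  have l1 : Tendsto (fun N => ∫ p, truncC v N p ∂P) atTop (𝓝 (∫ p, v p ∂P)) := by
    refine tendsto_integral_of_dominated_convergence (fun _ => ‖v‖) ?_ (integrable_const _) ?_ ?_
    · intro N; exact (truncC v N).continuous.aestronglyMeasurable
    · intro N; refine ae_of_all _ fun p => ?_
      rw [truncC_apply, norm_mul, Real.norm_of_nonneg (hc01 N p).1]
      exact (mul_le_of_le_one_right (norm_nonneg _) (hc01 N p).2).trans (v.norm_coe_le_norm p)
    · refine ae_of_all _ fun p => ?_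
      simpa [truncC_apply] using (hlim p).const_mul (v p)
  have l2 : Tendsto (fun N => ∫ p, truncC v N p ∂P) atTop (𝓝 (L v)) := by
    have e1 : Tendsto (fun N => ‖v‖ * ((L (onFst 1) - L (onFst (cutoffB N))) +
        (L (onSnd 1) - L (onSnd (cutoffB N))))) atTop (𝓝 0) := by
      have a1 : Tendsto (fun N => L (onFst 1) - L (onFst (cutoffB N))) atTop (𝓝 0) := by
        simp only [h1]
        simpa using (tendsto_integral_cutoff μ).const_sub (∫ _, (1 : ℝ) ∂μ)
      have a2 : Tendsto (fun N => L (onSnd 1) - L (onSnd (cutoffB N))) atTop (𝓝 0) := by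
        simp only [h2]
        simpa using (tendsto_integral_cutoff ν).const_sub (∫ _, (1 : ℝ) ∂ν)
      simpa using (a1.add a2).const_mul ‖v‖
    rw [tendsto_iff_dist_tendsto_zero]
    refine squeeze_zero (fun _ => dist_nonneg) (fun N => ?_) e1
    have hb : ∀ p, |v p * (cutoff N p.1 * cutoff N p.2) - v p| ≤
        ‖v‖ * ((1 - cutoff N p.1) + (1 - cutoff N p.2)) := by
      intro p
      have e : v p * (cutoff N p.1 * cutoff N p.2) - v p =
        v p * (cutoff N p.1 * cutoff N p.2 - 1) := by ring
      rw [e, abs_mul]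
      refine mul_le_mul (v.norm_coe_le_norm p) ?_ (abs_nonneg _) (norm_nonneg _)
      rw [abs_of_nonpos (by linarith [(hc01 N p).2])]
      nlinarith [cutoff_le_one N p.1, cutoff_le_one N p.2]
    have hw : L (‖v‖ • ((onFst 1 - onFst (cutoffB N)) + (onSnd 1 - onSnd (cutoffB N)))) =
        ‖v‖ * ((L (onFst 1) - L (onFst (cutoffB N))) +
        (L (onSnd 1) - L (onSnd (cutoffB N)))) := by
      simp [map_add, map_sub, map_smul]
      ring
    rw [hInt, Real.dist_eq, ← map_sub, ← hw, abs_le, ← map_neg]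
    constructor
    · refine hmono _ _ fun p => ?_
      have := (abs_le.mp (hb p)).1
      simp [hι, truncC_apply]
      linarith
    · refine hmono _ _ fun p => ?_
      have := (abs_le.mp (hb p)).2
      simp [hι, truncC_apply]
      linarith
  exact tendsto_nhds_unique l2 l1

end

/-! ### The Hahn–Banach step -/

section

open scoped BoundedContinuousFunction

variable {μ ν : Measure ℝ} {P₀ : Measure (ℝ × ℝ)} {I : Set ℝ}

lemma gain_add (φ ψ h φ' ψ' h' : ℝ → ℝ) (p : ℝ × ℝ) :
    gain (fun x => φ x + φ' x) (fun x => ψ x + ψ' x) (fun x => h x + h' x) p =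
      gain φ ψ h p + gain φ' ψ' h' p := by
  simp only [gain]; ring

lemma gain_smul (a : ℝ) (φ ψ h : ℝ → ℝ) (p : ℝ × ℝ) :
    gain (fun x => a * φ x) (fun x => a * ψ x) (fun x => a * h x) p = a * gain φ ψ h p := by
  simp only [gain]; ring

lemma cost_add_le [IsFiniteMeasure P₀] {φ ψ h φ' ψ' h' : ℝ → ℝ}
    (hφ : Measurable φ) (hψ : Measurable ψ) (hh : Measurable h) :
    cost P₀ (fun x => φ x + φ' x) (fun x => ψ x + ψ' x) (fun x => h x + h' x) ≤
      cost P₀ φ ψ h + cost P₀ φ' ψ' h' := by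
  unfold cost
  have hm : Measurable (fun x => ENNReal.ofReal (h x) * ENNReal.ofReal (drift P₀ x)) :=
    hh.ennreal_ofReal.mul measurable_drift.ennreal_ofReal
  have e1 : ∫⁻ p, ENNReal.ofReal (gain (fun x => φ x + φ' x) (fun x => ψ x + ψ' x)
      (fun x => h x + h' x) p) ∂P₀ ≤ ∫⁻ p, ENNReal.ofReal (gain φ ψ h p) ∂P₀ +
        ∫⁻ p, ENNReal.ofReal (gain φ' ψ' h' p) ∂P₀ := by
    rw [← lintegral_add_left (measurable_gain hφ hψ hh).ennreal_ofReal]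
    refine lintegral_mono fun p => ?_
    rw [gain_add]; exact ENNReal.ofReal_add_le
  have e2 : ∫⁻ x, ENNReal.ofReal (h x + h' x) * ENNReal.ofReal (drift P₀ x) ∂P₀.fst ≤
      ∫⁻ x, ENNReal.ofReal (h x) * ENNReal.ofReal (drift P₀ x) ∂P₀.fst +
      ∫⁻ x, ENNReal.ofReal (h' x) * ENNReal.ofReal (drift P₀ x) ∂P₀.fst := by
    rw [← lintegral_add_left hm]
    refine lintegral_mono fun p => ?_
    rw [← add_mul]
    exact mul_le_mul_left ENNReal.ofReal_add_le _
  calc _ ≤ _ := add_le_add e1 e2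
    _ = _ := by ring

lemma cost_smul [IsFiniteMeasure P₀] {φ ψ h : ℝ → ℝ} {a : ℝ} (ha : 0 ≤ a)
    (hφ : Measurable φ) (hψ : Measurable ψ) (hh : Measurable h) :
    cost P₀ (fun x => a * φ x) (fun x => a * ψ x) (fun x => a * h x) =
      ENNReal.ofReal a * cost P₀ φ ψ h := by
  unfold cost
  have hm : Measurable (fun x => ENNReal.ofReal (h x) * ENNReal.ofReal (drift P₀ x)) :=
    hh.ennreal_ofReal.mul measurable_drift.ennreal_ofReal
  rw [mul_add, ← lintegral_const_mul _ (measurable_gain hφ hψ hh).ennreal_ofReal,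
    ← lintegral_const_mul _ hm]
  congr 1
  · refine lintegral_congr fun p => ?_
    rw [gain_smul, ENNReal.ofReal_mul ha]
  · refine lintegral_congr fun p => ?_
    rw [ENNReal.ofReal_mul ha, mul_assoc]

lemma cost_sub_const [IsFiniteMeasure P₀] {φ ψ h : ℝ → ℝ} {a : ℝ} (ha : 0 ≤ a)
    (hg : ∀ᵐ p ∂P₀, a ≤ gain φ ψ h p) :
    cost P₀ φ ψ h = cost P₀ (fun x => φ x - a) ψ h + ENNReal.ofReal a * P₀ univ := by
  unfold cost
  have : ∫⁻ p, ENNReal.ofReal (gain φ ψ h p) ∂P₀ =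
      ∫⁻ p, ENNReal.ofReal (gain (fun x => φ x - a) ψ h p) ∂P₀ + ENNReal.ofReal a * P₀ univ := by
    rw [← lintegral_const, ← lintegral_add_right _ measurable_const]
    refine lintegral_congr_ae ?_
    filter_upwards [hg] with p hp
    have e : gain φ ψ h p = gain (fun x => φ x - a) ψ h p + a := by simp only [gain]; ring
    have h0 : 0 ≤ gain (fun x => φ x - a) ψ h p := by rw [e] at hp; linarith
    rw [← ENNReal.ofReal_add h0 ha, ← e]
  rw [this]; ring

/-- Elements `v` for which the dual problem certifies that `∫ v dP ≥ 0` for every competitor `P`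
with `∫ c j dP ≥ α` for all `j`. -/
def InCone (μ ν : Measure ℝ) (P₀ : Measure (ℝ × ℝ)) [IsFiniteMeasure P₀] (I : Set ℝ)
    (c : ℕ → (ℝ × ℝ) →ᵇ ℝ) (α : ℝ) (v : (ℝ × ℝ) →ᵇ ℝ) : Prop :=
  ∃ (l b : ℝ) (j : ℕ) (φ ψ h : ℝ → ℝ) (A B : Set ℝ), 0 ≤ l ∧ 0 ≤ b ∧
    Feas μ ν I (fun _ => 0) φ ψ h A B ∧
    (∀ x ∈ A, ∀ y ∈ B, b + l * c j (x, y) - v (x, y) ≤ gain φ ψ h (x, y)) ∧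
    cost P₀ φ ψ h ≤ ENNReal.ofReal (b * P₀.real univ + l * α)

lemma ae_gain {f : ℝ × ℝ → ℝ≥0∞} {φ ψ h : ℝ → ℝ} {A B : Set ℝ} (H : Irr μ ν P₀ I)
    (F : Feas μ ν I f φ ψ h A B) : ∀ᵐ p ∂P₀, p.1 ∈ A ∧ p.2 ∈ B :=
  (ae_fst H.cpl F.μA).and (ae_snd H.cpl F.νB)

lemma feas_zero (H : Irr μ ν P₀ I) {φ ψ h : ℝ → ℝ} (hφ : Measurable φ) (hψ : Measurable ψ)
    (hh : Measurable h) (hg : ∀ x y, 0 ≤ gain φ ψ h (x, y)) (hs : EqMean μ ν ∨ ∀ x, 0 ≤ h x) :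
    Feas μ ν I (fun _ => 0) φ ψ h I (closure I) :=
  ⟨hφ, hψ, hh, H.opn.measurableSet, isClosed_closure.measurableSet, subset_rfl, subset_rfl, H.μI,
    H.νI, fun x _ y _ => hg x y, fun _ _ _ _ => zero_le, hs.imp_right fun h x _ => h x⟩

/-- Hahn–Banach step: a functional on bounded continuous functions dominated by the dual
problem. -/
theorem exists_functional [IsFiniteMeasure P₀] (H : Irr μ ν P₀ I) (c : ℕ → (ℝ × ℝ) →ᵇ ℝ)
    (hc0 : ∀ j p, 0 ≤ c j p) (hanti : ∀ i j, i ≤ j → ∀ p, c j p ≤ c i p) {α : ℝ} (hα : 0 ≤ α)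
    (hF : ∀ j φ ψ h A B, Feas μ ν I (fun p => ENNReal.ofReal (c j p)) φ ψ h A B →
      ENNReal.ofReal α ≤ cost P₀ φ ψ h) :
    ∃ L : ((ℝ × ℝ) →ᵇ ℝ) →ₗ[ℝ] ℝ, ∀ (l : ℝ) (j : ℕ) (φ ψ h : ℝ → ℝ) (K : ℝ) (v : (ℝ × ℝ) →ᵇ ℝ),
      0 ≤ l → Measurable φ → Measurable ψ → Measurable h → Integrable φ μ → Integrable ψ ν →
      (∀ x, |h x| ≤ K) → (EqMean μ ν ∨ ∀ x, 0 ≤ h x) →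
      (∀ x y, l * c j (x, y) ≤ gain φ ψ h (x, y) + v (x, y)) →
      l * α - (∫ x, φ x ∂μ + ∫ y, ψ y ∂ν) ≤ L v := by
  have hm : 0 < P₀.real univ := by
    rw [measureReal_def, ENNReal.toReal_pos_iff]
    refine ⟨pos_iff_ne_zero.mpr fun h => H.univ_ne_zero ?_, measure_lt_top _ _⟩
    rw [Measure.measure_univ_eq_zero] at h
    rw [← H.cpl.1.1, h]; simp
  have hmμ : μ.real univ = P₀.real univ := by
    rw [← H.cpl.1.1, measureReal_def, Measure.map_apply measurable_fst .univ]; rfl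
  have hmof : ENNReal.ofReal (P₀.real univ) = P₀ univ := by
    rw [measureReal_def, ENNReal.ofReal_toReal (measure_ne_top _ _)]
  set m := P₀.real univ with hmdef
  let s : PointedCone ℝ ((ℝ × ℝ) →ᵇ ℝ) :=
    { carrier := {v | InCone μ ν P₀ I c α v}
      zero_mem' := by
        refine ⟨0, 0, 0, fun _ => 0, fun _ => 0, fun _ => 0, I, closure I, le_rfl, le_rfl,
          feas_zero H measurable_const measurable_const measurable_const
            (by simp [gain]) (Or.inr fun _ => le_rfl), by simp [gain], by simp [cost, gain]⟩
      add_mem' := by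
        rintro v w ⟨l, b, j, φ, ψ, h, A, B, hl, hb, F, hg, hc⟩
          ⟨l', b', j', φ', ψ', h', A', B', hl', hb', F', hg', hc'⟩
        refine ⟨l + l', b + b', max j j', fun x => φ x + φ' x, fun x => ψ x + ψ' x,
          fun x => h x + h' x, A ∩ A', B ∩ B', by positivity, by positivity, ?_, ?_, ?_⟩
        · refine ⟨F.mφ.add F'.mφ, F.mψ.add F'.mψ, F.mh.add F'.mh, F.mA.inter F'.mA,
            F.mB.inter F'.mB, fun x hx => F.AI hx.1, fun x hx => F.BI hx.1, F.μA.and F'.μA,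
            F.νB.and F'.νB, ?_, fun _ _ _ _ => zero_le, ?_⟩
          · intro x hx y hy
            rw [gain_add]
            exact add_nonneg (F.nn x hx.1 y hy.1) (F'.nn x hx.2 y hy.2)
          · rcases F.sgn with h1 | h1
            · exact Or.inl h1
            rcases F'.sgn with h2 | h2
            · exact Or.inl h2
            exact Or.inr fun x hx => add_nonneg (h1 x hx.1) (h2 x hx.2)
        · intro x hx y hy
          rw [gain_add]
          have a1 := hg x hx.1 y hy.1
          have a2 := hg' x hx.2 y hy.2
          have a3 := mul_le_mul_of_nonneg_left (hanti j (max j j') (le_max_left _ _) (x, y)) hl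
          have a4 := mul_le_mul_of_nonneg_left (hanti j' (max j j') (le_max_right _ _) (x, y)) hl'
          rw [BoundedContinuousFunction.add_apply]
          linarith
        · refine (cost_add_le F.mφ F.mψ F.mh).trans ((add_le_add hc hc').trans ?_)
          rw [← ENNReal.ofReal_add (by positivity) (by positivity)]
          exact ENNReal.ofReal_le_ofReal (le_of_eq (by ring))
      smul_mem' := by
        rintro ⟨a, ha⟩ v ⟨l, b, j, φ, ψ, h, A, B, hl, hb, F, hg, hc⟩
        refine ⟨a * l, a * b, j, fun x => a * φ x, fun x => a * ψ x,
          fun x => a * h x, A, B, by positivity, by positivity, ?_, ?_, ?_⟩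
        · refine ⟨F.mφ.const_mul a, F.mψ.const_mul a, F.mh.const_mul a, F.mA, F.mB, F.AI, F.BI,
            F.μA, F.νB, ?_, fun _ _ _ _ => zero_le, F.sgn.imp_right fun hh x hx =>
              mul_nonneg ha (hh x hx)⟩
          intro x hx y hy
          rw [gain_smul]; exact mul_nonneg ha (F.nn x hx y hy)
        · intro x hx y hy
          rw [gain_smul]
          have a1 := mul_le_mul_of_nonneg_left (hg x hx y hy) ha
          have e : ((⟨a, ha⟩ : {a : ℝ // 0 ≤ a}) • v) (x, y) = a * v (x, y) := rfl
          rw [e]; linarith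
        · rw [cost_smul ha F.mφ F.mψ F.mh]
          refine (mul_le_mul_right hc _).trans (le_of_eq ?_)
          rw [← ENNReal.ofReal_mul ha]; congr 1; ring }
  have hmem : ∀ v, v ∈ s ↔ InCone μ ν P₀ I c α v := fun v => Iff.rfl
  have h1 : ∀ t : ℝ, t • (1 : (ℝ × ℝ) →ᵇ ℝ) = 0 → (RingHom.id ℝ) t • m = 0 := by
    intro t ht
    have := DFunLike.congr_fun ht (0, 0)
    simp at this
    simp [this]
  obtain ⟨L, hL1, hL2⟩ := riesz_extension s
    (LinearPMap.mkSpanSingleton' (σ := RingHom.id ℝ) (1 : (ℝ × ℝ) →ᵇ ℝ) m h1) (by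
      rintro ⟨x, hx⟩ hxs
      obtain ⟨t, rfl⟩ := Submodule.mem_span_singleton.mp hx
      rw [LinearPMap.mkSpanSingleton'_apply]
      obtain ⟨l, b, j, φ, ψ, h, A, B, hl, hb, F, hg, hc⟩ := (hmem _).mp hxs
      simp only [RingHom.id_apply, smul_eq_mul]
      refine mul_nonneg ?_ hm.le
      by_contra ht
      push Not at ht
      have hg' : ∀ x ∈ A, ∀ y ∈ B, b - t + l * c j (x, y) ≤ gain φ ψ h (x, y) := by
        intro x hx y hy
        have := hg x hx y hy
        simp at this
        linarith
      have hbt : 0 ≤ b - t := by linarith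
      have e := cost_sub_const (P₀ := P₀) (φ := φ) (ψ := ψ) (h := h) hbt (by
        filter_upwards [ae_gain H F] with p hp
        have := hg' p.1 hp.1 p.2 hp.2
        have := mul_nonneg hl (hc0 j p)
        linarith)
      have key : ENNReal.ofReal (l * α) ≤ cost P₀ (fun x => φ x - (b - t)) ψ h := by
        rcases hl.eq_or_lt with h0 | hl0
        · rw [← h0]; simp
        have k := hF j (fun x => l⁻¹ * (φ x - (b - t))) (fun x => l⁻¹ * ψ x)
          (fun x => l⁻¹ * h x) A B (by
            have hge : ∀ x ∈ A, ∀ y ∈ B, c j (x, y) ≤ gain (fun x => l⁻¹ * (φ x - (b - t)))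
                (fun x => l⁻¹ * ψ x) (fun x => l⁻¹ * h x) (x, y) := by
              intro x hx y hy
              rw [gain_smul l⁻¹ (fun x => φ x - (b - t)), ← div_eq_inv_mul, le_div_iff₀ hl0]
              have := hg' x hx y hy
              simp only [gain] at this ⊢
              linarith
            refine ⟨(F.mφ.sub_const _).const_mul _, F.mψ.const_mul _, F.mh.const_mul _, F.mA, F.mB,
              F.AI, F.BI, F.μA, F.νB, fun x hx y hy => (hc0 j _).trans (hge x hx y hy), 
              fun x hx y hy => ENNReal.ofReal_le_ofReal (hge x hx y hy), 
              F.sgn.imp_right fun hh x hx => mul_nonneg (by positivity) (hh x hx)⟩)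
        rw [cost_smul (φ := fun x => φ x - (b - t)) (by positivity) (F.mφ.sub_const _) F.mψ F.mh]
          at k
        calc ENNReal.ofReal (l * α) = ENNReal.ofReal l * ENNReal.ofReal α :=
              ENNReal.ofReal_mul hl
          _ ≤ ENNReal.ofReal l * (ENNReal.ofReal l⁻¹ * cost P₀ (fun x => φ x - (b - t)) ψ h) :=
              mul_le_mul_right k _
          _ = _ := by
              rw [← mul_assoc, ← ENNReal.ofReal_mul hl, mul_inv_cancel₀ hl0.ne']; simp
      have fin : ENNReal.ofReal (l * α + (b - t) * m) ≤ ENNReal.ofReal (b * m + l * α) := by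
        rw [ENNReal.ofReal_add (by positivity) (by positivity), ENNReal.ofReal_mul hbt, hmof]
        exact (add_le_add_left key _).trans (e.symm.trans_le hc)
      rw [ENNReal.ofReal_le_ofReal_iff (by positivity)] at fin
      nlinarith) (by
      intro y
      refine ⟨⟨‖y‖ • 1, Submodule.mem_span_singleton.mpr ⟨_, rfl⟩⟩, ?_⟩
      refine (hmem _).mpr ⟨0, 0, 0, fun _ => 0, fun _ => 0, fun _ => 0, I, closure I, le_rfl,
        le_rfl, feas_zero H measurable_const measurable_const measurable_const
            (by simp [gain]) (Or.inr fun _ => le_rfl), ?_, by simp [cost, gain]⟩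
      intro x _ z _
      have := (abs_le.mp (y.norm_coe_le_norm (x, z))).1
      simp [gain]
      linarith)
  have hLone : L 1 = m := by
    have := (hL1 ⟨(1 : ℝ) • (1 : (ℝ × ℝ) →ᵇ ℝ), Submodule.mem_span_singleton.mpr ⟨_, rfl⟩⟩).trans
      (LinearPMap.mkSpanSingleton'_apply _ _ h1 _ _)
    simpa using this
  refine ⟨L, fun l j φ ψ h K v hl hφ hψ hh iφ iψ hK hs hg => ?_⟩
  -- the functional is normalised by adding the constant `k` that balances the cost
  set S := ∫ x, φ x ∂μ + ∫ y, ψ y ∂ν with hS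
  set k := (S - l * α) / m with hk
  have hkm : k * m = S - l * α := div_mul_cancel₀ _ hm.ne'
  set b := ‖v‖ + |k| with hb
  have hfμ := H.fμ
  have hv : ∀ p, |v p| ≤ ‖v‖ := fun p => v.norm_coe_le_norm p
  have hgb : ∀ x y, b + l * c j (x, y) - (v + k • 1) (x, y) ≤
      gain (fun x => φ x + (b - k)) ψ h (x, y) := by
    intro x y
    have := hg x y
    simp [gain] at this ⊢
    linarith
  have hg0 : ∀ x y, 0 ≤ gain (fun x => φ x + (b - k)) ψ h (x, y) := by
    intro x y
    refine le_trans ?_ (hgb x y)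
    have := (abs_le.mp (hv (x, y))).2
    have := mul_nonneg hl (hc0 j (x, y))
    have := le_abs_self k
    simp
    linarith
  have hin : v + k • 1 ∈ s := by
    refine (hmem _).mpr ⟨l, b, j, fun x => φ x + (b - k), ψ, h, I, closure I, hl,
      by positivity, feas_zero H (hφ.add_const _) hψ hh hg0 hs, fun x _ y _ => hgb x y, ?_⟩
    rw [cost_of_integrable H.iμ H.iν H.cpl (hφ.add_const _) hψ hh (iφ.add (integrable_const _)) iψ
      hK (ae_of_all _ fun p => hg0 p.1 p.2) (hs.imp_right fun h => ae_of_all _ h)]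
    refine ENNReal.ofReal_le_ofReal (le_of_eq ?_)
    rw [integral_add iφ (integrable_const _), integral_const, hmμ, smul_eq_mul]
    linarith
  have := hL2 _ hin
  rw [map_add, map_smul, hLone, smul_eq_mul, hkm] at this
  linarith

end

/-! ### From functionals to supermartingale couplings -/

section

open scoped BoundedContinuousFunction NNReal

variable {μ ν : Measure ℝ} {P₀ : Measure (ℝ × ℝ)} {I : Set ℝ}

/-- Truncation of a real number to `[-N, N]`. -/
def trn (N : ℕ) (x : ℝ) : ℝ := max (-(N : ℝ)) (min N x)

lemma continuous_trn (N : ℕ) : Continuous (trn N) := by unfold trn; fun_prop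

lemma abs_trn_le (N : ℕ) (x : ℝ) : |trn N x| ≤ N := by
  have : (0 : ℝ) ≤ N := N.cast_nonneg
  exact abs_le.mpr ⟨le_max_left _ _, max_le (by linarith) (min_le_left _ _)⟩

lemma abs_trn_le_abs (N : ℕ) (x : ℝ) : |trn N x| ≤ |x| := by
  have : (0 : ℝ) ≤ N := N.cast_nonneg
  unfold trn
  rcases le_total x 0 with h | h
  · rw [min_eq_right (by linarith), abs_of_nonpos h, abs_of_nonpos (max_le (by linarith) h)]
    linarith [le_max_right (-(N : ℝ)) x]
  · rw [max_eq_right (le_min (by linarith) (by linarith)), abs_of_nonneg h,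
      abs_of_nonneg (le_min this h)]
    exact min_le_right _ _

lemma tendsto_trn (x : ℝ) : Tendsto (fun N => trn N x) atTop (𝓝 x) := by
  refine tendsto_const_nhds.congr' ?_
  filter_upwards [eventually_ge_atTop ⌈|x|⌉₊] with N hN
  have := abs_le.mp (show |x| ≤ N from Nat.ceil_le.mp hN)
  unfold trn
  rw [min_eq_right this.2, max_eq_right this.1]

lemma tendsto_integral_trn (hμ : Integrable (fun x : ℝ => x) μ) :
    Tendsto (fun N => ∫ x, |x - trn N x| ∂μ) atTop (𝓝 0) := by
  have h : Tendsto (fun N => ∫ x, |x - trn N x| ∂μ) atTop (𝓝 (∫ _, (0 : ℝ) ∂μ)) := by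
    refine tendsto_integral_of_dominated_convergence (fun x => 2 * |x|) ?_
      (hμ.abs.const_mul 2) ?_ ?_
    · intro N
      have := continuous_trn N
      exact Continuous.aestronglyMeasurable (by fun_prop)
    · intro N
      refine ae_of_all _ fun x => ?_
      rw [Real.norm_eq_abs, abs_abs]
      have := abs_sub x (trn N x)
      have := abs_trn_le_abs N x
      linarith
    · refine ae_of_all _ fun x => ?_
      simpa using ((tendsto_trn x).const_sub x).abs
  simpa using h

lemma integrable_abs_sub_trn [IsFiniteMeasure μ] (hμ : Integrable (fun x : ℝ => x) μ) (N : ℕ) :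
    Integrable (fun x => |x - trn N x|) μ := by
  have hi : Integrable (trn N) μ := Integrable.mono' hμ.abs
    (continuous_trn N).aestronglyMeasurable (ae_of_all _ fun x => abs_trn_le_abs N x)
  exact (hμ.sub hi).abs

/-- The supermartingale property may be tested on bounded continuous functions. -/
lemma super_of_continuous {P : Measure (ℝ × ℝ)} [IsFiniteMeasure P]
    (h1 : Integrable (fun p : ℝ × ℝ => p.1) P) (h2 : Integrable (fun p : ℝ × ℝ => p.2) P)
    (h : ∀ g : ℝ →ᵇ ℝ≥0, 0 ≤ ∫ p, (g p.1 : ℝ) * (p.1 - p.2) ∂P) : SupermartingaleProperty P := by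
  have hi : Integrable (fun p : ℝ × ℝ => p.1 - p.2) P := h1.sub h2
  have hcl : ∀ C : Set ℝ, IsClosed C → 0 ≤ ∫ p in Prod.fst ⁻¹' C, (p.1 - p.2) ∂P := by
    intro C hC
    have hm : MeasurableSet (Prod.fst ⁻¹' C : Set (ℝ × ℝ)) := measurable_fst hC.measurableSet
    have hlim : Tendsto (fun n => ∫ p, (hC.apprSeq n p.1 : ℝ) * (p.1 - p.2) ∂P) atTop
        (𝓝 (∫ p, (Prod.fst ⁻¹' C : Set (ℝ × ℝ)).indicator (fun p => p.1 - p.2) p ∂P)) := by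
      refine tendsto_integral_of_dominated_convergence (fun p => |p.1 - p.2|) ?_ hi.abs ?_ ?_
      · intro n
        have := (hC.apprSeq n).continuous
        exact Continuous.aestronglyMeasurable (by fun_prop)
      · intro n
        refine ae_of_all _ fun p => ?_
        rw [norm_mul, Real.norm_of_nonneg (NNReal.coe_nonneg _)]
        refine mul_le_of_le_one_left (abs_nonneg _) ?_
        exact_mod_cast HasOuterApproxClosed.apprSeq_apply_le_one hC n p.1
      · refine ae_of_all _ fun p => ?_
        have := (tendsto_pi_nhds.mp (HasOuterApproxClosed.tendsto_apprSeq hC)) p.1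
        have h3 : Tendsto (fun n => (hC.apprSeq n p.1 : ℝ)) atTop
            (𝓝 ((C.indicator (fun _ => (1 : ℝ≥0)) p.1 : ℝ≥0) : ℝ)) :=
          (NNReal.continuous_coe.tendsto _).comp this
        have h4 := h3.mul_const (p.1 - p.2)
        by_cases hp : p.1 ∈ C
        · rw [indicator_of_mem (show p ∈ Prod.fst ⁻¹' C from hp)]
          simpa [hp] using h4
        · rw [indicator_of_notMem (show p ∉ Prod.fst ⁻¹' C from hp)]
          simpa [hp] using h4
    rw [← integral_indicator hm]
    exact ge_of_tendsto' hlim fun n => h _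
  set τ : Measure ℝ := (P.withDensity fun p => ENNReal.ofReal ‖p.1 - p.2‖).map Prod.fst with hτ
  have hfin : IsFiniteMeasure (P.withDensity fun p : ℝ × ℝ => ENNReal.ofReal ‖p.1 - p.2‖) :=
    isFiniteMeasure_withDensity_ofReal hi.norm.2
  have hτA : ∀ A, MeasurableSet A → τ A = ∫⁻ p in Prod.fst ⁻¹' A, ENNReal.ofReal ‖p.1 - p.2‖ ∂P := by
    intro A hA
    rw [hτ, Measure.map_apply measurable_fst hA, withDensity_apply _ (measurable_fst hA)]
  intro A hA
  have hmA : MeasurableSet (Prod.fst ⁻¹' A : Set (ℝ × ℝ)) := measurable_fst hA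
  suffices 0 ≤ ∫ p in Prod.fst ⁻¹' A, (p.1 - p.2) ∂P by
    rw [integral_sub h1.integrableOn h2.integrableOn] at this
    rw [prod_univ_eq]
    exact sub_nonneg.mp this
  refine le_of_forall_pos_le_add fun ε hε => ?_
  obtain ⟨C, hCA, hC, hlt⟩ := hA.exists_isClosed_diff_lt (μ := τ) (measure_ne_top _ _)
    (ENNReal.ofReal_pos.mpr hε).ne'
  have hd : MeasurableSet (A \ C) := hA.diff hC.measurableSet
  have hsplit : ∫ p in Prod.fst ⁻¹' A, (p.1 - p.2) ∂P =
      ∫ p in Prod.fst ⁻¹' C, (p.1 - p.2) ∂P + ∫ p in Prod.fst ⁻¹' (A \ C), (p.1 - p.2) ∂P := by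
    rw [← setIntegral_union _ (measurable_fst hd) hi.integrableOn hi.integrableOn,
      ← preimage_union, union_diff_cancel hCA]
    exact Disjoint.preimage _ disjoint_sdiff_right
  have hsmall : |∫ p in Prod.fst ⁻¹' (A \ C), (p.1 - p.2) ∂P| ≤ ε := by
    rw [← Real.norm_eq_abs]
    refine (norm_integral_le_lintegral_norm _).trans ?_
    rw [← hτA _ hd]
    exact ENNReal.toReal_le_of_le_ofReal hε.le hlt.le
  have := hcl C hC
  have := (abs_le.mp hsmall).1
  linarith

/-- Duality for decreasing sequences of bounded continuous functions: a lower bound for the dual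
problem yields a single coupling. -/
theorem exists_coupling [IsFiniteMeasure P₀] (H : Irr μ ν P₀ I) (c : ℕ → (ℝ × ℝ) →ᵇ ℝ)
    (hc0 : ∀ j p, 0 ≤ c j p) (hanti : ∀ i j, i ≤ j → ∀ p, c j p ≤ c i p) {α : ℝ} (hα : 0 ≤ α)
    (hF : ∀ j φ ψ h A B, Feas μ ν I (fun p => ENNReal.ofReal (c j p)) φ ψ h A B →
      ENNReal.ofReal α ≤ cost P₀ φ ψ h) :
    ∃ P, IsFiniteMeasure P ∧ IsSupermartingaleCoupling P μ ν ∧ ∀ j, α ≤ ∫ p, c j p ∂P := by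
  have hfμ := H.fμ
  have hfν := H.fν
  obtain ⟨L, hL⟩ := exists_functional H c hc0 hanti hα hF
  have iz : ∀ ρ : Measure ℝ, Integrable (fun _ : ℝ => (0 : ℝ)) ρ := fun ρ => integrable_zero _ _ _
  have mz : Measurable (fun _ : ℝ => (0 : ℝ)) := measurable_const
  have hpos : ∀ v : (ℝ × ℝ) →ᵇ ℝ, (∀ p, 0 ≤ v p) → 0 ≤ L v := by
    intro v hv
    have := hL 0 0 (fun _ => 0) (fun _ => 0) (fun _ => 0) 0 v le_rfl mz mz mz (iz _) (iz _)
      (by simp) (Or.inr fun _ => le_rfl) (fun x y => by simpa [gain] using hv (x, y))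
    simpa using this
  have h1' : ∀ φ : ℝ →ᵇ ℝ, ∫ x, φ x ∂μ ≤ L (onFst φ) := by
    intro φ
    have := hL 0 0 (fun x => - φ x) (fun _ => 0) (fun _ => 0) 0 (onFst φ) le_rfl
      φ.continuous.measurable.neg mz mz (φ.integrable μ).neg (iz _)
      (by simp) (Or.inr fun _ => le_rfl) (fun x y => by simp [gain])
    simpa [integral_neg] using this
  have h2' : ∀ φ : ℝ →ᵇ ℝ, ∫ x, φ x ∂ν ≤ L (onSnd φ) := by
    intro φ
    have := hL 0 0 (fun _ => 0) (fun x => - φ x) (fun _ => 0) 0 (onSnd φ) le_rfl mz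
      φ.continuous.measurable.neg mz (iz _) (φ.integrable ν).neg
      (by simp) (Or.inr fun _ => le_rfl) (fun x y => by simp [gain])
    simpa [integral_neg] using this
  have h1 : ∀ φ : ℝ →ᵇ ℝ, L (onFst φ) = ∫ x, φ x ∂μ := by
    intro φ
    refine le_antisymm ?_ (h1' φ)
    have := h1' (-φ)
    have e : onFst (-φ) = - onFst φ := rfl
    rw [e, map_neg] at this
    simp only [BoundedContinuousFunction.coe_neg, Pi.neg_apply, integral_neg] at this
    linarith
  have h2 : ∀ φ : ℝ →ᵇ ℝ, L (onSnd φ) = ∫ x, φ x ∂ν := by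
    intro φ
    refine le_antisymm ?_ (h2' φ)
    have := h2' (-φ)
    have e : onSnd (-φ) = - onSnd φ := rfl
    rw [e, map_neg] at this
    simp only [BoundedContinuousFunction.coe_neg, Pi.neg_apply, integral_neg] at this
    linarith
  obtain ⟨P, hP, hLP⟩ := exists_measure_of_functional L hpos h1 h2
  have hcpl : IsCoupling P μ ν := by
    constructor
    · refine ext_of_forall_integral_eq_of_IsFiniteMeasure fun φ => ?_
      rw [integral_map measurable_fst.aemeasurable φ.continuous.aestronglyMeasurable, ← h1, hLP]
      rfl
    · refine ext_of_forall_integral_eq_of_IsFiniteMeasure fun φ => ?_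
      rw [integral_map measurable_snd.aemeasurable φ.continuous.aestronglyMeasurable, ← h2, hLP]
      rfl
  have j1 : Integrable (fun p : ℝ × ℝ => p.1) P := by
    have := H.iμ
    rw [← hcpl.1] at this
    exact this.comp_measurable measurable_fst
  have j2 : Integrable (fun p : ℝ × ℝ => p.2) P := by
    have := H.iν
    rw [← hcpl.2] at this
    exact this.comp_measurable measurable_snd
  refine ⟨P, hP, ⟨hcpl, super_of_continuous j1 j2 fun g => ?_⟩, fun j => ?_⟩
  · obtain ⟨K, hK⟩ : ∃ K : ℝ, ∀ x, (g x : ℝ) ≤ K :=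
      ⟨nndist g 0, fun x => NNReal.coe_le_coe.mpr (BoundedContinuousFunction.NNReal.upper_bound g x)⟩
    have hK0 : 0 ≤ K := (NNReal.coe_nonneg _).trans (hK 0)
    have gc := g.continuous
    let v : ℕ → (ℝ × ℝ) →ᵇ ℝ := fun N => BoundedContinuousFunction.ofNormedAddCommGroup
      (fun p => (g p.1 : ℝ) * (trn N p.1 - trn N p.2))
      (by have := continuous_trn N; fun_prop) (K * (N + N)) (fun p => by
        rw [norm_mul, Real.norm_of_nonneg (NNReal.coe_nonneg _)]
        refine mul_le_mul (hK _) ?_ (norm_nonneg _) hK0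
        exact (abs_sub _ _).trans (add_le_add (abs_trn_le _ _) (abs_trn_le _ _)))
    have hvN : ∀ N p, v N p = (g p.1 : ℝ) * (trn N p.1 - trn N p.2) := fun _ _ => rfl
    have hb : ∀ N, -(K * ∫ x, |x - trn N x| ∂μ + K * ∫ x, |x - trn N x| ∂ν) ≤ ∫ p, v N p ∂P := by
      intro N
      have ct := continuous_trn N
      have := hL 0 0 (fun x => K * |x - trn N x|) (fun x => K * |x - trn N x|) (fun x => g x) K (v N)
        le_rfl (Continuous.measurable (by fun_prop)) (Continuous.measurable (by fun_prop))
        (Continuous.measurable (by fun_prop))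
        ((integrable_abs_sub_trn H.iμ N).const_mul K) ((integrable_abs_sub_trn H.iν N).const_mul K)
        (fun x => by rw [abs_of_nonneg (NNReal.coe_nonneg _)]; exact hK x)
        (Or.inr fun x => NNReal.coe_nonneg _) (fun x y => by
          rw [hvN, zero_mul]
          simp only [gain]
          have e1 : -|x - trn N x| ≤ - (x - trn N x) := neg_le_neg (le_abs_self _)
          have e2 := neg_abs_le (y - trn N y)
          have e3 : (g x : ℝ) * (y - x) + (g x : ℝ) * (trn N x - trn N y) =
            (g x : ℝ) * (- (x - trn N x) + (y - trn N y)) := by ring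
          have e4 := mul_le_mul_of_nonneg_left (add_le_add e1 e2) (NNReal.coe_nonneg (g x))
          have e5 := mul_le_mul_of_nonneg_right (hK x) (add_nonneg (abs_nonneg (x - trn N x))
            (abs_nonneg (y - trn N y)))
          linarith)
      rw [hLP, integral_const_mul, integral_const_mul] at this
      linarith
    have l1 : Tendsto (fun N => -(K * ∫ x, |x - trn N x| ∂μ + K * ∫ x, |x - trn N x| ∂ν)) atTop
        (𝓝 0) := by
      simpa using (((tendsto_integral_trn H.iμ).const_mul K).add
        ((tendsto_integral_trn H.iν).const_mul K)).neg
    have l2 : Tendsto (fun N => ∫ p, v N p ∂P) atTop (𝓝 (∫ p, (g p.1 : ℝ) * (p.1 - p.2) ∂P)) := by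
      refine tendsto_integral_of_dominated_convergence (fun p => K * (|p.1| + |p.2|)) ?_
        ((j1.abs.add j2.abs).const_mul K) ?_ ?_
      · intro N; exact (v N).continuous.aestronglyMeasurable
      · intro N
        refine ae_of_all _ fun p => ?_
        rw [hvN, norm_mul, Real.norm_of_nonneg (NNReal.coe_nonneg _)]
        refine mul_le_mul (hK _) ?_ (norm_nonneg _) hK0
        exact (abs_sub _ _).trans (add_le_add (abs_trn_le_abs _ _) (abs_trn_le_abs _ _))
      · refine ae_of_all _ fun p => ?_
        exact ((tendsto_trn p.1).sub (tendsto_trn p.2)).const_mul _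
    exact le_of_tendsto_of_tendsto' l1 l2 hb
  · have := hL 1 j (fun _ => 0) (fun _ => 0) (fun _ => 0) 0 (c j) zero_le_one mz mz mz (iz _) (iz _)
      (by simp) (Or.inr fun _ => le_rfl) (fun x y => by simp [gain])
    rw [hLP] at this
    simpa using this

end

/-! ### Duality by capacitability -/

section

open scoped BoundedContinuousFunction NNReal

variable {μ ν : Measure ℝ} {P₀ : Measure (ℝ × ℝ)} {I : Set ℝ}

/-- The upper envelope of a set `E` of points `(z, t)`: the least function above all of them. -/
def env (E : Set ((ℝ × ℝ) × ℝ)) (z : ℝ × ℝ) : ℝ≥0∞ :=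
  ⨆ (t : ℝ) (_ : (z, t) ∈ E), ENNReal.ofReal t

lemma le_env {E : Set ((ℝ × ℝ) × ℝ)} {z : ℝ × ℝ} {t : ℝ} (h : (z, t) ∈ E) :
    ENNReal.ofReal t ≤ env E z := le_iSup₂ (f := fun t (_ : (z, t) ∈ E) => ENNReal.ofReal t) t h

lemma env_le {E : Set ((ℝ × ℝ) × ℝ)} {z : ℝ × ℝ} {a : ℝ≥0∞}
    (h : ∀ t, (z, t) ∈ E → ENNReal.ofReal t ≤ a) : env E z ≤ a := iSup₂_le h

lemma env_mono {E E' : Set ((ℝ × ℝ) × ℝ)} (h : E ⊆ E') (z : ℝ × ℝ) : env E z ≤ env E' z :=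
  env_le fun _ ht => le_env (h ht)

/-- The dual problem for the payoff `f` has a competitor of cost at most `β`. -/
def Dual (μ ν : Measure ℝ) (P₀ : Measure (ℝ × ℝ)) [IsFiniteMeasure P₀] (I : Set ℝ)
    (f : ℝ × ℝ → ℝ≥0∞) (β : ℝ≥0∞) : Prop :=
  ∃ φ ψ h A B, Feas μ ν I f φ ψ h A B ∧ cost P₀ φ ψ h ≤ β

lemma Feas.mono {f g : ℝ × ℝ → ℝ≥0∞} {φ ψ h : ℝ → ℝ} {A B : Set ℝ} (F : Feas μ ν I g φ ψ h A B)
    (hfg : ∀ p, f p ≤ g p) : Feas μ ν I f φ ψ h A B :=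
  { F with dom := fun x hx y hy => (hfg _).trans (F.dom x hx y hy) }

lemma Dual.mono [IsFiniteMeasure P₀] {f g : ℝ × ℝ → ℝ≥0∞} {β : ℝ≥0∞} (D : Dual μ ν P₀ I g β)
    (hfg : ∀ p, f p ≤ g p) : Dual μ ν P₀ I f β := by
  obtain ⟨φ, ψ, h, A, B, F, hc⟩ := D
  exact ⟨φ, ψ, h, A, B, F.mono hfg, hc⟩

/-- The dual value is continuous along increasing sequences of payoffs. -/
lemma Dual.iSup [IsFiniteMeasure P₀] (H : Irr μ ν P₀ I) {f : ℕ → ℝ × ℝ → ℝ≥0∞} (hf : Monotone f)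
    {β : ℝ≥0∞} (hβ : β ≠ ⊤) (D : ∀ n, Dual μ ν P₀ I (f n) β) :
    Dual μ ν P₀ I (fun p => ⨆ n, f n p) β := by
  refine compactness H hf hβ fun n => ?_
  obtain ⟨φ, ψ, h, A, B, F, hc⟩ := D n
  exact ⟨φ, ψ, h, A, B, F, hc.trans le_self_add⟩

/-- Sequences whose first coordinates are dominated by those of `s` are eventually close to the
compact box below `s`. -/
lemma exists_subset_of_box {s : ℕ → ℕ} {U : Set (ℕ → ℕ)} (hU : IsOpen U)
    (hs : {x : ℕ → ℕ | ∀ i, x i ≤ s i} ⊆ U) : ∃ n, {x : ℕ → ℕ | ∀ i < n, x i ≤ s i} ⊆ U := by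
  by_contra hc
  push Not at hc
  simp only [not_subset] at hc
  choose x hx hxU using hc
  have hcpt : IsCompact {x : ℕ → ℕ | ∀ i, x i ≤ s i} := by
    have : {x : ℕ → ℕ | ∀ i, x i ≤ s i} = Set.pi univ fun i => Iic (s i) := by
      ext x; simp [Set.mem_pi]; rfl
    rw [this]
    exact isCompact_univ_pi fun i => (finite_Iic (s i)).isCompact
  obtain ⟨y, hy, u, hu, hlim⟩ := hcpt.tendsto_subseq (x := fun n i => min (x n i) (s i))
    (fun n i => min_le_right _ _)
  have hlim' : Tendsto (fun n => x (u n)) atTop (𝓝 y) := by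
    rw [tendsto_pi_nhds] at hlim ⊢
    intro i
    refine (hlim i).congr' ?_
    filter_upwards [hu.tendsto_atTop.eventually_gt_atTop i] with n hn
    exact min_eq_left (hx (u n) i hn)
  obtain ⟨n, hn⟩ := (hlim'.eventually (hU.mem_nhds (hs hy))).exists
  exact hxU _ hn

/-- A Lipschitz majorant of the envelope of the `δ`-thickening of a compact set `K`. -/
lemma exists_majorant {K : Set ((ℝ × ℝ) × ℝ)} (hK : IsCompact K) (hne : K.Nonempty) {δ l : ℝ}
    (hδ : 0 < δ) (hl : 0 ≤ l) : ∃ c : (ℝ × ℝ) →ᵇ ℝ, (∀ p, 0 ≤ c p) ∧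
      (∀ z, env (Metric.thickening δ K) z ≤ ENNReal.ofReal (c z)) ∧
      ∀ z, ∃ q ∈ K, c z = max 0 (q.2 + δ + l * δ - l * dist z q.1) := by
  set F : ℝ × ℝ → ((ℝ × ℝ) × ℝ) → ℝ := fun z q => max 0 (q.2 + δ + l * δ - l * dist z q.1) with hF
  have hFc : Continuous (Function.uncurry F) := by
    simp only [hF, Function.uncurry_def]
    fun_prop
  have hcont : Continuous fun z => sSup (F z '' K) := hK.continuous_sSup hFc
  have hFz : ∀ z, ContinuousOn (F z) K := fun z =>
    (hFc.comp (by fun_prop : Continuous fun q => (z, q))).continuousOn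
  have hatt : ∀ z, ∃ q ∈ K, sSup (F z '' K) = F z q := fun z => hK.exists_sSup_image_eq hne (hFz z)
  have hup : ∀ z, ∀ q ∈ K, F z q ≤ sSup (F z '' K) := fun z q hq =>
    le_csSup (hK.bddAbove_image (hFz z)) (mem_image_of_mem _ hq)
  obtain ⟨T, hT⟩ : ∃ T : ℝ, ∀ q ∈ K, q.2 ≤ T := by
    obtain ⟨T, hT⟩ := hK.bddAbove_image (f := Prod.snd) continuous_snd.continuousOn
    exact ⟨T, fun q hq => hT (mem_image_of_mem _ hq)⟩
  have h0 : ∀ z, 0 ≤ sSup (F z '' K) := fun z => by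
    obtain ⟨q, -, e⟩ := hatt z
    rw [e]; exact le_max_left _ _
  refine ⟨BoundedContinuousFunction.ofNormedAddCommGroup _ hcont (max 0 (T + δ + l * δ)) ?_,
    h0, ?_, hatt⟩
  · intro z
    rw [Real.norm_of_nonneg (h0 z)]
    obtain ⟨q, hq, e⟩ := hatt z
    rw [e]
    refine max_le_max le_rfl ?_
    have := hT q hq
    have : 0 ≤ l * dist z q.1 := by positivity
    linarith
  · intro z
    refine env_le fun t ht => ENNReal.ofReal_le_ofReal ?_
    obtain ⟨q, hq, hd⟩ := Metric.mem_thickening_iff.mp ht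
    rw [Prod.dist_eq, max_lt_iff] at hd
    refine le_trans ?_ (hup z q hq)
    refine le_trans ?_ (le_max_right _ _)
    have h1 := mul_le_mul_of_nonneg_left hd.1.le hl
    have h2 := (abs_lt.mp (Real.dist_eq t q.2 ▸ hd.2)).2
    simp only at h1
    linarith

/-- A payoff with compact hypograph part is the decreasing limit of bounded continuous majorants of
its neighbourhoods. -/
lemma exists_approx {K : Set ((ℝ × ℝ) × ℝ)} (hK : IsCompact K) (hne : K.Nonempty) :
    ∃ c : ℕ → (ℝ × ℝ) →ᵇ ℝ, (∀ j p, 0 ≤ c j p) ∧ (∀ i j, i ≤ j → ∀ p, c j p ≤ c i p) ∧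
      (∀ j, ∃ δ > 0, ∀ z, env (Metric.thickening δ K) z ≤ ENNReal.ofReal (c j z)) ∧
      ∀ z, ⨅ j, ENNReal.ofReal (c j z) ≤ env K z := by
  have hex : ∀ j : ℕ, ∃ c : (ℝ × ℝ) →ᵇ ℝ, (∀ p, 0 ≤ c p) ∧
      (∀ z, env (Metric.thickening (1 / ((j : ℝ) + 1) ^ 2) K) z ≤ ENNReal.ofReal (c z)) ∧
      ∀ z, ∃ q ∈ K, c z = max 0 (q.2 + 1 / ((j : ℝ) + 1) ^ 2 + (j + 1) * (1 / ((j : ℝ) + 1) ^ 2)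
        - (j + 1) * dist z q.1) := fun j =>
    exists_majorant hK hne (by positivity) (by positivity)
  choose b hb0 hb1 hb2 using hex
  let c : ℕ → (ℝ × ℝ) →ᵇ ℝ := fun j => Nat.rec (b 0) (fun n g => g ⊓ b (n + 1)) j
  have cs : ∀ j p, c (j + 1) p = min (c j p) (b (j + 1) p) := fun j p => rfl
  have cb : ∀ j p, c j p ≤ b j p := by
    intro j p
    cases j with
    | zero => exact le_rfl
    | succ j => rw [cs]; exact min_le_right _ _
  refine ⟨c, ?_, ?_, ?_, ?_⟩
  · intro j p
    induction j with
    | zero => exact hb0 0 p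
    | succ j ih => rw [cs]; exact le_min ih (hb0 _ _)
  · intro i j hij p
    exact antitone_nat_of_succ_le (f := fun j => c j p) (fun n => by
      simp only [cs]; exact min_le_left _ _) hij
  · intro j
    refine ⟨1 / ((j : ℝ) + 1) ^ 2, by positivity, fun z => ?_⟩
    induction j with
    | zero => exact hb1 0 z
    | succ j ih =>
      rw [cs, ENNReal.ofReal_min]
      refine le_min (le_trans (env_mono (Metric.thickening_mono ?_ _) z) ih) (hb1 _ z)
      push_cast
      gcongr
      linarith
  · intro z
    refine le_trans (iInf_mono fun j => ENNReal.ofReal_le_ofReal (cb j z)) ?_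
    refine le_of_forall_lt fun a ha => ?_
    obtain ⟨a', haa', ha'⟩ := exists_between ha
    refine haa'.trans_le ?_
    have ha't : a' ≠ ⊤ := ha'.ne_top
    have hab : ∀ j, a'.toReal < b j z := by
      intro j
      have := ha'.trans_le (iInf_le _ j)
      exact (ENNReal.lt_ofReal_iff_toReal_lt ha't).mp this
    choose q hqK hq using fun j => hb2 j z
    have hqj : ∀ j : ℕ, a'.toReal < (q j).2 + 1 / ((j : ℝ) + 1) ^ 2 +
        (j + 1) * (1 / ((j : ℝ) + 1) ^ 2) - (j + 1) * dist z (q j).1 := by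
      intro j
      have := hab j
      rw [hq j, lt_max_iff] at this
      exact this.resolve_left (not_lt.mpr ENNReal.toReal_nonneg)
    obtain ⟨r, hr, u, hu, hlim⟩ := hK.tendsto_subseq hqK
    have l0 : Tendsto (fun j : ℕ => 1 / ((j : ℝ) + 1)) atTop (𝓝 0) :=
      tendsto_one_div_add_atTop_nhds_zero_nat
    have hsimp : ∀ j : ℕ, a'.toReal < (q j).2 + (1 / ((j : ℝ) + 1)) * (1 / ((j : ℝ) + 1)) +
        1 / ((j : ℝ) + 1) - (j + 1) * dist z (q j).1 := by
      intro j
      have := hqj j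
      have e1 : 1 / ((j : ℝ) + 1) ^ 2 = (1 / ((j : ℝ) + 1)) * (1 / ((j : ℝ) + 1)) := by
        field_simp
      have e2 : ((j : ℝ) + 1) * (1 / ((j : ℝ) + 1) ^ 2) = 1 / ((j : ℝ) + 1) := by field_simp
      rw [e2, e1] at this
      exact this
    have l2 : Tendsto (fun j => (q (u j)).2) atTop (𝓝 r.2) :=
      (continuous_snd.tendsto r).comp hlim
    have l1 : Tendsto (fun j => (q (u j)).1) atTop (𝓝 r.1) :=
      (continuous_fst.tendsto r).comp hlim
    have l3 : Tendsto (fun j => 1 / ((u j : ℝ) + 1)) atTop (𝓝 0) := l0.comp hu.tendsto_atTop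
    have hr2 : a'.toReal ≤ r.2 := by
      have l4 := (l2.add (l3.mul l3)).add l3
      simp only [mul_zero, add_zero] at l4
      refine ge_of_tendsto' l4 fun j => ?_
      have := hsimp (u j)
      have : 0 ≤ ((u j : ℝ) + 1) * dist z (q (u j)).1 := by positivity
      linarith
    have hz : z = r.1 := by
      have l5 : Tendsto (fun j => dist z (q (u j)).1) atTop (𝓝 (dist z r.1)) :=
        tendsto_const_nhds.dist l1
      have l6 : Tendsto (fun j => (1 / ((u j : ℝ) + 1)) * ((q (u j)).2 +
        (1 / ((u j : ℝ) + 1)) * (1 / ((u j : ℝ) + 1)) + 1 / ((u j : ℝ) + 1))) atTop (𝓝 0) := by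
        simpa using l3.mul ((l2.add (l3.mul l3)).add l3)
      have : dist z r.1 ≤ 0 := by
        refine le_of_tendsto_of_tendsto' l5 l6 fun j => ?_
        have h1 := hsimp (u j)
        have h2 : (0 : ℝ) ≤ a'.toReal := ENNReal.toReal_nonneg
        have h3 : (0 : ℝ) < (u j : ℝ) + 1 := by positivity
        rw [one_div_mul_eq_div, le_div_iff₀ h3]
        linarith
      exact dist_le_zero.mp this
    calc a' = ENNReal.ofReal a'.toReal := (ENNReal.ofReal_toReal ha't).symm
      _ ≤ ENNReal.ofReal r.2 := ENNReal.ofReal_le_ofReal hr2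
      _ ≤ env K z := le_env (by rw [hz]; exact hr)

/-- Duality without gap, with dual attainment: Choquet's capacitability argument reduces a Borel
payoff to payoffs with compact hypograph. -/
theorem duality [IsFiniteMeasure P₀] (H : Irr μ ν P₀ I) {f : ℝ × ℝ → ℝ≥0∞} (hf : Measurable f)
    {V : ℝ≥0∞} (hV : V ≠ ⊤) (hS : ∀ P, IsSupermartingaleCoupling P μ ν → ∫⁻ p, f p ∂P ≤ V) :
    Dual μ ν P₀ I f V := by
  suffices key : ∀ α : ℝ, 0 ≤ α → V < ENNReal.ofReal α → Dual μ ν P₀ I f (ENNReal.ofReal α) by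
    have := compactness H (f := fun _ => f) monotone_const hV (fun n => by
      have hn : ((n : ℝ≥0∞) + 1)⁻¹ ≠ ⊤ := by simp
      have hne : V + ((n : ℝ≥0∞) + 1)⁻¹ ≠ ⊤ := ENNReal.add_ne_top.mpr ⟨hV, hn⟩
      have := key (V + ((n : ℝ≥0∞) + 1)⁻¹).toReal ENNReal.toReal_nonneg (by
        rw [ENNReal.ofReal_toReal hne]
        exact ENNReal.lt_add_right hV (ENNReal.inv_ne_zero.mpr (by finiteness)))
      rwa [ENNReal.ofReal_toReal hne] at this)
    obtain ⟨φ, ψ, h, A, B, F, hc⟩ := this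
    exact ⟨φ, ψ, h, A, B, F.mono fun p => by simp, hc⟩
  intro α hα hVα
  by_contra hD
  set G : Set ((ℝ × ℝ) × ℝ) := {q | 0 ≤ q.2 ∧ (q.2 = 0 ∨ ENNReal.ofReal q.2 < f q.1)} with hG
  have hGm : MeasurableSet G := by
    refine (measurableSet_le measurable_const measurable_snd).inter
      ((measurableSet_eq_fun measurable_snd measurable_const).union
        (measurableSet_lt measurable_snd.ennreal_ofReal (hf.comp measurable_fst)))
  have hGf : ∀ z, env G z = f z := by
    intro z
    refine le_antisymm (env_le fun t ht => ?_) (le_of_forall_lt fun a ha => ?_)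
    · rcases ht.2 with h | h
      · simp only at h; simp [h]
      · exact h.le
    · obtain ⟨a', haa', ha'⟩ := exists_between ha
      refine haa'.trans_le ?_
      have e : ENNReal.ofReal a'.toReal = a' := ENNReal.ofReal_toReal ha'.ne_top
      rw [← e]
      exact le_env ⟨ENNReal.toReal_nonneg, Or.inr (by simpa only [e] using ha')⟩
  obtain ⟨θ, hθc, hθ⟩ : ∃ θ : (ℕ → ℕ) → (ℝ × ℝ) × ℝ, Continuous θ ∧ range θ = G := by
    have h' := hGm.analyticSet
    rw [AnalyticSet] at h'
    rcases h' with h' | h'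
    · exact absurd (show ((0, 0), 0) ∈ G from ⟨le_rfl, Or.inl rfl⟩) (by rw [h']; simp)
    · exact h'
  -- the bounds on the coordinates are selected one at a time
  have step : ∀ (C : Set (ℕ → ℕ)) (n : ℕ), ∃ k : ℕ,
      ¬ Dual μ ν P₀ I (env (θ '' C)) (ENNReal.ofReal α) →
      ¬ Dual μ ν P₀ I (env (θ '' (C ∩ {x | x n ≤ k}))) (ENNReal.ofReal α) := by
    intro C n
    by_contra hc
    push Not at hc
    refine (hc 0).1 ?_
    have := Dual.iSup H (f := fun k => env (θ '' (C ∩ {x | x n ≤ k}))) (fun k k' hk z =>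
      env_mono (image_mono (inter_subset_inter_right _ fun x hx => le_trans hx hk)) z)
      ENNReal.ofReal_ne_top fun k => (hc k).2
    refine this.mono fun p => env_le fun t ht => ?_
    obtain ⟨x, hx, e⟩ := ht
    exact le_trans (le_env (E := θ '' (C ∩ {y | y n ≤ x n})) ⟨x, ⟨hx, le_refl (x n)⟩, e⟩)
      (le_iSup (fun k => env (θ '' (C ∩ {x | x n ≤ k})) p) (x n))
  choose k hk using step
  let C : ℕ → Set (ℕ → ℕ) := fun n => Nat.rec univ (fun n D => D ∩ {x | x n ≤ k D n}) n
  have C0 : C 0 = univ := rfl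
  have Cs : ∀ n, C (n + 1) = C n ∩ {x | x n ≤ k (C n) n} := fun n => rfl
  have hC : ∀ n, ¬ Dual μ ν P₀ I (env (θ '' C n)) (ENNReal.ofReal α) := by
    intro n
    induction n with
    | zero =>
      rw [C0, image_univ, hθ]
      exact fun D => hD (D.mono fun p => (hGf p).ge)
    | succ n ih => rw [Cs]; exact hk _ _ ih
  set s : ℕ → ℕ := fun n => k (C n) n with hs
  have hCs : ∀ n, {x : ℕ → ℕ | ∀ i < n, x i ≤ s i} = C n := by
    intro n
    induction n with
    | zero => rw [C0]; simp
    | succ n ih =>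
      rw [Cs, ← ih]
      ext x
      simp only [mem_ofPred_eq, mem_inter_iff, Nat.lt_succ_iff_lt_or_eq]
      constructor
      · intro h; exact ⟨fun i hi => h i (Or.inl hi), by rw [ih]; exact h n (Or.inr rfl)⟩
      · rintro ⟨h1, h2⟩ i (hi | rfl)
        · exact h1 i hi
        · rw [ih] at h2; exact h2
  set Bx : Set (ℕ → ℕ) := {x | ∀ i, x i ≤ s i} with hBx
  have hBc : IsCompact Bx := by
    have : Bx = Set.pi univ fun i => Iic (s i) := by
      ext x; simp [hBx, Set.mem_pi]; rfl
    rw [this]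
    exact isCompact_univ_pi fun i => (finite_Iic (s i)).isCompact
  have hKc : IsCompact (θ '' Bx) := hBc.image hθc
  have hKne : (θ '' Bx).Nonempty := ⟨θ s, mem_image_of_mem _ fun i => le_rfl⟩
  obtain ⟨c, hc0, hanti, hc1, hc2⟩ := exists_approx hKc hKne
  obtain ⟨P, hPf, hP, hPc⟩ := exists_coupling H c hc0 hanti hα (by
    intro j φ ψ h A B F
    by_contra hlt
    push Not at hlt
    obtain ⟨δ, hδ, hcδ⟩ := hc1 j
    obtain ⟨n, hn⟩ := exists_subset_of_box (s := s) (U := θ ⁻¹' Metric.thickening δ (θ '' Bx))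
      (Metric.isOpen_thickening.preimage hθc)
      (fun x hx => Metric.self_subset_thickening hδ _ (mem_image_of_mem _ hx))
    rw [hCs] at hn
    exact hC n ⟨φ, ψ, h, A, B, F.mono fun p =>
      (env_mono (image_subset_iff.mpr hn) p).trans (hcδ p), hlt.le⟩)
  have h1 : ENNReal.ofReal α ≤ ∫⁻ p, ⨅ j, ENNReal.ofReal (c j p) ∂P := by
    rw [lintegral_iInf (fun j => (c j).continuous.measurable.ennreal_ofReal)
      (fun i j hij p => ENNReal.ofReal_le_ofReal (hanti i j hij p))]
    · refine le_iInf fun j => ?_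
      rw [← ofReal_integral_eq_lintegral_ofReal ((c j).integrable P) (ae_of_all _ (hc0 j))]
      exact ENNReal.ofReal_le_ofReal (hPc j)
    · exact ((c 0).integrable P).lintegral_lt_top.ne
  have h2 : ∫⁻ p, ⨅ j, ENNReal.ofReal (c j p) ∂P ≤ ∫⁻ p, f p ∂P := by
    refine lintegral_mono fun p => (hc2 p).trans ?_
    rw [← hGf p]
    exact env_mono (by rw [← hθ]; exact image_subset_range _ _) p
  exact absurd (h1.trans (h2.trans (hS P hP))) (not_le.mpr hVα)

end

/-! ### The principle on an irreducible piece -/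

section

variable {μ ν : Measure ℝ} {P₀ : Measure (ℝ × ℝ)} {I : Set ℝ}

/-- Value of the transport problem. -/
def value (μ ν : Measure ℝ) (f : ℝ × ℝ → ℝ≥0∞) : ℝ≥0∞ :=
  ⨆ (P : Measure (ℝ × ℝ)) (_ : IsSupermartingaleCoupling P μ ν), ∫⁻ p, f p ∂P

lemma le_value {f : ℝ × ℝ → ℝ≥0∞} {P : Measure (ℝ × ℝ)} (hP : IsSupermartingaleCoupling P μ ν) :
    ∫⁻ p, f p ∂P ≤ value μ ν f :=
  le_iSup₂ (f := fun (P : Measure (ℝ × ℝ)) (_ : IsSupermartingaleCoupling P μ ν) => ∫⁻ p, f p ∂P)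
    P hP

/-- The monotonicity principle on an irreducible piece: complementary slackness for an optimal
dual triple `(φ, ψ, h)`. -/
theorem irr_principle [IsFiniteMeasure P₀] (H : Irr μ ν P₀ I) {f : ℝ × ℝ → ℝ≥0∞}
    (hf : Measurable f) (hV : value μ ν f ≠ ⊤) :
    ∃ Γ : Set (ℝ × ℝ), ∃ M : Set ℝ, MeasurableSet Γ ∧ MeasurableSet M ∧
      ∀ P : Measure (ℝ × ℝ), IsSupermartingaleCoupling P μ ν →
        (∫⁻ p, f p ∂P = value μ ν f ↔ (P Γᶜ = 0 ∧ MartingaleOn P M)) := by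
  obtain ⟨φ, ψ, h, A, B, F, hc⟩ := duality H hf hV fun P hP => le_value hP
  have hfμ := H.fμ
  have mg : Measurable fun p => ENNReal.ofReal (gain φ ψ h p) :=
    (measurable_gain F.mφ F.mψ F.mh).ennreal_ofReal
  have hdom : ∀ P : Measure (ℝ × ℝ), IsSupermartingaleCoupling P μ ν →
      ∀ᵐ p ∂P, f p ≤ ENNReal.ofReal (gain φ ψ h p) := by
    intro P hP
    filter_upwards [ae_fst hP F.μA, ae_snd hP F.νB] with p h1 h2
    exact F.dom p.1 h1 p.2 h2
  have hcost : cost P₀ φ ψ h = value μ ν f := by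
    refine le_antisymm hc (iSup₂_le fun P hP => ?_)
    have : IsFiniteMeasure P := isFinite_of_coupling hP
    rw [cost_indep H F H.cpl hP]
    exact (lintegral_mono_ae (hdom P hP)).trans le_self_add
  refine ⟨{p | p.1 ∈ A ∧ p.2 ∈ B ∧ f p = ENNReal.ofReal (gain φ ψ h p)}, {x | 0 < h x}, ?_,
    measurableSet_lt measurable_const F.mh, fun P hP => ?_⟩
  · exact (measurable_fst F.mA).inter ((measurable_snd F.mB).inter (measurableSet_eq_fun hf mg))
  have hPf : IsFiniteMeasure P := isFinite_of_coupling hP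
  have j1 := integrable_fst H.iμ hP
  have j2 := integrable_snd H.iν hP
  have hcP : cost P φ ψ h = value μ ν f := by rw [← hcost]; exact (cost_indep H F H.cpl hP).symm
  rw [martingaleOn_iff j1 j2 hP.2 (measurableSet_lt measurable_const F.mh)]
  have md : Measurable fun x => ENNReal.ofReal (h x) * ENNReal.ofReal (drift P x) :=
    F.mh.ennreal_ofReal.mul measurable_drift.ennreal_ofReal
  have hdr : (∫⁻ x, ENNReal.ofReal (h x) * ENNReal.ofReal (drift P x) ∂P.fst = 0) ↔
      ∀ᵐ x ∂P.fst, x ∈ {x | 0 < h x} → drift P x = 0 := by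
    rw [lintegral_eq_zero_iff md]
    have hd0 := drift_nonneg j1 j2 hP.2
    constructor
    · intro h0
      filter_upwards [h0, hd0] with x hx hx0 hxm
      simp only [Pi.zero_apply, mul_eq_zero, ENNReal.ofReal_eq_zero] at hx
      rcases hx with hx | hx
      · exact absurd hxm (not_lt.mpr hx)
      · exact le_antisymm hx hx0
    · intro h0
      filter_upwards [h0] with x hx
      rcases le_or_gt (h x) 0 with hx' | hx'
      · simp [ENNReal.ofReal_eq_zero.mpr hx']
      · simp [hx hx']
  have hΓ : P {p | p.1 ∈ A ∧ p.2 ∈ B ∧ f p = ENNReal.ofReal (gain φ ψ h p)}ᶜ = 0 ↔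
      ∀ᵐ p ∂P, f p = ENNReal.ofReal (gain φ ψ h p) := by
    rw [← mem_ae_iff]
    constructor
    · intro h0
      filter_upwards [h0] with p hp using hp.2.2
    · intro h0
      filter_upwards [ae_fst hP F.μA, ae_snd hP F.νB, h0] with p h1 h2 h3 using ⟨h1, h2, h3⟩
  rw [hΓ, ← hdr]
  have hle := lintegral_mono_ae (hdom P hP)
  unfold cost at hcP
  constructor
  · intro he
    rw [← hcP] at he
    have hb : ∫⁻ p, ENNReal.ofReal (gain φ ψ h p) ∂P ≠ ⊤ := fun ht => hV (by rw [← hcP, ht]; simp)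
    have hge : ∫⁻ p, ENNReal.ofReal (gain φ ψ h p) ∂P ≤ ∫⁻ p, f p ∂P := by
      rw [he]; exact le_self_add
    refine ⟨ae_eq_of_ae_le_of_lintegral_le (hdom P hP) (ne_top_of_le_ne_top hb hle)
      mg.aemeasurable hge, ?_⟩
    rw [le_antisymm hle hge] at he
    exact (ENNReal.add_right_inj hb).mp (he.symm.trans (add_zero _).symm)
  · rintro ⟨h1, h2⟩
    rw [← hcP, h2, add_zero]
    exact lintegral_congr_ae h1

end

/-! ### Barriers -/

section

/-- A supermartingale coupling of finite measures with finite first moments. -/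
structure Adm (μ ν : Measure ℝ) (P : Measure (ℝ × ℝ)) : Prop where
  fμ : IsFiniteMeasure μ
  fν : IsFiniteMeasure ν
  iμ : Integrable (fun x : ℝ => x) μ
  iν : Integrable (fun x : ℝ => x) ν
  cpl : IsSupermartingaleCoupling P μ ν

/-- The difference of the put functions; a supermartingale coupling can move mass across a level
`t` only where it is positive. -/
def gap (μ ν : Measure ℝ) (t : ℝ) : ℝ := ∫ s, max (t - s) 0 ∂ν - ∫ s, max (t - s) 0 ∂μ

/-- The open set of levels with positive `gap`. -/
def posGap (μ ν : Measure ℝ) : Set ℝ := {t | 0 < gap μ ν t}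

/-- The contribution of a transition `p.1 → p.2` across `t` to the gap. -/
def kern (t : ℝ) (p : ℝ × ℝ) : ℝ := if p.1 < t then max (p.2 - t) 0 else max (t - p.2) 0

lemma continuous_putFun (μ : Measure ℝ) [IsFiniteMeasure μ] (hμ : Integrable (fun x : ℝ => x) μ) :
    Continuous (fun t => ∫ s, max (t - s) 0 ∂μ) := by
  refine continuous_iff_continuousAt.2 fun t₀ => ?_
  refine continuousAt_of_dominated (bound := fun s => (|t₀| + 1) + |s|) ?_ ?_ ?_ ?_
  · exact Eventually.of_forall fun t => by
      exact (by fun_prop : Continuous fun s : ℝ => max (t - s) 0).aestronglyMeasurable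
  · filter_upwards [Metric.ball_mem_nhds t₀ one_pos] with t ht
    refine Eventually.of_forall fun s => ?_
    rw [Real.norm_eq_abs, abs_of_nonneg (le_max_right _ _)]
    rw [Metric.mem_ball, Real.dist_eq] at ht
    refine max_le ?_ (by positivity)
    have := abs_lt.1 ht
    linarith [le_abs_self t₀, neg_abs_le s]
  · exact (integrable_const _).add hμ.abs
  · exact Eventually.of_forall fun s => by fun_prop

lemma isOpen_posGap {μ ν : Measure ℝ} [IsFiniteMeasure μ] [IsFiniteMeasure ν]
    (hμ : Integrable (fun x : ℝ => x) μ) (hν : Integrable (fun x : ℝ => x) ν) :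
    IsOpen (posGap μ ν) :=
  isOpen_lt continuous_const ((continuous_putFun ν hν).sub (continuous_putFun μ hμ))

lemma kern_nonneg (t : ℝ) (p : ℝ × ℝ) : 0 ≤ kern t p := by
  unfold kern; split_ifs <;> exact le_max_right _ _

lemma measurable_kern (t : ℝ) : Measurable (kern t) := by
  unfold kern
  refine Measurable.ite (measurableSet_lt measurable_fst measurable_const) ?_ ?_ <;> fun_prop

namespace Adm
variable {μ ν : Measure ℝ} {P : Measure (ℝ × ℝ)}

lemma fin (H : Adm μ ν P) : IsFiniteMeasure P := by
  have := H.fμ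
  exact isFinite_of_coupling H.cpl

lemma h1 (H : Adm μ ν P) : Integrable (fun p : ℝ × ℝ => p.1) P := integrable_fst H.iμ H.cpl

lemma h2 (H : Adm μ ν P) : Integrable (fun p : ℝ × ℝ => p.2) P := integrable_snd H.iν H.cpl

lemma h12 (H : Adm μ ν P) : Integrable (fun p : ℝ × ℝ => p.1 - p.2) P := H.h1.sub H.h2

lemma integrable_kern (H : Adm μ ν P) (t : ℝ) : Integrable (kern t) P := by
  have := H.fin
  refine Integrable.mono' ((H.h2.abs).add (integrable_const |t|))
    (measurable_kern t).aestronglyMeasurable (Eventually.of_forall fun p => ?_)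
  rw [Real.norm_eq_abs, abs_of_nonneg (kern_nonneg t p)]
  simp only [Pi.add_apply]
  unfold kern
  split_ifs
  · exact max_le (by linarith [le_abs_self p.2, neg_abs_le t]) (by positivity)
  · exact max_le (by linarith [neg_abs_le p.2, le_abs_self t]) (by positivity)

/-- The gap at `t` is the mass transported across `t`, weighted by the overshoot, plus the mean lost
by the mass starting below `t`. -/
lemma gap_eq (H : Adm μ ν P) (t : ℝ) :
    gap μ ν t = ∫ p, kern t p ∂P + ∫ p in {p : ℝ × ℝ | p.1 < t}, (p.1 - p.2) ∂P := by
  have := H.fin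
  have hm : MeasurableSet {p : ℝ × ℝ | p.1 < t} := measurableSet_lt measurable_fst measurable_const
  have mk : Measurable fun s : ℝ => max (t - s) 0 := by fun_prop
  have i1 : Integrable (fun p : ℝ × ℝ => max (t - p.1) 0) P :=
    ((integrable_const t).sub H.h1).pos_part
  have i2 : Integrable (fun p : ℝ × ℝ => max (t - p.2) 0) P :=
    ((integrable_const t).sub H.h2).pos_part
  unfold gap
  rw [← integral_snd H.cpl mk, ← integral_fst H.cpl mk, ← integral_sub i2 i1,
    ← integral_indicator hm, ← integral_add (H.integrable_kern t) (H.h12.indicator hm)]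
  refine integral_congr_ae (Eventually.of_forall fun p => ?_)
  by_cases hp : p.1 < t
  · simp only [kern, hp, if_true, indicator, mem_setOf_eq]
    rw [max_eq_left (by linarith : (0:ℝ) ≤ t - p.1)]
    rcases le_total t p.2 with h | h
    · rw [max_eq_right (by linarith), max_eq_left (by linarith)]; ring
    · rw [max_eq_left (by linarith), max_eq_right (by linarith)]; ring
  · simp only [kern, hp, if_false, indicator, mem_setOf_eq]
    rw [max_eq_right (by linarith : t - p.1 ≤ (0:ℝ))]
    ring

lemma drop_nonneg (H : Adm μ ν P) {A : Set ℝ} (hA : MeasurableSet A) :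
    0 ≤ ∫ p in {p : ℝ × ℝ | p.1 ∈ A}, (p.1 - p.2) ∂P :=
  setIntegral_nonneg_of_super H.h1 H.h2 H.cpl.2 hA

lemma gap_zero (H : Adm μ ν P) {t : ℝ} (ht : t ∉ posGap μ ν) :
    (∀ᵐ p ∂P, kern t p = 0) ∧ ∫ p in {p : ℝ × ℝ | p.1 < t}, (p.1 - p.2) ∂P = 0 := by
  have h0 : gap μ ν t ≤ 0 := not_lt.1 ht
  rw [H.gap_eq t] at h0
  have hk : 0 ≤ ∫ p, kern t p ∂P := integral_nonneg (kern_nonneg t)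
  have hd := H.drop_nonneg (measurableSet_Iio (a := t))
  simp only [mem_Iio] at hd
  refine ⟨?_, by linarith⟩
  have : ∫ p, kern t p ∂P = 0 := by linarith
  rwa [integral_eq_zero_iff_of_nonneg (kern_nonneg t) (H.integrable_kern t)] at this

lemma barrier_aux (H : Adm μ ν P) {t : ℝ} (ht : t ∉ posGap μ ν) :
    ∀ᵐ p ∂P, (p.1 < t → p.2 ≤ t) ∧ (t ≤ p.1 → t ≤ p.2) := by
  filter_upwards [(H.gap_zero ht).1] with p hp
  unfold kern at hp
  constructor
  · intro h
    rw [if_pos h] at hp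
    have := le_max_left (p.2 - t) 0
    linarith
  · intro h
    rw [if_neg (not_lt.2 h)] at hp
    have := le_max_left (t - p.2) 0
    linarith

/-- Mass outside `posGap` does not move: the barriers force `p.1 ≤ p.2`, and the supermartingale
property forces equality. To have only countably many barriers, a dense subset of the complement of
`posGap` and the points of that complement which are isolated from the left are used. -/
lemma ae_diag (H : Adm μ ν P) : ∀ᵐ p ∂P, p.1 ∉ posGap μ ν → p.2 = p.1 := by
  have := H.fμ
  have := H.fν
  set s : Set ℝ := (posGap μ ν)ᶜ with hs
  have hsm : MeasurableSet s := (isOpen_posGap H.iμ H.iν).measurableSet.compl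
  obtain ⟨D, hDs, hDc, hD⟩ :=
    (TopologicalSpace.IsSeparable.of_separableSpace s).exists_countable_dense_subset
  have hL := countable_setOfPred_isolated_left_within (s := s)
  have e1 : ∀ᵐ p ∂P, ∀ t ∈ D, t ≤ p.1 → t ≤ p.2 :=
    (ae_ball_iff hDc).2 fun t ht => (H.barrier_aux (hDs ht)).mono fun p hp => hp.2
  have e2 : ∀ᵐ p ∂P, ∀ t ∈ {x ∈ s | 𝓝[s ∩ Iio x] x = ⊥}, t ≤ p.1 → t ≤ p.2 :=
    (ae_ball_iff hL).2 fun t ht => (H.barrier_aux ht.1).mono fun p hp => hp.2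
  have e3 : ∀ᵐ p ∂P, p.1 ∈ s → p.1 ≤ p.2 := by
    filter_upwards [e1, e2] with p h1 h2 hp
    by_cases hb : 𝓝[s ∩ Iio p.1] p.1 = ⊥
    · exact h2 p.1 ⟨hp, hb⟩ le_rfl
    · by_contra hlt
      push Not at hlt
      have : (𝓝[s ∩ Iio p.1] p.1).NeBot := ⟨hb⟩
      have hev : ∀ᶠ z in 𝓝[s ∩ Iio p.1] p.1, p.2 < z :=
        mem_nhdsWithin_of_mem_nhds (Ioi_mem_nhds hlt)
      obtain ⟨z, hz, hz2⟩ := (hev.and self_mem_nhdsWithin).exists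
      obtain ⟨d, hd, hdD⟩ := mem_closure_iff.1 (hD hz2.1) (Ioo p.2 p.1) isOpen_Ioo ⟨hz, hz2.2⟩
      exact absurd (h1 d hdD hd.2.le) (not_le.2 hd.1)
  have hS : MeasurableSet {p : ℝ × ℝ | p.1 ∈ s} := measurable_fst hsm
  have h0 : 0 ≤ᵐ[P.restrict {p : ℝ × ℝ | p.1 ∈ s}] fun p => p.2 - p.1 := by
    rw [EventuallyLE, ae_restrict_iff' hS]
    filter_upwards [e3] with p hp hps
    simpa using hp hps
  have hi : ∫ p in {p : ℝ × ℝ | p.1 ∈ s}, (p.2 - p.1) ∂P = 0 := by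
    refine le_antisymm ?_ (integral_nonneg_of_ae h0)
    have := H.drop_nonneg hsm
    rw [integral_sub H.h2.integrableOn H.h1.integrableOn]
    rw [integral_sub H.h1.integrableOn H.h2.integrableOn] at this
    linarith
  rw [setIntegral_eq_zero_iff_of_nonneg_ae h0 (H.h2.sub H.h1).integrableOn, EventuallyEq,
    ae_restrict_iff' hS] at hi
  filter_upwards [hi] with p hp hps
  have := hp hps
  simp only [Pi.zero_apply] at this
  linarith

lemma barrier (H : Adm μ ν P) {t : ℝ} (ht : t ∉ posGap μ ν) :
    ∀ᵐ p ∂P, (p.1 ≤ t → p.2 ≤ t) ∧ (t ≤ p.1 → t ≤ p.2) := by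
  filter_upwards [H.barrier_aux ht, H.ae_diag] with p hp hd
  refine ⟨fun h => ?_, hp.2⟩
  rcases h.lt_or_eq with h | h
  · exact hp.1 h
  · rw [hd (h ▸ ht), h]

end Adm

end

/-! ### Components of the set of positive gap -/

section

/-- `J` is a connected component of the open set `U`; maximality is expressed by saying that the
endpoints of `J` lie outside `U`. -/
structure Comp (U J : Set ℝ) : Prop where
  opn : IsOpen J
  oc : J.OrdConnected
  ne : J.Nonempty
  sub : J ⊆ U
  max : ∀ a ∈ closure J, a ∉ J → a ∉ U

/-- The family of connected components of `U`. -/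
def comps (U : Set ℝ) : Set (Set ℝ) := {J | ∃ x ∈ U, J = ordConnectedComponent U x}

lemma comp_of_mem {U J : Set ℝ} (hU : IsOpen U) (hJ : J ∈ comps U) : Comp U J := by
  obtain ⟨x, hx, rfl⟩ := hJ
  refine ⟨?_, inferInstance, ⟨x, self_mem_ordConnectedComponent.2 hx⟩,
    ordConnectedComponent_subset, ?_⟩
  · rw [isOpen_iff_mem_nhds]
    intro y hy
    rw [ordConnectedComponent_eq (mem_ordConnectedComponent.1 hy), ordConnectedComponent_mem_nhds]
    exact hU.mem_nhds (ordConnectedComponent_subset hy)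
  · intro a ha haJ haU
    have hn : ordConnectedComponent U a ∈ 𝓝 a := ordConnectedComponent_mem_nhds.2 (hU.mem_nhds haU)
    obtain ⟨z, hz1, hz2⟩ := mem_closure_iff_nhds.1 ha _ hn
    exact haJ (mem_ordConnectedComponent_trans hz2 (mem_ordConnectedComponent_comm.1 hz1))

lemma comps_disjoint (U : Set ℝ) : (comps U).PairwiseDisjoint id := by
  rintro _ ⟨x, hx, rfl⟩ _ ⟨y, hy, rfl⟩ hne
  refine disjoint_left.2 fun z hz1 hz2 => hne ?_
  rw [ordConnectedComponent_eq (mem_ordConnectedComponent.1 hz1),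
    ordConnectedComponent_eq (mem_ordConnectedComponent.1 hz2)]

lemma comps_countable {U : Set ℝ} (hU : IsOpen U) : (comps U).Countable :=
  (comps_disjoint U).countable_of_isOpen (fun _ hJ => (comp_of_mem hU hJ).opn)
    (fun _ hJ => (comp_of_mem hU hJ).ne)

lemma exists_comp {U : Set ℝ} {x : ℝ} (hx : x ∈ U) : ∃ J ∈ comps U, x ∈ J :=
  ⟨_, ⟨x, hx, rfl⟩, self_mem_ordConnectedComponent.2 hx⟩

namespace Comp
variable {U J : Set ℝ}

lemma inf_lt (C : Comp U J) (h : BddBelow J) : ∀ z ∈ J, sInf J < z := by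
  intro z hz
  obtain ⟨l, hl, hlJ⟩ := (mem_nhdsLE_iff_exists_Ioc_subset (a := z)).1
    (mem_nhdsWithin_of_mem_nhds (C.opn.mem_nhds hz))
  obtain ⟨w, hw⟩ := exists_between (show l < z from hl)
  exact (csInf_le h (hlJ ⟨hw.1, hw.2.le⟩)).trans_lt hw.2

lemma lt_sup (C : Comp U J) (h : BddAbove J) : ∀ z ∈ J, z < sSup J := by
  intro z hz
  obtain ⟨l, hl, hlJ⟩ := (mem_nhdsGE_iff_exists_Ico_subset (a := z)).1
    (mem_nhdsWithin_of_mem_nhds (C.opn.mem_nhds hz))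
  obtain ⟨w, hw⟩ := exists_between (show z < l from hl)
  exact hw.1.trans_le (le_csSup h (hlJ ⟨hw.1.le, hw.2⟩))

lemma inf_notMem (C : Comp U J) (h : BddBelow J) : sInf J ∉ U :=
  C.max _ (csInf_mem_closure C.ne h) fun hm => (C.inf_lt h _ hm).false

lemma sup_notMem (C : Comp U J) (h : BddAbove J) : sSup J ∉ U :=
  C.max _ (csSup_mem_closure C.ne h) fun hm => (C.lt_sup h _ hm).false

lemma below (C : Comp U J) {x s : ℝ} (hx : x ∉ J) (hs : s ∈ J) (hxs : x < s) :
    BddBelow J ∧ x ≤ sInf J := by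
  have hb : x ∈ lowerBounds J := by
    intro z hz
    by_contra hlt
    exact hx (C.oc.out hz hs ⟨(not_le.1 hlt).le, hxs.le⟩)
  exact ⟨⟨x, hb⟩, le_csInf C.ne hb⟩

lemma above (C : Comp U J) {x s : ℝ} (hx : x ∉ J) (hs : s ∈ J) (hxs : s < x) :
    BddAbove J ∧ sSup J ≤ x := by
  have hb : x ∈ upperBounds J := by
    intro z hz
    by_contra hlt
    exact hx (C.oc.out hs hz ⟨hxs.le, (not_le.1 hlt).le⟩)
  exact ⟨⟨x, hb⟩, csSup_le C.ne hb⟩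

lemma mem_closure (C : Comp U J) {y : ℝ} (h1 : BddBelow J → sInf J ≤ y)
    (h2 : BddAbove J → y ≤ sSup J) : y ∈ closure J := by
  by_cases hy : y ∈ J
  · exact subset_closure hy
  obtain ⟨s, hs⟩ := C.ne
  rcases lt_trichotomy y s with h | h | h
  · obtain ⟨hb, hle⟩ := C.below hy hs h
    rw [le_antisymm hle (h1 hb)]
    exact csInf_mem_closure C.ne hb
  · exact absurd (h ▸ hs) hy
  · obtain ⟨hb, hle⟩ := C.above hy hs h
    rw [le_antisymm (h2 hb) hle]
    exact csSup_mem_closure C.ne hb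

end Comp

/-- The part of `P` starting in `J`. -/
def part (P : Measure (ℝ × ℝ)) (J : Set ℝ) : Measure (ℝ × ℝ) := P.restrict {p | p.1 ∈ J}

lemma measurableSet_fst {J : Set ℝ} (hJ : MeasurableSet J) : MeasurableSet {p : ℝ × ℝ | p.1 ∈ J} :=
  measurable_fst hJ

lemma super_part {P : Measure (ℝ × ℝ)} (hP : SupermartingaleProperty P) {J : Set ℝ}
    (hJ : MeasurableSet J) : SupermartingaleProperty (part P J) := by
  intro A hA
  have hm : MeasurableSet (A ×ˢ (univ : Set ℝ)) := hA.prod MeasurableSet.univ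
  have e : A ×ˢ (univ : Set ℝ) ∩ {p | p.1 ∈ J} = (A ∩ J) ×ˢ (univ : Set ℝ) := by
    ext p; simp
  unfold part
  rw [Measure.restrict_restrict hm, e]
  exact hP _ (hA.inter hJ)

lemma map_fst_part {P : Measure (ℝ × ℝ)} {μ : Measure ℝ} (hP : P.map Prod.fst = μ) {J : Set ℝ}
    (hJ : MeasurableSet J) : (part P J).map Prod.fst = μ.restrict J := by
  rw [← hP, Measure.restrict_map measurable_fst hJ]; rfl

namespace Adm
variable {μ ν : Measure ℝ} {P : Measure (ℝ × ℝ)} {J : Set ℝ}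

lemma ae_comp (H : Adm μ ν P) (C : Comp (posGap μ ν) J) :
    ∀ᵐ p ∂P, (BddBelow J → (p.1 ≤ sInf J → p.2 ≤ sInf J) ∧ (sInf J ≤ p.1 → sInf J ≤ p.2)) ∧
      (BddAbove J → (p.1 ≤ sSup J → p.2 ≤ sSup J) ∧ (sSup J ≤ p.1 → sSup J ≤ p.2)) := by
  refine Eventually.and ?_ ?_
  · by_cases h : BddBelow J
    · filter_upwards [H.barrier (C.inf_notMem h)] with p hp _ using hp
    · exact Eventually.of_forall fun p hb => absurd hb h
  · by_cases h : BddAbove J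
    · filter_upwards [H.barrier (C.sup_notMem h)] with p hp _ using hp
    · exact Eventually.of_forall fun p hb => absurd hb h

/-- Mass starting in a component stays in its closure. -/
lemma ae_closure (H : Adm μ ν P) (C : Comp (posGap μ ν) J) :
    ∀ᵐ p ∂P, p.1 ∈ J → p.2 ∈ closure J := by
  filter_upwards [H.ae_comp C] with p hp hpJ
  exact C.mem_closure (fun hb => (hp.1 hb).2 (C.inf_lt hb _ hpJ).le)
    (fun hb => (hp.2 hb).1 (C.lt_sup hb _ hpJ).le)

/-- The distribution function of the second marginal of `part P J` does not depend on `P`. -/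
lemma part_Iic (H : Adm μ ν P) {P' : Measure (ℝ × ℝ)} (H' : Adm μ ν P')
    (C : Comp (posGap μ ν) J) (t : ℝ) :
    P {p | p.1 ∈ J ∧ p.2 ≤ t} = P' {p | p.1 ∈ J ∧ p.2 ≤ t} := by
  have hJ := C.opn.measurableSet
  by_cases hb : BddAbove J ∧ sSup J ≤ t
  · have key : ∀ Q, Adm μ ν Q → Q {p | p.1 ∈ J ∧ p.2 ≤ t} = μ J := by
      intro Q HQ
      rw [← HQ.cpl.1.1, Measure.map_apply measurable_fst hJ]
      refine measure_congr ?_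
      filter_upwards [HQ.ae_comp C] with p hp
      refine propext ⟨fun h => h.1, fun h => ⟨h, ?_⟩⟩
      exact ((hp.2 hb.1).1 (C.lt_sup hb.1 _ h).le).trans hb.2
    rw [key P H, key P' H']
  by_cases ha : BddBelow J ∧ t < sInf J
  · have key : ∀ Q, Adm μ ν Q → Q {p | p.1 ∈ J ∧ p.2 ≤ t} = 0 := by
      intro Q HQ
      rw [← measure_empty (μ := Q)]
      refine measure_congr ?_
      filter_upwards [HQ.ae_comp C] with p hp
      refine propext ⟨fun h => ?_, fun h => absurd h (notMem_empty p)⟩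
      have h1 : p.1 ∈ J := h.1
      have h2 : p.2 ≤ t := h.2
      exact absurd (((hp.1 ha.1).2 (C.inf_lt ha.1 _ h1).le).trans h2) (not_le.2 ha.2)
    rw [key P H, key P' H']
  push Not at hb ha
  obtain ⟨s, hs, hts⟩ : ∃ s ∈ J, t < s := by
    by_cases h : BddAbove J
    · exact exists_lt_of_lt_csSup C.ne (hb h)
    · exact not_bddAbove_iff.1 h t
  have key : ∀ Q, Adm μ ν Q → Q {p | p.1 ∈ J ∧ p.2 ≤ t} = ν (Iic t) - μ (Jᶜ ∩ Iic t) := by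
    intro Q HQ
    have := HQ.fin
    have e1 : μ (Jᶜ ∩ Iic t) = Q {p | p.1 ∉ J ∧ p.2 ≤ t} := by
      rw [← HQ.cpl.1.1, Measure.map_apply measurable_fst (hJ.compl.inter measurableSet_Iic)]
      refine measure_congr ?_
      filter_upwards [HQ.ae_comp C] with p hp
      refine propext (and_congr_right fun hpJ => ?_)
      have hpJ : p.1 ∉ J := hpJ
      change p.1 ≤ t ↔ p.2 ≤ t
      rcases lt_trichotomy p.1 s with h | h | h
      · obtain ⟨hbb, hle⟩ := C.below hpJ hs h
        exact iff_of_true (hle.trans (ha hbb)) (((hp.1 hbb).1 hle).trans (ha hbb))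
      · exact absurd (h ▸ hs) hpJ
      · obtain ⟨hbb, hle⟩ := C.above hpJ hs h
        exact iff_of_false (not_le.2 ((hb hbb).trans_le hle))
          (not_le.2 ((hb hbb).trans_le ((hp.2 hbb).2 hle)))
    have e2 : ν (Iic t) = Q {p | p.1 ∈ J ∧ p.2 ≤ t} + Q {p | p.1 ∉ J ∧ p.2 ≤ t} := by
      rw [← HQ.cpl.1.2, Measure.map_apply measurable_snd measurableSet_Iic,
        ← measure_inter_add_sdiff _ (measurableSet_fst hJ)]
      congr 2 <;> · ext p; simp [and_comm]
    rw [e1, e2, ENNReal.add_sub_cancel_right (measure_ne_top _ _)]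
  rw [key P H, key P' H']

lemma map_snd_part (H : Adm μ ν P) {P' : Measure (ℝ × ℝ)} (H' : Adm μ ν P')
    (C : Comp (posGap μ ν) J) : (part P J).map Prod.snd = (part P' J).map Prod.snd := by
  have := H.fin
  have : IsFiniteMeasure (part P J) := by unfold part; infer_instance
  refine Measure.ext_of_Iic _ _ fun t => ?_
  rw [Measure.map_apply measurable_snd measurableSet_Iic,
    Measure.map_apply measurable_snd measurableSet_Iic]
  unfold part
  rw [Measure.restrict_apply (measurable_snd measurableSet_Iic),
    Measure.restrict_apply (measurable_snd measurableSet_Iic)]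
  have e : Prod.snd ⁻¹' Iic t ∩ {p : ℝ × ℝ | p.1 ∈ J} = {p | p.1 ∈ J ∧ p.2 ≤ t} := by
    ext p; simp [and_comm]
  rw [e]
  exact H.part_Iic H' C t

lemma part_cpl (H : Adm μ ν P) {P' : Measure (ℝ × ℝ)} (H' : Adm μ ν P')
    (C : Comp (posGap μ ν) J) :
    Adm (μ.restrict J) ((part P J).map Prod.snd) (part P' J) where
  fμ := by have := H.fμ; infer_instance
  fν := by
    have := H.fin
    have : IsFiniteMeasure (part P J) := by unfold part; infer_instance
    infer_instance
  iμ := H.iμ.integrableOn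
  iν := by
    have h : Integrable (fun p : ℝ × ℝ => p.2) (part P J) := H.h2.integrableOn
    exact (integrable_map_measure measurable_id.aestronglyMeasurable
      measurable_snd.aemeasurable).2 h
  cpl := ⟨⟨map_fst_part H'.cpl.1.1 C.opn.measurableSet, (H'.map_snd_part H C)⟩,
    super_part H'.cpl.2 C.opn.measurableSet⟩

lemma split_drop (H : Adm μ ν P) (hJ : MeasurableSet J) (t : ℝ) :
    ∫ p in {p : ℝ × ℝ | p.1 < t}, (p.1 - p.2) ∂P =
      ∫ p in {p : ℝ × ℝ | p.1 ∈ Iio t ∩ J}, (p.1 - p.2) ∂P +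
      ∫ p in {p : ℝ × ℝ | p.1 ∈ Iio t \ J}, (p.1 - p.2) ∂P :=
  (integral_inter_add_sdiff (s := {p : ℝ × ℝ | p.1 < t}) (measurableSet_fst hJ)
    H.h12.integrableOn).symm

/-- On a component bounded above no mean is lost, since the gap vanishes at its upper endpoint. -/
lemma part_eqMean (H : Adm μ ν P) (C : Comp (posGap μ ν) J) (hb : BddAbove J) :
    EqMean (μ.restrict J) ((part P J).map Prod.snd) := by
  have hJ := C.opn.measurableSet
  have hA := H.part_cpl H C
  have e0 := (H.gap_zero (C.sup_notMem hb)).2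
  rw [H.split_drop hJ] at e0
  have h1 := H.drop_nonneg (measurableSet_Iio.inter hJ : MeasurableSet (Iio (sSup J) ∩ J))
  have h2 := H.drop_nonneg (measurableSet_Iio.diff hJ : MeasurableSet (Iio (sSup J) \ J))
  have e1 : Iio (sSup J) ∩ J = J := inter_eq_right.2 fun z hz => C.lt_sup hb z hz
  rw [e1] at h1 e0
  have e2 : ∫ p in {p : ℝ × ℝ | p.1 ∈ J}, (p.1 - p.2) ∂P = 0 := by linarith
  unfold EqMean
  rw [← integral_fst hA.cpl (F := fun x => x) measurable_id,
    ← integral_snd hA.cpl (F := fun x => x) measurable_id]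
  rw [integral_sub H.h1.integrableOn H.h2.integrableOn] at e2
  unfold part
  linarith

/-- Mass starting below `s` but outside the component of `s` loses no mean, since the gap vanishes at
the lower endpoint of the component. -/
lemma drop_out (H : Adm μ ν P) (C : Comp (posGap μ ν) J) {s : ℝ} (hs : s ∈ J) :
    ∫ p in {p : ℝ × ℝ | p.1 ∈ Iio s \ J}, (p.1 - p.2) ∂P = 0 := by
  have hJ := C.opn.measurableSet
  by_cases hb : BddBelow J
  · have e0 := (H.gap_zero (C.inf_notMem hb)).2
    rw [← e0, ← integral_indicator (measurableSet_fst (measurableSet_Iio.diff hJ)),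
      ← integral_indicator (measurableSet_lt measurable_fst measurable_const)]
    refine integral_congr_ae ?_
    filter_upwards [H.ae_diag] with p hp
    by_cases h : p.1 < sInf J
    · have : p.1 ∈ Iio s \ J :=
        ⟨h.trans (C.inf_lt hb s hs), fun hm => (h.trans (C.inf_lt hb _ hm)).false⟩
      rw [indicator_of_mem (show p ∈ {p : ℝ × ℝ | p.1 ∈ Iio s \ J} from this),
        indicator_of_mem (show p ∈ {p : ℝ × ℝ | p.1 < sInf J} from h)]
    · rw [indicator_of_notMem (show p ∉ {p : ℝ × ℝ | p.1 < sInf J} from h)]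
      by_cases hm : p.1 ∈ Iio s \ J
      · have hle := (C.below hm.2 hs hm.1).2
        have heq : p.1 = sInf J := le_antisymm hle (not_lt.1 h)
        rw [indicator_of_mem (show p ∈ {p : ℝ × ℝ | p.1 ∈ Iio s \ J} from hm),
          hp (heq ▸ C.inf_notMem hb), sub_self]
      · exact indicator_of_notMem (show p ∉ {p : ℝ × ℝ | p.1 ∈ Iio s \ J} from hm) _
  · have : {p : ℝ × ℝ | p.1 ∈ Iio s \ J} = ∅ := by
      ext p
      refine ⟨fun h => ?_, fun h => absurd h (notMem_empty p)⟩
      exact absurd (C.below h.2 hs h.1).1 hb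
    rw [this]; simp

/-- By `gap_eq`, crossings and loss of mean cannot all be absent at a level of positive gap, and mass
from outside the component contributes to none of them. -/
lemma part_cross (H : Adm μ ν P) (C : Comp (posGap μ ν) J) {s : ℝ} (hs : s ∈ J) :
    part P J {p | p.1 < s ∧ s < p.2} ≠ 0 ∨ part P J {p | p.2 < s ∧ s ≤ p.1} ≠ 0 ∨
      0 < ∫ p in {p : ℝ × ℝ | p.1 < s}, (p.1 - p.2) ∂(part P J) := by
  by_contra hcon
  push Not at hcon
  obtain ⟨h1, h2, h3⟩ := hcon
  have hJ := C.opn.measurableSet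
  have hpos : 0 < gap μ ν s := C.sub hs
  have a1 : ∀ᵐ p ∂P, p.1 ∈ J → ¬ (p.1 < s ∧ s < p.2) :=
    (ae_restrict_iff' (measurableSet_fst hJ)).1 (measure_eq_zero_iff_ae_notMem.1 h1)
  have a2 : ∀ᵐ p ∂P, p.1 ∈ J → ¬ (p.2 < s ∧ s ≤ p.1) :=
    (ae_restrict_iff' (measurableSet_fst hJ)).1 (measure_eq_zero_iff_ae_notMem.1 h2)
  have hk : ∀ᵐ p ∂P, kern s p = 0 := by
    filter_upwards [a1, a2, H.ae_comp C] with p p1 p2 p3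
    by_cases hpJ : p.1 ∈ J
    · have q1 := p1 hpJ
      have q2 := p2 hpJ
      unfold kern
      split_ifs with hlt
      · have : ¬ s < p.2 := fun h => q1 ⟨hlt, h⟩
        exact max_eq_right (by linarith)
      · have : ¬ p.2 < s := fun h => q2 ⟨h, not_lt.1 hlt⟩
        exact max_eq_right (by linarith)
    · unfold kern
      split_ifs with hlt
      · obtain ⟨hb, hle⟩ := C.below hpJ hs hlt
        have := (p3.1 hb).1 hle
        have := C.inf_lt hb s hs
        exact max_eq_right (by linarith)
      · have hlt' : s < p.1 := lt_of_le_of_ne (not_lt.1 hlt) fun h => hpJ (h ▸ hs)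
        obtain ⟨hb, hle⟩ := C.above hpJ hs hlt'
        have := (p3.2 hb).2 hle
        have := C.lt_sup hb s hs
        exact max_eq_right (by linarith)
  have e1 : ∫ p, kern s p ∂P = 0 := integral_eq_zero_of_ae hk
  have e2 : ∫ p in {p : ℝ × ℝ | p.1 < s}, (p.1 - p.2) ∂(part P J) =
      ∫ p in {p : ℝ × ℝ | p.1 ∈ Iio s ∩ J}, (p.1 - p.2) ∂P := by
    unfold part
    rw [Measure.restrict_restrict (measurableSet_lt measurable_fst measurable_const)]
    rfl
  rw [H.gap_eq s, e1, H.split_drop hJ, H.drop_out C hs, ← e2] at hpos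
  linarith

/-- The restriction of the problem to a component of `posGap` is irreducible. -/
lemma part_irr (H : Adm μ ν P) (C : Comp (posGap μ ν) J) :
    Irr (μ.restrict J) ((part P J).map Prod.snd) (part P J) J where
  fμ := (H.part_cpl H C).fμ
  fν := (H.part_cpl H C).fν
  iμ := (H.part_cpl H C).iμ
  iν := (H.part_cpl H C).iν
  cpl := (H.part_cpl H C).cpl
  opn := C.opn
  oc := C.oc
  ne := C.ne
  μI := ae_restrict_mem C.opn.measurableSet
  νI := by
    refine (ae_map_iff (p := fun y => y ∈ closure J) measurable_snd.aemeasurable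
      isClosed_closure.measurableSet).2 ?_
    exact (ae_restrict_iff' (measurableSet_fst C.opn.measurableSet)).2 (H.ae_closure C)
  cross := fun s hs => H.part_cross C hs
  up := by
    by_cases hb : BddAbove J
    · exact Or.inl (H.part_eqMean C hb)
    · refine Or.inr fun x hx z hz => ?_
      obtain ⟨s, hs, hzs⟩ := not_bddAbove_iff.1 hb z
      exact C.oc.out hx hs ⟨hz, hzs.le⟩

end Adm

end

/-! ### Gluing -/

section

lemma super_add {P Q : Measure (ℝ × ℝ)} (hP : SupermartingaleProperty P)
    (hQ : SupermartingaleProperty Q) (p1 : Integrable (fun p : ℝ × ℝ => p.1) P)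
    (p2 : Integrable (fun p : ℝ × ℝ => p.2) P) (q1 : Integrable (fun p : ℝ × ℝ => p.1) Q)
    (q2 : Integrable (fun p : ℝ × ℝ => p.2) Q) : SupermartingaleProperty (P + Q) := by
  intro A hA
  rw [Measure.restrict_add, integral_add_measure p2.integrableOn q2.integrableOn,
    integral_add_measure p1.integrableOn q1.integrableOn]
  exact add_le_add (hP A hA) (hQ A hA)

lemma part_add_part_compl (P : Measure (ℝ × ℝ)) {J : Set ℝ} (hJ : MeasurableSet J) :
    part P Jᶜ + part P J = P :=
  Measure.restrict_compl_add_restrict (measurableSet_fst hJ)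

lemma part_apply_null (P : Measure (ℝ × ℝ)) {J : Set ℝ} {S : Set (ℝ × ℝ)} (hS : MeasurableSet S) :
    part P J S = P ({p | p.1 ∈ J} ∩ S) := by
  unfold part
  rw [Measure.restrict_apply hS, inter_comm]

lemma martingaleOn_part {P : Measure (ℝ × ℝ)} {J M : Set ℝ} (hJ : MeasurableSet J) :
    MartingaleOn (part P J) M ↔ MartingaleOn P (J ∩ M) := by
  have e : ∀ A : Set ℝ, MeasurableSet A → (part P J).restrict (A ×ˢ (univ : Set ℝ)) =
      P.restrict ((A ∩ J) ×ˢ (univ : Set ℝ)) := by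
    intro A hA
    unfold part
    rw [Measure.restrict_restrict (hA.prod MeasurableSet.univ)]
    congr 1
    ext p; simp
  constructor
  · intro h A hA hAM
    have := h A hA (hAM.trans inter_subset_right)
    rwa [e A hA, inter_eq_left.2 (hAM.trans inter_subset_left)] at this
  · intro h A hA hAM
    rw [e A hA]
    exact h _ (hA.inter hJ) (fun x hx => ⟨hx.2, hAM hx.1⟩)

namespace Adm
variable {μ ν : Measure ℝ} {P P₀ : Measure (ℝ × ℝ)} {J : Set ℝ}

/-- Replacing the part of a supermartingale coupling which starts in `J` by another coupling with
the same marginals gives a supermartingale coupling. -/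
lemma glue (H₀ : Adm μ ν P₀) (H : Adm μ ν P) (C : Comp (posGap μ ν) J) {Q : Measure (ℝ × ℝ)}
    (hQ : IsSupermartingaleCoupling Q (μ.restrict J) ((part P₀ J).map Prod.snd)) :
    IsSupermartingaleCoupling (part P Jᶜ + Q) μ ν := by
  have hJ := C.opn.measurableSet
  have hA := H₀.part_cpl H C
  refine ⟨⟨?_, ?_⟩, super_add (super_part H.cpl.2 hJ.compl) hQ.2 H.h1.integrableOn
    H.h2.integrableOn (integrable_fst hA.iμ hQ) (integrable_snd hA.iν hQ)⟩
  · rw [Measure.map_add _ _ measurable_fst, map_fst_part H.cpl.1.1 hJ.compl, hQ.1.1,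
      Measure.restrict_compl_add_restrict hJ]
  · rw [Measure.map_add _ _ measurable_snd, hQ.1.2, H₀.map_snd_part H C,
      ← Measure.map_add _ _ measurable_snd, part_add_part_compl P hJ, H.cpl.1.2]

lemma value_part_le (H₀ : Adm μ ν P₀) (C : Comp (posGap μ ν) J) (f : ℝ × ℝ → ℝ≥0∞) :
    value (μ.restrict J) ((part P₀ J).map Prod.snd) f ≤ value μ ν f := by
  refine iSup₂_le fun Q hQ => ?_
  refine le_trans ?_ (le_value (H₀.glue H₀ C hQ))
  rw [lintegral_add_measure]
  exact le_add_self

lemma part_optimal (H₀ : Adm μ ν P₀) (H : Adm μ ν P) (C : Comp (posGap μ ν) J)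
    {f : ℝ × ℝ → ℝ≥0∞} (hV : value μ ν f ≠ ⊤) (hP : ∫⁻ p, f p ∂P = value μ ν f) :
    ∫⁻ p, f p ∂(part P J) = value (μ.restrict J) ((part P₀ J).map Prod.snd) f := by
  refine le_antisymm (le_value (H₀.part_cpl H C).cpl) (iSup₂_le fun Q hQ => ?_)
  have h := le_value (f := f) (H₀.glue H C hQ)
  have e : ∫⁻ p, f p ∂P = ∫⁻ p, f p ∂(part P Jᶜ) + ∫⁻ p, f p ∂(part P J) := by
    rw [← lintegral_add_measure, part_add_part_compl P C.opn.measurableSet]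
  rw [lintegral_add_measure, ← hP, e] at h
  rw [← hP, e] at hV
  exact (ENNReal.add_le_add_iff_left (fun h' => hV (by rw [h', top_add]))).1 h

/-- The mass outside `posGap` stays on the diagonal, so its contribution is the same for all
couplings; the rest is the sum over the components. -/
lemma lintegral_decomp (H : Adm μ ν P) {f : ℝ × ℝ → ℝ≥0∞} (hf : Measurable f) :
    ∫⁻ p, f p ∂P = ∫⁻ x in (posGap μ ν)ᶜ, f (x, x) ∂μ +
      ∑' J : comps (posGap μ ν), ∫⁻ p, f p ∂(part P J) := by
  have := H.fμ
  have := H.fν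
  have hU := isOpen_posGap H.iμ H.iν
  have hd : (comps (posGap μ ν)).PairwiseDisjoint (fun J => {p : ℝ × ℝ | p.1 ∈ J}) := by
    intro J hJ J' hJ' hne
    refine disjoint_left.2 fun p hp hp' => ?_
    exact disjoint_left.1 (comps_disjoint _ hJ hJ' hne) hp hp'
  have hU' : {p : ℝ × ℝ | p.1 ∈ posGap μ ν} =
      ⋃ J ∈ comps (posGap μ ν), {p : ℝ × ℝ | p.1 ∈ J} := by
    ext p
    simp only [mem_iUnion, exists_prop]
    exact ⟨fun h => exists_comp h, fun ⟨J, hJ, hp⟩ => (comp_of_mem hU hJ).sub hp⟩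
  rw [← lintegral_add_compl f (measurableSet_fst hU.measurableSet), add_comm]
  congr 1
  · have hm : Measurable fun x : ℝ => f (x, x) := by fun_prop
    have hmU := hU.measurableSet.compl
    rw [← lintegral_indicator hmU, ← lintegral_fst H.cpl (hm.indicator hmU),
      ← lintegral_indicator (measurableSet_fst hU.measurableSet).compl]
    refine lintegral_congr_ae ?_
    filter_upwards [H.ae_diag] with p hp
    by_cases h : p.1 ∈ posGap μ ν
    · rw [indicator_of_notMem (show p ∉ {p : ℝ × ℝ | p.1 ∈ posGap μ ν}ᶜ from fun h' => h' h),
        indicator_of_notMem (show p.1 ∉ (posGap μ ν)ᶜ from fun h' => h' h)]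
    · rw [indicator_of_mem (show p ∈ {p : ℝ × ℝ | p.1 ∈ posGap μ ν}ᶜ from h),
        indicator_of_mem (show p.1 ∈ (posGap μ ν)ᶜ from h)]
      conv_lhs => rw [← Prod.mk.eta (p := p), hp h]
  · rw [hU', lintegral_biUnion (comps_countable hU)
      (fun J hJ => measurableSet_fst (comp_of_mem hU hJ).opn.measurableSet) hd]
    rfl

/-- A coupling is optimal iff each of its parts is. -/
lemma optimal_iff (H₀ : Adm μ ν P₀) (H : Adm μ ν P) {f : ℝ × ℝ → ℝ≥0∞} (hf : Measurable f)
    (hV : value μ ν f ≠ ⊤) :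
    ∫⁻ p, f p ∂P = value μ ν f ↔ ∀ J ∈ comps (posGap μ ν),
      ∫⁻ p, f p ∂(part P J) = value (μ.restrict J) ((part P₀ J).map Prod.snd) f := by
  have := H.fμ
  have := H.fν
  have hU := isOpen_posGap H.iμ H.iν
  refine ⟨fun h J hJ => H₀.part_optimal H (comp_of_mem hU hJ) hV h, fun h => ?_⟩
  refine le_antisymm (le_value H.cpl) (iSup₂_le fun Q hQ => ?_)
  have HQ : Adm μ ν Q := ⟨H.fμ, H.fν, H.iμ, H.iν, hQ⟩
  rw [H.lintegral_decomp hf, HQ.lintegral_decomp hf]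
  refine add_le_add_right (ENNReal.tsum_le_tsum fun J => ?_) _
  rw [h J J.2]
  exact le_value (H₀.part_cpl HQ (comp_of_mem hU J.2)).cpl

lemma martingaleOn_biUnion (H : Adm μ ν P) {𝒥 : Set (Set ℝ)} (hc : 𝒥.Countable)
    {N : Set ℝ → Set ℝ} (hN : ∀ J ∈ 𝒥, MeasurableSet (N J)) :
    MartingaleOn P (⋃ J ∈ 𝒥, N J) ↔ ∀ J ∈ 𝒥, MartingaleOn P (N J) := by
  have := H.fin
  constructor
  · intro h J hJ A hA hAM
    exact h A hA (hAM.trans (subset_biUnion_of_mem hJ))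
  · intro h
    rw [martingaleOn_iff H.h1 H.h2 H.cpl.2 (MeasurableSet.biUnion hc hN)]
    have : ∀ᵐ x ∂P.fst, ∀ J ∈ 𝒥, x ∈ N J → drift P x = 0 :=
      (ae_ball_iff hc).2 fun J hJ => (martingaleOn_iff H.h1 H.h2 H.cpl.2 (hN J hJ)).1 (h J hJ)
    filter_upwards [this] with x hx hxM
    simp only [mem_iUnion, exists_prop] at hxM
    obtain ⟨J, hJ, hxJ⟩ := hxM
    exact hx J hJ hxJ

end Adm

/-- The monotonicity principle for a nonempty set of couplings, assembled from the components of
`posGap`. -/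
lemma principle {μ ν : Measure ℝ} {P₀ : Measure (ℝ × ℝ)} (H₀ : Adm μ ν P₀)
    {f : ℝ × ℝ → ℝ≥0∞} (hf : Measurable f) (hV : value μ ν f ≠ ⊤) :
    ∃ (Γ : Set (ℝ × ℝ)) (M : Set ℝ), MeasurableSet Γ ∧ MeasurableSet M ∧
      ∀ P, IsSupermartingaleCoupling P μ ν →
        (∫⁻ p, f p ∂P = value μ ν f ↔ (P Γᶜ = 0 ∧ MartingaleOn P M)) := by
  have := H₀.fμ
  have := H₀.fν
  have := H₀.fin
  have hU := isOpen_posGap H₀.iμ H₀.iν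
  have hc := comps_countable hU
  set U := posGap μ ν with hUdef
  have hex : ∀ J ∈ comps U, ∃ (Γ : Set (ℝ × ℝ)) (M : Set ℝ), MeasurableSet Γ ∧ MeasurableSet M ∧
      ∀ P, IsSupermartingaleCoupling P (μ.restrict J) ((part P₀ J).map Prod.snd) →
        (∫⁻ p, f p ∂P = value (μ.restrict J) ((part P₀ J).map Prod.snd) f ↔
          (P Γᶜ = 0 ∧ MartingaleOn P M)) := by
    intro J hJ
    have C := comp_of_mem hU hJ
    have : IsFiniteMeasure (part P₀ J) := by unfold part; infer_instance
    exact irr_principle (H₀.part_irr C) hf (ne_top_of_le_ne_top hV (H₀.value_part_le C f))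
  choose! Γ M hΓ hM hP using hex
  have mJ : ∀ J ∈ comps U, MeasurableSet J := fun J hJ => (comp_of_mem hU hJ).opn.measurableSet
  refine ⟨{p | p.1 ∈ Uᶜ} ∪ ⋃ J ∈ comps U, ({p | p.1 ∈ J} ∩ Γ J), ⋃ J ∈ comps U, (J ∩ M J),
    (measurableSet_fst hU.measurableSet.compl).union
      (MeasurableSet.biUnion hc fun J hJ => (measurableSet_fst (mJ J hJ)).inter (hΓ J hJ)),
    MeasurableSet.biUnion hc fun J hJ => (mJ J hJ).inter (hM J hJ), fun P hPc => ?_⟩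
  have H : Adm μ ν P := ⟨H₀.fμ, H₀.fν, H₀.iμ, H₀.iν, hPc⟩
  have hcompl : ({p : ℝ × ℝ | p.1 ∈ Uᶜ} ∪ ⋃ J ∈ comps U, ({p | p.1 ∈ J} ∩ Γ J))ᶜ =
      ⋃ J ∈ comps U, ({p | p.1 ∈ J} ∩ (Γ J)ᶜ) := by
    ext p
    simp only [mem_compl_iff, mem_union, mem_iUnion, exists_prop, mem_inter_iff]
    constructor
    · intro h
      push Not at h
      have hpU : p.1 ∈ U := not_not.1 h.1
      obtain ⟨J, hJ, hp⟩ := exists_comp hpU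
      exact ⟨J, hJ, hp, h.2 J hJ hp⟩
    · rintro ⟨J, hJ, hp, hn⟩ (h | ⟨J', hJ', hp', hn'⟩)
      · exact h ((comp_of_mem hU hJ).sub hp)
      · have : J = J' := by
          by_contra hne
          exact disjoint_left.1 (comps_disjoint _ hJ hJ' hne) hp hp'
        exact hn (this ▸ hn')
  rw [H₀.optimal_iff H hf hV, hcompl, measure_biUnion_null_iff hc,
    H.martingaleOn_biUnion hc (fun J hJ => (mJ J hJ).inter (hM J hJ)), ← forall₂_and]
  refine forall₂_congr fun J hJ => ?_
  rw [hP J hJ _ (H₀.part_cpl H (comp_of_mem hU hJ)).cpl, martingaleOn_part (mJ J hJ),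
    part_apply_null P (hΓ J hJ).compl]

end

end

end SMT

/-- Monotonicity Principle, Theorem 4.1(i). If the supermartingale
optimal transport value for a Borel `f : ℝ² → [0,∞]` is finite, there exist Borel sets
`Γ ⊆ ℝ²`, `M ⊆ ℝ` such that `P ∈ S(μ,ν)` is optimal iff `P` is concentrated on `Γ` and
`P|_{M×ℝ}` is a martingale. -/
theorem monotonicity_principle
    (μ ν : Measure ℝ) (hμp : IsProbabilityMeasure μ) (hνp : IsProbabilityMeasure ν)
    (hμ : FiniteFirstMoment μ) (hν : FiniteFirstMoment ν) (h : CDOrder μ ν)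
    (f : ℝ × ℝ → ℝ≥0∞) (hf : Measurable f)
    (hS : (⨆ (P : Measure (ℝ × ℝ)) (_ : IsSupermartingaleCoupling P μ ν),
        ∫⁻ p, f p ∂P) < ⊤) :
    ∃ Γ : Set (ℝ × ℝ), ∃ M : Set ℝ, MeasurableSet Γ ∧ MeasurableSet M ∧
      ∀ P : Measure (ℝ × ℝ), IsSupermartingaleCoupling P μ ν →
        ((∫⁻ p, f p ∂P =
            ⨆ (Q : Measure (ℝ × ℝ)) (_ : IsSupermartingaleCoupling Q μ ν),
              ∫⁻ p, f p ∂Q) ↔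
          (P Γᶜ = 0 ∧ MartingaleOn P M)) := by
  by_cases hne : ∃ P₀, IsSupermartingaleCoupling P₀ μ ν
  · obtain ⟨P₀, hP₀⟩ := hne
    exact SMT.principle ⟨hμ.1, hν.1, hμ.2, hν.2, hP₀⟩ hf hS.ne
  · exact ⟨univ, univ, MeasurableSet.univ, MeasurableSet.univ, fun P hP => absurd ⟨P, hP⟩ hne⟩
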